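/- The nine W(E8)-invariant holomorphic Jacobi forms A_1, A_2, A_3, A_4, A_5, B_2, B_3, B_4, B_6, viewed as functions on ℍ × ℂ^8, are algebraically independent over the ring ℂ[E4, E6] generated by the Eisenstein series E4 and E6. -/

import Mathlib

noncomputable section

open Complex Finset

namespace E8Jacobi

/-- π as a complex number. -/
def πC : ℂ := Real.pi

/-- The E8 lattice as a subset of ℝ^8. -/
def E8Lattice : Set (Fin 8 → ℝ) :=
  {x | ((∀ i, ∃ n : ℤ, x i = n) ∨ (∀ i, ∃ n : ℤ, x i = n + 1/2)) ∧ ∃ m : ℤ, ∑ i, x i = 2 * m}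

/-- Complexification of a real vector. -/
def cv (x : Fin 8 → ℝ) : Fin 8 → ℂ := fun i => (x i : ℂ)

/-- The dot product on ℝ^8. -/
def dotR (x y : Fin 8 → ℝ) : ℝ := ∑ i, x i * y i

/-- The dot product on ℂ^8. -/
def dotC (z w : Fin 8 → ℂ) : ℂ := ∑ i, z i * w i

/-- The Weyl group W(E8): orthogonal matrices preserving the E8 lattice. -/
def WeylE8 : Set (Matrix (Fin 8) (Fin 8) ℝ) :=
  {M | (∀ x y, dotR (M.mulVec x) (M.mulVec y) = dotR x y) ∧
       (∀ x ∈ E8Lattice, M.mulVec x ∈ E8Lattice) ∧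
       (∀ x ∈ E8Lattice, ∃ y ∈ E8Lattice, M.mulVec y = x)}

/-- The complexified (ℂ-linear) action of a real matrix on ℂ^8. -/
def actC (M : Matrix (Fin 8) (Fin 8) ℝ) (z : Fin 8 → ℂ) : Fin 8 → ℂ :=
  fun i => ∑ j, (M i j : ℂ) * z j

/-- A W(E8)-invariant weak Jacobi form of weight `k` and index `m`. -/
structure IsWeakJacobiFormE8 (k : ℤ) (m : ℕ) (φ : ℂ → (Fin 8 → ℂ) → ℂ) : Prop where
  holo : DifferentiableOn ℂ (fun p : ℂ × (Fin 8 → ℂ) => φ p.1 p.2) {p | 0 < p.1.im}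
  weyl_inv : ∀ M ∈ WeylE8, ∀ τ : ℂ, 0 < τ.im → ∀ z, φ τ (actC M z) = φ τ z
  quasi_periodic : ∀ α ∈ E8Lattice, ∀ β ∈ E8Lattice, ∀ τ : ℂ, 0 < τ.im → ∀ z,
    φ τ (fun i => z i + τ * (α i : ℂ) + (β i : ℂ)) =
      Complex.exp (-(m : ℂ) * πC * I * (τ * dotC (cv α) (cv α) + 2 * dotC z (cv α))) * φ τ z
  modular : ∀ a b c d : ℤ, a * d - b * c = 1 → ∀ τ : ℂ, 0 < τ.im → ∀ z,
    φ (((a : ℂ) * τ + (b : ℂ)) / ((c : ℂ) * τ + (d : ℂ))) (fun i => z i / ((c : ℂ) * τ + (d : ℂ))) =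
      ((c : ℂ) * τ + (d : ℂ)) ^ k *
        Complex.exp ((m : ℂ) * πC * I * (c : ℂ) / ((c : ℂ) * τ + (d : ℂ)) * dotC z z) * φ τ z
  fourier : ∃ co : ℕ → E8Lattice → ℂ, ∀ τ : ℂ, 0 < τ.im → ∀ z,
    φ τ z = ∑' (n : ℕ) (w : E8Lattice), co n w *
      Complex.exp (2 * πC * I * dotC (cv w.1) z) * Complex.exp (2 * πC * I * τ) ^ n

/-- Membership in the ring J^{E8}_{*,*} of W(E8)-invariant weak Jacobi forms:
a finite sum of weak Jacobi forms of various weights and indices. -/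
def MemJE8 (φ : ℂ → (Fin 8 → ℂ) → ℂ) : Prop :=
  ∃ (n : ℕ) (k : Fin n → ℤ) (m : Fin n → ℕ) (ψ : Fin n → ℂ → (Fin 8 → ℂ) → ℂ),
    (∀ i, IsWeakJacobiFormE8 (k i) (m i) (ψ i)) ∧
    ∀ τ : ℂ, 0 < τ.im → ∀ z, φ τ z = ∑ i, ψ i τ z

/-- The nome q = e^{2πiτ}. -/
def qExp (τ : ℂ) : ℂ := Complex.exp (2 * πC * I * τ)

/-- The Eisenstein series E4. -/
def E4 (τ : ℂ) : ℂ :=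
  1 + 240 * ∑' n : ℕ+, (n : ℂ) ^ 3 * qExp τ ^ (n : ℕ) / (1 - qExp τ ^ (n : ℕ))

/-- The Eisenstein series E6. -/
def E6 (τ : ℂ) : ℂ :=
  1 - 504 * ∑' n : ℕ+, (n : ℂ) ^ 5 * qExp τ ^ (n : ℕ) / (1 - qExp τ ^ (n : ℕ))

/-- The modular discriminant Δ. -/
def Dl (τ : ℂ) : ℂ := (E4 τ ^ 3 - E6 τ ^ 2) / 1728

/-- The Dedekind eta function. -/
def etaF (τ : ℂ) : ℂ := Complex.exp (2 * πC * I * τ / 24) * ∏' n : ℕ, (1 - qExp τ ^ (n + 1))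

/-- The theta function of the E8 lattice. -/
def Theta (τ : ℂ) (z : Fin 8 → ℂ) : ℂ :=
  ∑' w : E8Lattice, Complex.exp (πC * I * τ * dotC (cv w.1) (cv w.1) + 2 * πC * I * dotC z (cv w.1))

/-- The Jacobi theta function θ1. -/
def th1 (z τ : ℂ) : ℂ :=
  I * ∑' n : ℤ, (-1 : ℂ) ^ n * Complex.exp (2 * πC * I * z * ((n : ℂ) - 1/2)) *
    Complex.exp (πC * I * τ * ((n : ℂ) - 1/2) ^ 2)

/-- The Jacobi theta function θ2. -/
def th2 (z τ : ℂ) : ℂ :=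
  ∑' n : ℤ, Complex.exp (2 * πC * I * z * ((n : ℂ) - 1/2)) *
    Complex.exp (πC * I * τ * ((n : ℂ) - 1/2) ^ 2)

/-- The Jacobi theta function θ3. -/
def th3 (z τ : ℂ) : ℂ :=
  ∑' n : ℤ, Complex.exp (2 * πC * I * z * (n : ℂ)) * Complex.exp (πC * I * τ * (n : ℂ) ^ 2)

/-- The Jacobi theta function θ4. -/
def th4 (z τ : ℂ) : ℂ :=
  ∑' n : ℤ, (-1 : ℂ) ^ n * Complex.exp (2 * πC * I * z * (n : ℂ)) *
    Complex.exp (πC * I * τ * (n : ℂ) ^ 2)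

/-- A1 = Θ(τ,z). -/
def A1 (τ : ℂ) (z : Fin 8 → ℂ) : ℂ := Theta τ z

/-- A_m for m = 2, 3, 5. -/
def AM (m : ℕ) (τ : ℂ) (z : Fin 8 → ℂ) : ℂ :=
  ((m : ℂ) ^ 3 / ((m : ℂ) ^ 3 + 1)) *
    (Theta ((m : ℂ) * τ) (fun i => (m : ℂ) * z i) +
      ((m : ℂ) ^ 4)⁻¹ * ∑ k ∈ Finset.range m, Theta ((τ + (k : ℂ)) / (m : ℂ)) z)

def A2 : ℂ → (Fin 8 → ℂ) → ℂ := AM 2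
def A3 : ℂ → (Fin 8 → ℂ) → ℂ := AM 3
def A5 : ℂ → (Fin 8 → ℂ) → ℂ := AM 5

/-- A4 = Θ(τ,2z). -/
def A4 (τ : ℂ) (z : Fin 8 → ℂ) : ℂ := Theta τ (fun i => 2 * z i)

def ee1 (τ : ℂ) : ℂ := (th3 0 τ ^ 4 + th4 0 τ ^ 4) / 12
def ee2 (τ : ℂ) : ℂ := (th2 0 τ ^ 4 - th4 0 τ ^ 4) / 12
def ee3 (τ : ℂ) : ℂ := (-th2 0 τ ^ 4 - th3 0 τ ^ 4) / 12
def h0 (τ : ℂ) : ℂ := th3 0 (2*τ) * th3 0 (6*τ) + th2 0 (2*τ) * th2 0 (6*τ)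

def B2 (τ : ℂ) (z : Fin 8 → ℂ) : ℂ :=
  (32/5) * (ee1 τ * Theta (2*τ) (fun i => 2 * z i)
    + (1/2^4) * ee3 τ * Theta (τ/2) z + (1/2^4) * ee2 τ * Theta ((τ+1)/2) z)

def B3 (τ : ℂ) (z : Fin 8 → ℂ) : ℂ :=
  (81/80) * (h0 τ ^ 2 * Theta (3*τ) (fun i => 3 * z i)
    - (1/3^5) * ∑ k ∈ Finset.range 3, h0 ((τ + (k:ℂ))/3) ^ 2 * Theta ((τ + (k:ℂ))/3) z)

def B4 (τ : ℂ) (z : Fin 8 → ℂ) : ℂ :=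
  (16/15) * (th4 0 (2*τ) ^ 4 * Theta (4*τ) (fun i => 4 * z i)
    - (1/2^4) * th4 0 (2*τ) ^ 4 * Theta (τ + 1/2) (fun i => 2 * z i)
    - (1/(2^2 * 4^4)) * ∑ k ∈ Finset.range 4, th2 0 ((τ + (k:ℂ))/2) ^ 4 * Theta ((τ + (k:ℂ))/4) z)

def B6 (τ : ℂ) (z : Fin 8 → ℂ) : ℂ :=
  (9/10) * (h0 τ ^ 2 * Theta (6*τ) (fun i => 6 * z i)
    + (1/2^4) * ∑ k ∈ Finset.range 2, h0 (τ + (k:ℂ)) ^ 2 * Theta ((3*τ + 3*(k:ℂ))/2) (fun i => 3 * z i)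
    - (1/(3 * 3^4)) * ∑ k ∈ Finset.range 3, h0 ((τ + (k:ℂ))/3) ^ 2 * Theta ((2*τ + 2*(k:ℂ))/3) (fun i => 2 * z i)
    - (1/(3 * 6^4)) * ∑ k ∈ Finset.range 6, h0 ((τ + (k:ℂ))/3) ^ 2 * Theta ((τ + (k:ℂ))/6) z)

/-- The nine basic W(E8)-invariant holomorphic Jacobi forms A1,…,A5,B2,…,B6. -/
def nineForms : Fin 9 → ℂ → (Fin 8 → ℂ) → ℂ := ![A1, A2, A3, A4, A5, B2, B3, B4, B6]

/- The basic meromorphic Jacobi forms a_i, b_j (Appendix A of the paper). -/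

def a0f (τ : ℂ) (_z : Fin 8 → ℂ) : ℂ := E4 τ / 12

def a2f (τ : ℂ) (z : Fin 8 → ℂ) : ℂ :=
  6 / (E4 τ * Dl τ) * (-(E4 τ) * A2 τ z + A1 τ z ^ 2)

def a3f (τ : ℂ) (z : Fin 8 → ℂ) : ℂ :=
  1 / (9 * E4 τ ^ 2 * Dl τ ^ 2) *
    (-7 * E4 τ ^ 2 * E6 τ * A3 τ z - 20 * E4 τ ^ 3 * B3 τ z
      - 9 * E4 τ * E6 τ * A1 τ z * A2 τ z + 30 * E4 τ ^ 2 * A1 τ z * B2 τ z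
      + 6 * E6 τ * A1 τ z ^ 3)

def a4f (τ : ℂ) (z : Fin 8 → ℂ) : ℂ :=
  1 / (288 * E4 τ ^ 3 * Dl τ ^ 3) *
    (576 * E4 τ ^ 3 * Dl τ * A4 τ z + 32256 * E4 τ ^ 2 * Dl τ * A1 τ z * A3 τ z
      - 9 * E4 τ ^ 5 * A2 τ z ^ 2 - 30 * E4 τ ^ 3 * E6 τ * A2 τ z * B2 τ z
      - 25 * E4 τ ^ 4 * B2 τ z ^ 2
      + (60 * E4 τ ^ 4 - 12 * E4 τ * E6 τ ^ 2) * A1 τ z ^ 2 * A2 τ z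
      + 80 * E4 τ ^ 2 * E6 τ * A1 τ z ^ 2 * B2 τ z
      + (-70 * E4 τ ^ 3 + 6 * E6 τ ^ 2) * A1 τ z ^ 4)

def b0f (τ : ℂ) (_z : Fin 8 → ℂ) : ℂ := E6 τ / 216

def b1f (τ : ℂ) (z : Fin 8 → ℂ) : ℂ := -4 / E4 τ * A1 τ z

def b2f (τ : ℂ) (z : Fin 8 → ℂ) : ℂ :=
  5 / (6 * E4 τ ^ 2 * Dl τ) * (E4 τ ^ 2 * B2 τ z - E6 τ * A1 τ z ^ 2)

def b3f (τ : ℂ) (z : Fin 8 → ℂ) : ℂ :=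
  1 / (108 * E4 τ ^ 3 * Dl τ ^ 2) *
    (-7 * E4 τ ^ 5 * A3 τ z - 20 * E4 τ ^ 3 * E6 τ * B3 τ z
      - 9 * E4 τ ^ 4 * A1 τ z * A2 τ z + 30 * E4 τ ^ 2 * E6 τ * A1 τ z * B2 τ z
      + (16 * E4 τ ^ 3 - 10 * E6 τ ^ 2) * A1 τ z ^ 3)

def b4f (τ : ℂ) (z : Fin 8 → ℂ) : ℂ :=
  1 / (1728 * E4 τ ^ 4 * Dl τ ^ 3) *
    (-8640 * E4 τ ^ 4 * Dl τ * B4 τ z + 138240 * E4 τ ^ 3 * Dl τ * A1 τ z * B3 τ z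
      + 9 * E4 τ ^ 5 * E6 τ * A2 τ z ^ 2 + 30 * E4 τ ^ 6 * A2 τ z * B2 τ z
      + 25 * E4 τ ^ 4 * E6 τ * B2 τ z ^ 2
      - 48 * E4 τ ^ 4 * E6 τ * A1 τ z ^ 2 * A2 τ z
      + (-140 * E4 τ ^ 5 + 60 * E4 τ ^ 2 * E6 τ ^ 2) * A1 τ z ^ 2 * B2 τ z
      + (74 * E4 τ ^ 3 * E6 τ - 10 * E6 τ ^ 3) * A1 τ z ^ 4)

def b5f (τ : ℂ) (z : Fin 8 → ℂ) : ℂ :=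
  1 / (72 * E4 τ ^ 5 * Dl τ ^ 3) *
    (-36288 * E4 τ ^ 4 * Dl τ * A5 τ z - 294 * E4 τ ^ 6 * A2 τ z * A3 τ z
      - 770 * E4 τ ^ 4 * E6 τ * B2 τ z * A3 τ z - 840 * E4 τ ^ 4 * E6 τ * A2 τ z * B3 τ z
      - 2200 * E4 τ ^ 5 * B2 τ z * B3 τ z + 168 * E4 τ ^ 5 * A1 τ z ^ 2 * A3 τ z
      + 480 * E4 τ ^ 3 * E6 τ * A1 τ z ^ 2 * B3 τ z - 621 * E4 τ ^ 5 * A1 τ z * A2 τ z ^ 2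
      + 3525 * E4 τ ^ 4 * A1 τ z * B2 τ z ^ 2 + 1224 * E4 τ ^ 4 * A1 τ z ^ 3 * A2 τ z
      - 240 * E4 τ ^ 2 * E6 τ * A1 τ z ^ 3 * B2 τ z
      + (-456 * E4 τ ^ 3 + 24 * E6 τ ^ 2) * A1 τ z ^ 5)

def b6f (τ : ℂ) (z : Fin 8 → ℂ) : ℂ :=
  1 / (4478976 * E4 τ ^ 6 * Dl τ ^ 5) *
    (-19906560 * E4 τ ^ 6 * Dl τ ^ 2 * B6 τ z
      - 188116992 * E4 τ ^ 4 * E6 τ * Dl τ ^ 2 * A1 τ z * A5 τ z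
      - 5184 * E4 τ ^ 7 * E6 τ * Dl τ * A2 τ z * A4 τ z
      - 8640 * E4 τ ^ 8 * Dl τ * B2 τ z * A4 τ z
      - 103680 * E4 τ ^ 8 * Dl τ * A2 τ z * B4 τ z
      - 172800 * E4 τ ^ 6 * E6 τ * Dl τ * B2 τ z * B4 τ z
      + 12672 * E4 τ ^ 6 * E6 τ * Dl τ * A1 τ z ^ 2 * A4 τ z
      + 17280 * (5 * E4 τ ^ 7 + 9 * E4 τ ^ 4 * E6 τ ^ 2) * Dl τ * A1 τ z ^ 2 * B4 τ z
      + 112896 * E4 τ ^ 7 * E6 τ * Dl τ * A3 τ z ^ 2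
      + 645120 * E4 τ ^ 8 * Dl τ * A3 τ z * B3 τ z
      + 921600 * E4 τ ^ 6 * E6 τ * Dl τ * B3 τ z ^ 2
      - 1717632 * E4 τ ^ 6 * E6 τ * Dl τ * A1 τ z * A2 τ z * A3 τ z
      - 362880 * (4 * E4 τ ^ 7 + 11 * E4 τ ^ 4 * E6 τ ^ 2) * Dl τ * A1 τ z * B2 τ z * A3 τ z
      + 483840 * (4 * E4 τ ^ 7 - 9 * E4 τ ^ 4 * E6 τ ^ 2) * Dl τ * A1 τ z * A2 τ z * B3 τ z
      - 11404800 * E4 τ ^ 5 * E6 τ * Dl τ * A1 τ z * B2 τ z * B3 τ z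
      + 1161216 * E4 τ ^ 5 * E6 τ * Dl τ * A1 τ z ^ 3 * A3 τ z
      - 92160 * (37 * E4 τ ^ 6 - 9 * E4 τ ^ 3 * E6 τ ^ 2) * Dl τ * A1 τ z ^ 3 * B3 τ z
      + (135 * E4 τ ^ 9 * E6 τ + 54 * E4 τ ^ 6 * E6 τ ^ 3) * A2 τ z ^ 3
      + (405 * E4 τ ^ 10 + 540 * E4 τ ^ 7 * E6 τ ^ 2) * A2 τ z ^ 2 * B2 τ z
      + 1575 * E4 τ ^ 8 * E6 τ * A2 τ z * B2 τ z ^ 2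
      + (375 * E4 τ ^ 9 + 500 * E4 τ ^ 6 * E6 τ ^ 2) * B2 τ z ^ 3
      + (-3159 * E4 τ ^ 8 * E6 τ + 1701 * E4 τ ^ 5 * E6 τ ^ 3) * A1 τ z ^ 2 * A2 τ z ^ 2
      + (-3060 * E4 τ ^ 9 - 1800 * E4 τ ^ 6 * E6 τ ^ 2) * A1 τ z ^ 2 * A2 τ z * B2 τ z
      + (6975 * E4 τ ^ 7 * E6 τ - 11025 * E4 τ ^ 4 * E6 τ ^ 3) * A1 τ z ^ 2 * B2 τ z ^ 2
      + (6768 * E4 τ ^ 7 * E6 τ - 3024 * E4 τ ^ 4 * E6 τ ^ 3) * A1 τ z ^ 4 * A2 τ z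
      + (4260 * E4 τ ^ 8 + 1800 * E4 τ ^ 5 * E6 τ ^ 2 + 180 * E4 τ ^ 2 * E6 τ ^ 4) * A1 τ z ^ 4 * B2 τ z
      + (-3692 * E4 τ ^ 6 * E6 τ + 504 * E4 τ ^ 3 * E6 τ ^ 3 - 12 * E6 τ ^ 5) * A1 τ z ^ 6)

/-- The Seiberg–Witten coefficients a_0, …, a_4 (a_1 = 0). -/
def aSW : ℕ → ℂ → (Fin 8 → ℂ) → ℂ
  | 0 => a0f
  | 2 => a2f
  | 3 => a3f
  | 4 => a4f
  | _ => fun _ _ => 0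

/-- The Seiberg–Witten coefficients b_0, …, b_6. -/
def bSW : ℕ → ℂ → (Fin 8 → ℂ) → ℂ
  | 0 => b0f
  | 1 => b1f
  | 2 => b2f
  | 3 => b3f
  | 4 => b4f
  | 5 => b5f
  | 6 => b6f
  | _ => fun _ _ => 0

/-- The translation parameter −b₁/(6b₀). -/
def uShift (τ : ℂ) (z : Fin 8 → ℂ) : ℂ := -(bSW 1 τ z) / (6 * bSW 0 τ z)

/-- The coefficients c_i. -/
def cSW (i : ℕ) (τ : ℂ) (z : Fin 8 → ℂ) : ℂ :=
  ∑ j ∈ Finset.range (i+1), aSW j τ z * (Nat.choose (4-j) (4-i) : ℂ) * uShift τ z ^ (i-j)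

/-- The coefficients d_j. -/
def dSW (j : ℕ) (τ : ℂ) (z : Fin 8 → ℂ) : ℂ :=
  ∑ l ∈ Finset.range (j+1), bSW l τ z * (Nat.choose (6-l) (6-j) : ℂ) * uShift τ z ^ (j-l)

/-- Points of the upper half-plane avoiding the zeros of E4, E6 and Δ
(where all the meromorphic Jacobi forms above are defined). -/
def GoodTau (τ : ℂ) : Prop := 0 < τ.im ∧ E4 τ ≠ 0 ∧ E6 τ ≠ 0 ∧ Dl τ ≠ 0

/-- The eleven generators a_0, a_2, a_3, a_4, b_0, …, b_6 of R. -/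
def abGens : Fin 11 → ℂ → (Fin 8 → ℂ) → ℂ :=
  ![aSW 0, aSW 2, aSW 3, aSW 4, bSW 0, bSW 1, bSW 2, bSW 3, bSW 4, bSW 5, bSW 6]

/-- The eleven generators c_0, …, c_4, d_0, d_2, …, d_6 of R̃. -/
def cdGens : Fin 11 → ℂ → (Fin 8 → ℂ) → ℂ :=
  ![cSW 0, cSW 1, cSW 2, cSW 3, cSW 4, dSW 0, dSW 2, dSW 3, dSW 4, dSW 5, dSW 6]

/-- Membership in the polynomial ring R = ℂ[a_0,a_2,a_3,a_4,b_0,…,b_6]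
(as meromorphic functions on ℍ × ℂ^8). -/
def MemR (φ : ℂ → (Fin 8 → ℂ) → ℂ) : Prop :=
  ∃ P : MvPolynomial (Fin 11) ℂ, ∀ τ : ℂ, GoodTau τ → ∀ z,
    φ τ z = MvPolynomial.eval (fun i => abGens i τ z) P

/-- Membership in the polynomial ring R̃ = ℂ[c_0,…,c_4,d_0,d_2,…,d_6]
(as meromorphic functions on ℍ × ℂ^8). -/
def MemRt (φ : ℂ → (Fin 8 → ℂ) → ℂ) : Prop :=
  ∃ P : MvPolynomial (Fin 11) ℂ, ∀ τ : ℂ, GoodTau τ → ∀ z,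
    φ τ z = MvPolynomial.eval (fun i => cdGens i τ z) P

/- Invariant theory of binary forms. -/

/-- `BinTrans n T α α'` says that `α'` is the coefficient family of the degree-`n`
binary form with coefficients `α` transformed by `T ∈ SL2(ℂ)`. -/
def BinTrans (n : ℕ) (T : Matrix (Fin 2) (Fin 2) ℂ) (α α' : ℕ → ℂ) : Prop :=
  ∀ u v : ℂ,
    ∑ j ∈ Finset.range (n+1), α' j * u ^ (n - j) * v ^ j
      = ∑ i ∈ Finset.range (n+1), α i * (T 0 0 * u + T 0 1 * v) ^ (n - i) *
          (T 1 0 * u + T 1 1 * v) ^ i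

/-- Variables for polynomials in the coefficients of a binary quartic and sextic. -/
abbrev SV := Fin 5 ⊕ Fin 7

/-- Evaluation of a polynomial in the coefficients of the quartic and sextic. -/
def evalSV (Φ : MvPolynomial SV ℂ) (α β : ℕ → ℂ) : ℂ :=
  MvPolynomial.eval (Sum.elim (fun i : Fin 5 => α i.1) (fun j : Fin 7 => β j.1)) Φ

/-- Membership in the ring of joint semiinvariants ℂ[V4 ⊕ V6]^{U2(ℂ)}. -/
def IsSemiinvRingElem (Φ : MvPolynomial SV ℂ) : Prop :=
  ∀ κ : ℂ, ∀ α α' β β' : ℕ → ℂ,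
    BinTrans 4 !![1, κ; 0, 1] α α' → BinTrans 6 !![1, κ; 0, 1] β β' →
      evalSV Φ α' β' = evalSV Φ α β

/-- Membership in the ring of joint invariants ℂ[V4 ⊕ V6]^{SL2(ℂ)}. -/
def IsInvRingElem (Φ : MvPolynomial SV ℂ) : Prop :=
  ∀ T : Matrix (Fin 2) (Fin 2) ℂ, T.det = 1 → ∀ α α' β β' : ℕ → ℂ,
    BinTrans 4 T α α' → BinTrans 6 T β β' → evalSV Φ α' β' = evalSV Φ α β

/-- Variables for joint covariants: coefficients of the two forms together with (u,v). -/
abbrev CVV := (Fin 5 ⊕ Fin 7) ⊕ Fin 2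

/-- Evaluation of a polynomial in the coefficients and (u,v). -/
def evalCov (Ψ : MvPolynomial CVV ℂ) (α β : ℕ → ℂ) (u v : ℂ) : ℂ :=
  MvPolynomial.eval
    (Sum.elim (Sum.elim (fun i : Fin 5 => α i.1) (fun j : Fin 7 => β j.1))
      (fun p : Fin 2 => if p = 0 then u else v)) Ψ

/-- Membership in the ring of joint covariants ℂ[V4 ⊕ V6 ⊕ ℂ²]^{SL2(ℂ)}. -/
def IsCovRingElem (Ψ : MvPolynomial CVV ℂ) : Prop :=
  ∀ T : Matrix (Fin 2) (Fin 2) ℂ, T.det = 1 → ∀ α α' β β' : ℕ → ℂ,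
    BinTrans 4 T α α' → BinTrans 6 T β β' → ∀ u v : ℂ,
      evalCov Ψ α' β' u v = evalCov Ψ α β (T 0 0 * u + T 0 1 * v) (T 1 0 * u + T 1 1 * v)

/-- â_i in ℂ[α, β, α₀⁻¹]. -/
def ahat (α : ℕ → ℂ) (i : ℕ) : ℂ :=
  ∑ j ∈ Finset.range (i+1), α j * (Nat.choose (4-j) (4-i) : ℂ) * (-(α 1)/(4 * α 0)) ^ (i-j)

/-- b̂_i in ℂ[α, β, α₀⁻¹]. -/
def bhat (α β : ℕ → ℂ) (i : ℕ) : ℂ :=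
  ∑ j ∈ Finset.range (i+1), β j * (Nat.choose (6-j) (6-i) : ℂ) * (-(α 1)/(4 * α 0)) ^ (i-j)

/-- ĉ_i in ℂ[α, β, β₀⁻¹]. -/
def chat (α β : ℕ → ℂ) (i : ℕ) : ℂ :=
  ∑ j ∈ Finset.range (i+1), α j * (Nat.choose (4-j) (4-i) : ℂ) * (-(β 1)/(6 * β 0)) ^ (i-j)

/-- d̂_i in ℂ[α, β, β₀⁻¹]. -/
def dhat (β : ℕ → ℂ) (i : ℕ) : ℂ :=
  ∑ j ∈ Finset.range (i+1), β j * (Nat.choose (6-j) (6-i) : ℂ) * (-(β 1)/(6 * β 0)) ^ (i-j)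

/-- The images of the eleven generators of R under ψ. -/
def hatGens (α β : ℕ → ℂ) : Fin 11 → ℂ :=
  ![ahat α 0, ahat α 2, ahat α 3, ahat α 4, bhat α β 0, bhat α β 1, bhat α β 2,
    bhat α β 3, bhat α β 4, bhat α β 5, bhat α β 6]

/-- The images of the eleven generators of R̃ under ψ̃. -/
def cdhatGens (α β : ℕ → ℂ) : Fin 11 → ℂ :=
  ![chat α β 0, chat α β 1, chat α β 2, chat α β 3, chat α β 4, dhat β 0, dhat β 2,
    dhat β 3, dhat β 4, dhat β 5, dhat β 6]

/-- Weights picking out the a-variables among the eleven generators. -/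
def wA : Fin 11 → ℕ := ![1, 1, 1, 1, 0, 0, 0, 0, 0, 0, 0]

/-- Weights picking out the b-variables among the eleven generators. -/
def wB : Fin 11 → ℕ := ![0, 0, 0, 0, 1, 1, 1, 1, 1, 1, 1]

/-- Weights picking out the α-variables. -/
def wSVα : SV → ℕ := Sum.elim (fun _ => 1) (fun _ => 0)

/-- Weights picking out the β-variables. -/
def wSVβ : SV → ℕ := Sum.elim (fun _ => 0) (fun _ => 1)

/-- A joint semiinvariant of the quartic and sextic, of degrees (da, db) and order ω. -/
def IsSemiinvOf (Φ : MvPolynomial SV ℂ) (da db : ℕ) (ω : ℤ) : Prop :=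
  MvPolynomial.IsWeightedHomogeneous wSVα Φ da ∧
  MvPolynomial.IsWeightedHomogeneous wSVβ Φ db ∧
  IsSemiinvRingElem Φ ∧
  ∀ l : ℂ, l ≠ 0 → ∀ α α' β β' : ℕ → ℂ,
    BinTrans 4 !![l, 0; 0, l⁻¹] α α' → BinTrans 6 !![l, 0; 0, l⁻¹] β β' →
      evalSV Φ α' β' = l ^ ω * evalSV Φ α β

/-- Substitution α_i ↦ a_i (with a_1 = 0), β_j ↦ b_j into a polynomial in (α, β). -/
def subAB (Φ : MvPolynomial SV ℂ) : ℂ → (Fin 8 → ℂ) → ℂ :=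
  fun τ z => MvPolynomial.eval
    (Sum.elim (fun i : Fin 5 => aSW i.1 τ z) (fun j : Fin 7 => bSW j.1 τ z)) Φ

/-- The graph of the map ψ_J : a Jacobi form φ = Q(a_i, b_j) is sent to the
polynomial Φ = Q(â_i, b̂_j). -/
def PsiJRel (φ : ℂ → (Fin 8 → ℂ) → ℂ) (Φ : MvPolynomial SV ℂ) : Prop :=
  ∃ Q : MvPolynomial (Fin 11) ℂ,
    (∀ τ : ℂ, GoodTau τ → ∀ z, φ τ z = MvPolynomial.eval (fun i => abGens i τ z) Q) ∧
    (∀ α β : ℕ → ℂ, α 0 ≠ 0 → evalSV Φ α β = MvPolynomial.eval (hatGens α β) Q)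

open scoped Topology
open Filter Asymptotics

/-! ### Gaussian sums over slices of the lattice `ℤ⁵` -/

lemma summable_prod_apply {f : ℤ → ℝ} (hf : Summable f) (h0 : ∀ n, 0 ≤ f n) (n : ℕ) :
    Summable fun a : Fin n → ℤ => ∏ i, f (a i) := by
  induction n with
  | zero => exact Summable.of_finite
  | succ n ih =>
    rw [← (Fin.consEquiv fun _ => ℤ).summable_iff]
    have h := hf.mul_of_nonneg ih h0 (fun a => prod_nonneg fun i _ => h0 _)
    refine h.congr fun b => ?_
    simp [Fin.prod_univ_succ, Fin.consEquiv]

/-- Integer vectors of length five with prescribed coordinate sum. -/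
abbrev Slice (c : ℤ) : Type := {a : Fin 5 → ℤ // ∑ i, a i = c}

/-- The quadratic exponent of a vector in a slice. -/
def sliceExp (c : ℤ) (a : Fin 5 → ℤ) : ℂ := ∑ i, (a i : ℂ) ^ 2 - (c : ℂ) ^ 2 / 5

/-- A single term of the theta series of a slice. -/
def sliceTerm (c : ℤ) (τ : ℂ) (p : Fin 5 → ℂ) (a : Fin 5 → ℤ) : ℂ :=
  Complex.exp (πC * I * τ * sliceExp c a + 2 * πC * I * ∑ i, (a i : ℂ) * p i)

/-- The theta series of a slice. -/
def sliceTheta (c : ℤ) (τ : ℂ) (p : Fin 5 → ℂ) : ℂ := ∑' a : Slice c, sliceTerm c τ p a.1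

/-- The majorant used for theta series. -/
def gaussBound (T R : ℝ) (n : ℤ) : ℝ := Real.exp (-Real.pi * (T * n ^ 2 - 2 * R * |(n : ℝ)|))

lemma summable_gaussBound {T : ℝ} (hT : 0 < T) (R : ℝ) (n : ℕ) :
    Summable fun a : Fin n → ℤ => ∏ i, gaussBound T R (a i) := by
  refine summable_prod_apply (f := gaussBound T R) ?_ (fun n => (Real.exp_pos _).le) n
  refine (summable_pow_mul_jacobiTheta₂_term_bound R hT 0).congr fun n => ?_
  rw [pow_zero, one_mul, Int.cast_abs, gaussBound]

lemma norm_sliceTerm (c : ℤ) (τ : ℂ) (p : Fin 5 → ℂ) (a : Fin 5 → ℤ) :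
    ‖sliceTerm c τ p a‖ = Real.exp (Real.pi * τ.im * (c : ℝ) ^ 2 / 5) *
      ∏ i, Real.exp (-Real.pi * (τ.im * (a i : ℝ) ^ 2 + 2 * (a i) * (p i).im)) := by
  rw [sliceTerm, Complex.norm_exp, ← Real.exp_sum, ← Real.exp_add]
  congr 1
  have h1 : sliceExp c a = ((∑ i, (a i : ℝ) ^ 2 - (c : ℝ) ^ 2 / 5 : ℝ) : ℂ) := by
    simp [sliceExp]
  rw [h1]
  have h2 : ∀ i, ((a i : ℂ) * p i).im = a i * (p i).im := fun i => by simp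
  simp only [πC, add_re, mul_re, mul_im, I_re, I_im, ofReal_re, ofReal_im, im_sum, h2, re_ofNat,
    im_ofNat]
  rw [← mul_sum, sum_add_distrib, ← mul_sum]
  simp only [mul_assoc, ← mul_sum]
  ring

lemma norm_sliceTerm_le {c : ℤ} {τ : ℂ} {p : Fin 5 → ℂ} {R : ℝ} (hp : ∀ i, ‖p i‖ ≤ R)
    (a : Fin 5 → ℤ) :
    ‖sliceTerm c τ p a‖ ≤
      Real.exp (Real.pi * τ.im * (c : ℝ) ^ 2 / 5) * ∏ i, gaussBound τ.im R (a i) := by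
  rw [norm_sliceTerm]
  gcongr with i
  refine Real.exp_le_exp.2 ?_
  have h1 : |(p i).im| ≤ R := (abs_im_le_norm _).trans (hp i)
  have h2 : -(|(a i : ℝ)| * R) ≤ (a i : ℝ) * (p i).im := by
    have := neg_abs_le ((a i : ℝ) * (p i).im)
    rw [abs_mul] at this
    nlinarith [mul_le_mul_of_nonneg_left h1 (abs_nonneg (a i : ℝ))]
  nlinarith [Real.pi_pos, mul_le_mul_of_nonneg_left h2 Real.pi_pos.le]

lemma summable_norm_sliceTerm {τ : ℂ} (hτ : 0 < τ.im) (c c' : ℤ) (p : Fin 5 → ℂ) :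
    Summable fun a : Slice c => ‖sliceTerm c' τ p a.1‖ := by
  have h := ((summable_gaussBound hτ ‖p‖ 5).mul_left
    (Real.exp (Real.pi * τ.im * (c' : ℝ) ^ 2 / 5))).subtype {a : Fin 5 → ℤ | ∑ i, a i = c}
  exact Summable.of_nonneg_of_le (fun _ => norm_nonneg _)
    (fun a => norm_sliceTerm_le (fun i => norm_le_pi_norm p i) a.1) h

lemma sum_abs_mul_gaussBound_le {T R : ℝ} (a : Fin 5 → ℤ) :
    (∑ i, |(a i : ℝ)|) * ∏ i, gaussBound T R (a i) ≤ ∏ i, gaussBound T (R + 1) (a i) := by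
  have h1 : ∀ n : ℤ, gaussBound T (R + 1) n =
      Real.exp (2 * Real.pi * |(n : ℝ)|) * gaussBound T R n := fun n => by
    rw [gaussBound, gaussBound, ← Real.exp_add]; congr 1; ring
  simp only [h1, prod_mul_distrib, ← Real.exp_sum, ← mul_sum]
  refine mul_le_mul_of_nonneg_right ?_ (prod_nonneg fun _ _ => (Real.exp_pos _).le)
  have := Real.add_one_le_exp (2 * Real.pi * ∑ i, |(a i : ℝ)|)
  have h0 : 0 ≤ ∑ i, |(a i : ℝ)| := sum_nonneg fun _ _ => abs_nonneg _
  nlinarith [Real.pi_gt_three]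

/-- The linear form with integer coefficients `a`. -/
def intForm (a : Fin 5 → ℤ) : (Fin 5 → ℂ) →L[ℂ] ℂ :=
  ∑ i, (a i : ℂ) • ContinuousLinearMap.proj (R := ℂ) (φ := fun _ : Fin 5 => ℂ) i

lemma intForm_apply (a : Fin 5 → ℤ) (h : Fin 5 → ℂ) : intForm a h = ∑ i, (a i : ℂ) * h i := by
  simp [intForm]

lemma norm_intForm_le (a : Fin 5 → ℤ) : ‖intForm a‖ ≤ ∑ i, |(a i : ℝ)| := by
  refine ContinuousLinearMap.opNorm_le_bound _ (sum_nonneg fun _ _ => abs_nonneg _) fun h => ?_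
  rw [intForm_apply, sum_mul]
  refine norm_sum_le_of_le _ fun i _ => ?_
  rw [norm_mul, norm_intCast]
  gcongr
  exact norm_le_pi_norm h i

lemma hasFDerivAt_sliceTerm (c : ℤ) (τ : ℂ) (a : Fin 5 → ℤ) (p : Fin 5 → ℂ) :
    HasFDerivAt (fun p => sliceTerm c τ p a)
      ((2 * πC * I * sliceTerm c τ p a) • intForm a) p := by
  have h1 : HasFDerivAt (fun p : Fin 5 → ℂ =>
      πC * I * τ * sliceExp c a + 2 * πC * I * intForm a p) ((2 * πC * I) • intForm a) p :=
    ((intForm a).hasFDerivAt.const_mul _).const_add _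
  have h2 := h1.cexp
  simp only [intForm_apply] at h2
  rw [smul_smul] at h2
  rw [mul_comm (2 * πC * I)]
  exact h2

lemma norm_deriv_sliceTerm_le {c : ℤ} {τ : ℂ} {p : Fin 5 → ℂ} {R : ℝ} (hp : ∀ i, ‖p i‖ ≤ R)
    (a : Fin 5 → ℤ) :
    ‖(2 * πC * I * sliceTerm c τ p a) • intForm a‖ ≤
      2 * Real.pi * Real.exp (Real.pi * τ.im * (c : ℝ) ^ 2 / 5) *
        ∏ i, gaussBound τ.im (R + 1) (a i) := by
  have hπ : ‖2 * πC * I‖ = 2 * Real.pi := by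
    simp [πC, abs_of_pos Real.pi_pos]
  rw [norm_smul, norm_mul, hπ]
  calc _ ≤ 2 * Real.pi * (Real.exp (Real.pi * τ.im * (c : ℝ) ^ 2 / 5) *
        ∏ i, gaussBound τ.im R (a i)) * ∑ i, |(a i : ℝ)| := by
        have := Real.pi_pos
        gcongr
        · exact mul_nonneg (by positivity)
            (mul_nonneg (by positivity) (prod_nonneg fun _ _ => (Real.exp_pos _).le))
        · exact norm_sliceTerm_le hp a
        · exact norm_intForm_le a
    _ = 2 * Real.pi * Real.exp (Real.pi * τ.im * (c : ℝ) ^ 2 / 5) *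
        ((∑ i, |(a i : ℝ)|) * ∏ i, gaussBound τ.im R (a i)) := by ring
    _ ≤ _ := by
        gcongr
        exact sum_abs_mul_gaussBound_le a

lemma hasStrictFDerivAt_sliceTheta {τ : ℂ} (hτ : 0 < τ.im) (c : ℤ) (p : Fin 5 → ℂ) :
    HasStrictFDerivAt (sliceTheta c τ)
      (∑' a : Slice c, (2 * πC * I * sliceTerm c τ p a.1) • intForm a.1) p := by
  set R : ℝ := ‖p‖ + 1
  set u : Slice c → ℝ := fun a => 2 * Real.pi * Real.exp (Real.pi * τ.im * (c : ℝ) ^ 2 / 5) *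
        ∏ i, gaussBound τ.im (R + 1) (a.1 i) with hu
  have hu_sum : Summable u :=
    ((summable_gaussBound hτ (R + 1) 5).mul_left _).subtype {a : Fin 5 → ℤ | ∑ i, a i = c}
  have hball : ∀ x ∈ Metric.ball (0 : Fin 5 → ℂ) R, ∀ i, ‖x i‖ ≤ R := fun x hx i =>
    (norm_le_pi_norm x i).trans (mem_ball_zero_iff.1 hx).le
  have hp : p ∈ Metric.ball (0 : Fin 5 → ℂ) R := by
    rw [mem_ball_zero_iff]; exact lt_add_one _
  have hd : ∀ x ∈ Metric.ball (0 : Fin 5 → ℂ) R, HasFDerivAt (sliceTheta c τ)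
      (∑' a : Slice c, (2 * πC * I * sliceTerm c τ x a.1) • intForm a.1) x := fun x hx =>
    hasFDerivAt_tsum_of_isPreconnected (f := fun (a : Slice c) x => sliceTerm c τ x a.1)
      hu_sum Metric.isOpen_ball
      (convex_ball _ _).isPreconnected (fun a x _ => hasFDerivAt_sliceTerm c τ a.1 x)
      (fun a x hx => norm_deriv_sliceTerm_le (hball x hx) a.1) hp
      (summable_norm_sliceTerm hτ c c p).of_norm hx
  have hc : ContinuousOn (fun x => ∑' a : Slice c, (2 * πC * I * sliceTerm c τ x a.1) • intForm a.1)
      (Metric.ball (0 : Fin 5 → ℂ) R) := by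
    refine continuousOn_tsum (fun a => ?_) hu_sum
      (fun a x hx => norm_deriv_sliceTerm_le (hball x hx) a.1)
    have h : Continuous fun x => sliceTerm c τ x a.1 :=
      continuous_iff_continuousAt.2 fun x => (hasFDerivAt_sliceTerm c τ a.1 x).continuousAt
    exact ((continuous_const.mul h).smul continuous_const).continuousOn
  have hnhds : Metric.ball (0 : Fin 5 → ℂ) R ∈ 𝓝 p := Metric.isOpen_ball.mem_nhds hp
  exact hasStrictFDerivAt_of_hasFDerivAt_of_continuousAt
    (eventually_of_mem hnhds hd) (hc.continuousAt hnhds)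

lemma summable_deriv_sliceTheta {τ : ℂ} (hτ : 0 < τ.im) (c : ℤ) (p : Fin 5 → ℂ) :
    Summable fun a : Slice c => (2 * πC * I * sliceTerm c τ p a.1) • intForm a.1 := by
  have h := ((summable_gaussBound hτ (‖p‖ + 1) 5).mul_left
    (2 * Real.pi * Real.exp (Real.pi * τ.im * (c : ℝ) ^ 2 / 5))).subtype
      {a : Fin 5 → ℤ | ∑ i, a i = c}
  exact Summable.of_norm_bounded h
    fun a => norm_deriv_sliceTerm_le (fun i => norm_le_pi_norm p i) a.1

/-! ### Transformation laws of the slice theta series -/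

/-- Translation by an integer vector, as a bijection between slices. -/
def sliceShift (v : Fin 5 → ℤ) {c c' : ℤ} (h : c + ∑ i, v i = c') : Slice c ≃ Slice c' where
  toFun a := ⟨fun i => a.1 i + v i, by rw [sum_add_distrib, a.2, h]⟩
  invFun a := ⟨fun i => a.1 i - v i, by rw [sum_sub_distrib, a.2, ← h]; ring⟩
  left_inv a := by ext i; simp
  right_inv a := by ext i; simp

lemma slice_sum (a : Fin 5 → ℤ) {c : ℤ} (h : ∑ i, a i = c) :
    (a 0 : ℂ) + a 1 + a 2 + a 3 + a 4 = c := by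
  rw [← h]; simp [Fin.sum_univ_five]

lemma sliceTheta_add_five (c : ℤ) (τ : ℂ) {p : Fin 5 → ℂ} (hp : ∑ i, p i = 0) :
    sliceTheta (c + 5) τ p = sliceTheta c τ p := by
  rw [sliceTheta, sliceTheta, ← (sliceShift (fun _ => 1) (c := c) (c' := c + 5) (by simp)).tsum_eq]
  refine tsum_congr fun a => ?_
  have h := slice_sum a.1 a.2
  rw [Fin.sum_univ_five] at hp
  simp only [sliceTerm, sliceExp, sliceShift, Equiv.coe_fn_mk, Fin.sum_univ_five]
  congr 1
  push_cast
  linear_combination (2 * πC * I * τ) * h + 2 * πC * I * hp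

lemma sliceTheta_add_mul_five (c n : ℤ) (τ : ℂ) {p : Fin 5 → ℂ} (hp : ∑ i, p i = 0) :
    sliceTheta (c + 5 * n) τ p = sliceTheta c τ p := by
  induction n using Int.induction_on with
  | zero => simp
  | succ n ih => rw [← ih, ← sliceTheta_add_five (c + 5 * n) τ hp]; congr 1; ring
  | pred n ih => rw [← ih, ← sliceTheta_add_five _ τ hp]; congr 1; ring

lemma sliceTheta_emod (c : ℤ) (τ : ℂ) {p : Fin 5 → ℂ} (hp : ∑ i, p i = 0) :
    sliceTheta (c % 5) τ p = sliceTheta c τ p := by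
  rw [← sliceTheta_add_mul_five (c % 5) (c / 5) τ hp, Int.emod_add_mul_ediv]

/-- The direction along which the theta series is translated. -/
def glueVec : Fin 5 → ℂ := ![-1/5, -1/5, -1/5, -1/5, 4/5]

lemma sliceTheta_translate (c M : ℤ) (τ : ℂ) (p : Fin 5 → ℂ) :
    sliceTheta c τ (fun i => p i + M * τ * glueVec i) =
      Complex.exp (-(πC * I * τ * (4 / 5) * M ^ 2) - 2 * πC * I * M * p 4) *
        sliceTheta (c + M) τ p := by
  rw [sliceTheta, sliceTheta, ← (sliceShift ![0, 0, 0, 0, M] (c := c) (c' := c + M)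
    (by simp [Fin.sum_univ_five])).tsum_eq, ← tsum_mul_left]
  refine tsum_congr fun a => ?_
  have h := slice_sum a.1 a.2
  simp only [sliceTerm, sliceExp, sliceShift, Equiv.coe_fn_mk, Fin.sum_univ_five, glueVec]
  rw [← Complex.exp_add]
  congr 1
  simp [-one_div]
  linear_combination (- 2 / 5 * πC * I * τ * M) * h

lemma sliceTheta_integral_translate (c s : ℤ) (τ : ℂ) (p : Fin 5 → ℂ) :
    sliceTheta c τ (fun i => p i - s * glueVec i) =
      Complex.exp (2 * πC * I * (s * c / 5)) * sliceTheta c τ p := by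
  rw [sliceTheta, sliceTheta, ← tsum_mul_left]
  refine tsum_congr fun a => ?_
  have h := slice_sum a.1 a.2
  simp only [sliceTerm, sliceExp, Fin.sum_univ_five, glueVec]
  rw [← Complex.exp_add, Complex.exp_eq_exp_iff_exists_int]
  refine ⟨-(s * a.1 4), ?_⟩
  simp [-one_div, πC]
  linear_combination (2 / 5 * Real.pi * I * s) * h

/-! ### The special point -/

/-- A point whose exponentials are the fifth roots of unity. -/
def rootPt : Fin 5 → ℂ := ![0, 1/5, 2/5, 3/5, -6/5]

/-- The cyclic rotation of coordinates on a slice. -/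
def sliceRot (c : ℤ) : Slice c ≃ Slice c where
  toFun a := ⟨fun i => a.1 (i + 1), (Equiv.sum_comp (Equiv.addRight (1 : Fin 5)) a.1).trans a.2⟩
  invFun a := ⟨fun i => a.1 (i - 1), (Equiv.sum_comp (Equiv.subRight (1 : Fin 5)) a.1).trans a.2⟩
  left_inv a := by ext i; simp
  right_inv a := by ext i; simp

lemma sliceTerm_rot (c : ℤ) (τ : ℂ) (ρ : ℕ) (a : Slice c) :
    sliceTerm c τ (fun i => ρ * rootPt i) a.1 = Complex.exp (2 * πC * I * (ρ * c / 5)) *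
      sliceTerm c τ (fun i => ρ * rootPt i) (sliceRot c a).1 := by
  have h := slice_sum a.1 a.2
  simp only [sliceTerm, sliceExp, sliceRot, Equiv.coe_fn_mk, rootPt]
  have h5 : ∑ i, (a.1 (i + 1) : ℂ) ^ 2 = ∑ i, (a.1 i : ℂ) ^ 2 :=
    Equiv.sum_comp (Equiv.addRight (1 : Fin 5)) fun i => (a.1 i : ℂ) ^ 2
  rw [h5, ← Complex.exp_add, Complex.exp_eq_exp_iff_exists_int]
  refine ⟨ρ * (a.1 0 - 2 * a.1 4), ?_⟩
  have e1 : (1 : Fin 5) + 1 = 2 := rfl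
  have e2 : (2 : Fin 5) + 1 = 3 := rfl
  have e3 : (3 : Fin 5) + 1 = 4 := rfl
  have e4 : (4 : Fin 5) + 1 = 0 := rfl
  simp [-one_div, πC, Fin.sum_univ_five, e1, e2, e3, e4]
  linear_combination (2 / 5 * Real.pi * I * ρ) * h

lemma exp_rot_ne_one {n : ℤ} (hn : ¬ (5 : ℤ) ∣ n) :
    Complex.exp (2 * πC * I * (n / 5)) ≠ 1 := by
  intro h
  obtain ⟨k, hk⟩ := Complex.exp_eq_one_iff.1 h
  have h2 : (2 * Real.pi * I : ℂ) ≠ 0 := Complex.two_pi_I_ne_zero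
  have : (n : ℂ) = 5 * k := by
    apply mul_left_cancel₀ h2
    rw [πC] at hk
    linear_combination 5 * hk
  exact hn ⟨k, by exact_mod_cast this⟩

lemma sliceTheta_rootPt_eq_zero {c : ℤ} {ρ : ℕ} (h : ¬ (5 : ℤ) ∣ ρ * c) (τ : ℂ) :
    sliceTheta c τ (fun i => ρ * rootPt i) = 0 := by
  have h1 : sliceTheta c τ (fun i => ρ * rootPt i) = Complex.exp (2 * πC * I * (ρ * c / 5)) *
      sliceTheta c τ (fun i => ρ * rootPt i) := by
    conv_rhs => rw [sliceTheta, ← (sliceRot c).tsum_eq, ← tsum_mul_left]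
    exact tsum_congr fun a => sliceTerm_rot c τ ρ a
  have h2 := exp_rot_ne_one h
  push_cast at h2
  by_contra h0
  exact h2 (mul_right_cancel₀ h0 (by rw [one_mul]; exact h1.symm))

/-- The first partial derivative of a slice theta series at the special point. -/
def sliceDeriv (c : ℤ) (τ : ℂ) (ρ : ℕ) : ℂ :=
  ∑' a : Slice c, sliceTerm c τ (fun i => ρ * rootPt i) a.1 * a.1 0

lemma tsum_sliceTerm_mul_coord (c : ℤ) (τ : ℂ) (ρ : ℕ) (j : Fin 5) :
    ∑' a : Slice c, sliceTerm c τ (fun i => ρ * rootPt i) a.1 * a.1 j =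
      Complex.exp (2 * πC * I * (ρ * c / 5)) ^ (j : ℕ) * sliceDeriv c τ ρ := by
  have step : ∀ j : Fin 5, ∑' a : Slice c, sliceTerm c τ (fun i => ρ * rootPt i) a.1 * a.1 (j + 1) =
      Complex.exp (2 * πC * I * (ρ * c / 5)) *
        ∑' a : Slice c, sliceTerm c τ (fun i => ρ * rootPt i) a.1 * a.1 j := fun j => by
    conv_rhs => rw [← (sliceRot c).tsum_eq, ← tsum_mul_left]
    refine tsum_congr fun a => ?_
    rw [sliceTerm_rot, ← mul_assoc]
    rfl
  have s0 := step 0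
  have s1 := step 1
  have s2 := step 2
  have s3 := step 3
  have e1 : (1 : Fin 5) + 1 = 2 := rfl
  have e2 : (2 : Fin 5) + 1 = 3 := rfl
  have e3 : (3 : Fin 5) + 1 = 4 := rfl
  rw [zero_add] at s0
  rw [e1, s0] at s1
  rw [e2, s1] at s2
  rw [e3, s2] at s3
  fin_cases j
  · simp [sliceDeriv]
  · simpa [sliceDeriv] using s0
  · simp only [Fin.reduceFinMk]; rw [s1, sliceDeriv]; ring
  · simp only [Fin.reduceFinMk]; rw [s2, sliceDeriv]; ring
  · simp only [Fin.reduceFinMk]; rw [s3, sliceDeriv]; ring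

lemma summable_sliceTerm_mul_coord {τ : ℂ} (hτ : 0 < τ.im) (c : ℤ) (p : Fin 5 → ℂ) (j : Fin 5) :
    Summable fun a : Slice c => sliceTerm c τ p a.1 * a.1 j := by
  have h := ((summable_deriv_sliceTheta hτ c p).map
    (ContinuousLinearMap.apply ℂ ℂ (Pi.single j (1 : ℂ))) (by fun_prop)).mul_left (2 * πC * I)⁻¹
  refine h.congr fun a => ?_
  have h2 : (2 * πC * I : ℂ) ≠ 0 := Complex.two_pi_I_ne_zero
  simp only [Function.comp_apply, ContinuousLinearMap.apply_apply, smul_apply, intForm_apply,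
    Pi.single_apply, mul_ite, mul_one, mul_zero, sum_ite_eq', mem_univ, if_true, smul_eq_mul]
  rw [← mul_assoc, ← mul_assoc, inv_mul_cancel₀ h2, one_mul]

lemma hasStrictFDerivAt_sliceTheta_rootPt {τ : ℂ} (hτ : 0 < τ.im) (c : ℤ) (ρ : ℕ) :
    ∃ D : (Fin 5 → ℂ) →L[ℂ] ℂ,
      HasStrictFDerivAt (sliceTheta c τ) D (fun i => ρ * rootPt i) ∧
      ∀ h, D h = 2 * πC * I * sliceDeriv c τ ρ *
        ∑ j : Fin 5, Complex.exp (2 * πC * I * (ρ * c / 5)) ^ (j : ℕ) * h j := by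
  refine ⟨_, hasStrictFDerivAt_sliceTheta hτ c _, fun h => ?_⟩
  have h1 := (ContinuousLinearMap.apply ℂ ℂ h).map_tsum
    (summable_deriv_sliceTheta hτ c (fun i => ρ * rootPt i))
  simp only [ContinuousLinearMap.apply_apply] at h1
  rw [h1]
  have h2 : ∀ a : Slice c, ((2 * πC * I * sliceTerm c τ (fun i => ρ * rootPt i) a.1) •
      intForm a.1) h = 2 * πC * I *
        ∑ j, (sliceTerm c τ (fun i => ρ * rootPt i) a.1 * a.1 j) * h j := fun a => by
    simp only [smul_apply, intForm_apply, smul_eq_mul, mul_sum]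
    exact sum_congr rfl fun j _ => by ring
  simp only [h2]
  rw [tsum_mul_left, Summable.tsum_finsetSum
    (fun j _ => (summable_sliceTerm_mul_coord hτ c _ j).mul_right (h j)), mul_assoc (2 * πC * I)]
  congr 1
  rw [mul_sum]
  refine sum_congr rfl fun j _ => ?_
  rw [tsum_mul_right, tsum_sliceTerm_mul_coord]
  ring

/-! ### Gluing two copies of `A₄` to `E₈` -/

/-- The vector of `E₈` glued from two integer vectors. -/
def glue (a b : Fin 5 → ℤ) : Fin 8 → ℝ :=
  ![a 0 - b 0 / 2, a 1 - b 0 / 2, a 2 - b 0 / 2, a 3 - b 0 / 2, a 4 - b 0 / 2,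
    (b 1 + b 2 - b 3 - b 4) / 2, (b 1 - b 2 + b 3 - b 4) / 2, (b 1 - b 2 - b 3 + b 4) / 2]

lemma forall_fin_eight {P : Fin 8 → Prop} :
    (∀ i, P i) ↔ P 0 ∧ P 1 ∧ P 2 ∧ P 3 ∧ P 4 ∧ P 5 ∧ P 6 ∧ P 7 := by
  simp [Fin.forall_fin_succ]

lemma glue_mem {c : ℤ} {a b : Fin 5 → ℤ} (ha : ∑ i, a i = c) (hb : ∑ i, b i = 2 * c) :
    glue a b ∈ E8Lattice := by
  rw [Fin.sum_univ_five] at ha hb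
  have ha' : (a 0 : ℝ) + a 1 + a 2 + a 3 + a 4 = c := by exact_mod_cast ha
  have hb' : (b 0 : ℝ) + b 1 + b 2 + b 3 + b 4 = 2 * c := by exact_mod_cast hb
  refine ⟨?_, b 1 - b 0, ?_⟩
  · rcases Int.even_or_odd' (b 0) with ⟨k, hk | hk⟩
    · left
      have hk' : (b 0 : ℝ) = 2 * k := by exact_mod_cast hk
      rw [forall_fin_eight]
      refine ⟨⟨a 0 - k, ?_⟩, ⟨a 1 - k, ?_⟩, ⟨a 2 - k, ?_⟩, ⟨a 3 - k, ?_⟩, ⟨a 4 - k, ?_⟩,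
        ⟨c - k - b 3 - b 4, ?_⟩, ⟨c - k - b 2 - b 4, ?_⟩, ⟨c - k - b 2 - b 3, ?_⟩⟩ <;>
      simp [glue] <;> linarith
    · right
      have hk' : (b 0 : ℝ) = 2 * k + 1 := by exact_mod_cast hk
      rw [forall_fin_eight]
      refine ⟨⟨a 0 - k - 1, ?_⟩, ⟨a 1 - k - 1, ?_⟩, ⟨a 2 - k - 1, ?_⟩, ⟨a 3 - k - 1, ?_⟩,
        ⟨a 4 - k - 1, ?_⟩, ⟨c - k - 1 - b 3 - b 4, ?_⟩, ⟨c - k - 1 - b 2 - b 4, ?_⟩,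
        ⟨c - k - 1 - b 2 - b 3, ?_⟩⟩ <;>
      simp [glue] <;> linarith
  · simp [glue, Fin.sum_univ_eight]
    linarith

/-- The gluing map from pairs of slices to the `E₈` lattice. -/
def glueMap (x : Σ c : Fin 5, Slice (c : ℤ) × Slice (2 * (c : ℤ))) : E8Lattice :=
  ⟨glue x.2.1.1 x.2.2.1, glue_mem x.2.1.2 x.2.2.2⟩

lemma glueMap_injective : Function.Injective glueMap := by
  rintro ⟨c, ⟨a, ha⟩, ⟨b, hb⟩⟩ ⟨c', ⟨a', ha'⟩, ⟨b', hb'⟩⟩ h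
  have h1 : glue a b = glue a' b' := congrArg Subtype.val h
  have h2 := fun i => congrFun h1 i
  rw [forall_fin_eight] at h2
  simp [glue] at h2
  obtain ⟨e0, e1, e2, e3, e4, e5, e6, e7⟩ := h2
  have f0 : 2 * a 0 - b 0 = 2 * a' 0 - b' 0 := by exact_mod_cast (by linarith : (2 * a 0 - b 0 : ℝ) = 2 * a' 0 - b' 0)
  have f1 : 2 * a 1 - b 0 = 2 * a' 1 - b' 0 := by exact_mod_cast (by linarith : (2 * a 1 - b 0 : ℝ) = 2 * a' 1 - b' 0)
  have f2 : 2 * a 2 - b 0 = 2 * a' 2 - b' 0 := by exact_mod_cast (by linarith : (2 * a 2 - b 0 : ℝ) = 2 * a' 2 - b' 0)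
  have f3 : 2 * a 3 - b 0 = 2 * a' 3 - b' 0 := by exact_mod_cast (by linarith : (2 * a 3 - b 0 : ℝ) = 2 * a' 3 - b' 0)
  have f4 : 2 * a 4 - b 0 = 2 * a' 4 - b' 0 := by exact_mod_cast (by linarith : (2 * a 4 - b 0 : ℝ) = 2 * a' 4 - b' 0)
  have f5 : b 1 + b 2 - b 3 - b 4 = b' 1 + b' 2 - b' 3 - b' 4 := by exact_mod_cast e5
  have f6 : b 1 - b 2 + b 3 - b 4 = b' 1 - b' 2 + b' 3 - b' 4 := by exact_mod_cast e6
  have f7 : b 1 - b 2 - b 3 + b 4 = b' 1 - b' 2 - b' 3 + b' 4 := by exact_mod_cast e7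
  clear e0 e1 e2 e3 e4 e5 e6 e7 h h1
  rw [Fin.sum_univ_five] at ha ha' hb hb'
  have hcb : 2 * (c : ℤ) - 5 * b 0 = 2 * (c' : ℤ) - 5 * b' 0 := by linarith
  have hc : c = c' := by
    clear f0 f1 f2 f3 f4 f5 f6 f7 ha ha' hb hb'
    omega
  subst hc
  have g0 : b 0 = b' 0 := by linarith
  have g1 : b 1 = b' 1 := by linarith
  have g2 : b 2 = b' 2 := by linarith
  have g3 : b 3 = b' 3 := by linarith
  have g4 : b 4 = b' 4 := by linarith
  have hbb : b = b' := by
    ext i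
    fin_cases i
    exacts [g0, g1, g2, g3, g4]
  have hab : a = a' := by
    ext i
    fin_cases i <;> simp only [Fin.reduceFinMk, Fin.zero_eta, Fin.mk_one] <;> linarith
  subst hab hbb
  rfl

lemma glueMap_surjective : Function.Surjective glueMap := by
  rintro ⟨w, hw, m, hm⟩
  rw [Fin.sum_univ_eight] at hm
  simp only [forall_fin_eight] at hw
  rcases hw with ⟨⟨n0, h0⟩, ⟨n1, h1⟩, ⟨n2, h2⟩, ⟨n3, h3⟩, ⟨n4, h4⟩, ⟨n5, h5⟩, ⟨n6, h6⟩, ⟨n7, h7⟩⟩ |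
    ⟨⟨n0, h0⟩, ⟨n1, h1⟩, ⟨n2, h2⟩, ⟨n3, h3⟩, ⟨n4, h4⟩, ⟨n5, h5⟩, ⟨n6, h6⟩, ⟨n7, h7⟩⟩
  · obtain ⟨c, k, hck⟩ : ∃ (c : Fin 5) (k : ℤ), n0 + n1 + n2 + n3 + n4 + 5 * k = (c : ℤ) :=
      ⟨⟨((n0 + n1 + n2 + n3 + n4) % 5).toNat, by omega⟩, -((n0 + n1 + n2 + n3 + n4) / 5),
        by simp only; omega⟩
    have hm' : n0 + n1 + n2 + n3 + n4 + n5 + n6 + n7 = 2 * m := by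
      rw [h0, h1, h2, h3, h4, h5, h6, h7] at hm; exact_mod_cast hm
    refine ⟨⟨c, ⟨![n0 + k, n1 + k, n2 + k, n3 + k, n4 + k], ?_⟩,
      ⟨![2 * k, 2 * k + m, 2 * k + m - n6 - n7, 2 * k + m - n5 - n7, 2 * k + m - n5 - n6], ?_⟩⟩, ?_⟩
    · simp [Fin.sum_univ_five]; omega
    · simp [Fin.sum_univ_five]; omega
    · apply Subtype.ext
      funext i
      simp only [glueMap, glue]
      fin_cases i <;> simp [*] <;> ring
  · obtain ⟨c, k, hck⟩ : ∃ (c : Fin 5) (k : ℤ), n0 + n1 + n2 + n3 + n4 + 5 * k = (c : ℤ) :=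
      ⟨⟨((n0 + n1 + n2 + n3 + n4) % 5).toNat, by omega⟩, -((n0 + n1 + n2 + n3 + n4) / 5),
        by simp only; omega⟩
    have hm' : n0 + n1 + n2 + n3 + n4 + n5 + n6 + n7 + 4 = 2 * m := by
      rw [h0, h1, h2, h3, h4, h5, h6, h7] at hm
      exact_mod_cast (by linarith : (n0 + n1 + n2 + n3 + n4 + n5 + n6 + n7 + 4 : ℝ) = 2 * m)
    refine ⟨⟨c, ⟨![n0 + k, n1 + k, n2 + k, n3 + k, n4 + k], ?_⟩,
      ⟨![2 * k - 1, 2 * k - 1 + m, 2 * k + m - n6 - n7 - 2, 2 * k + m - n5 - n7 - 2,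
        2 * k + m - n5 - n6 - 2], ?_⟩⟩, ?_⟩
    · simp [Fin.sum_univ_five]; omega
    · simp [Fin.sum_univ_five]; omega
    · apply Subtype.ext
      funext i
      simp only [glueMap, glue]
      fin_cases i <;> simp [*] <;> ring

/-- The `E₈` lattice as a union of products of slices. -/
def glueEquiv : (Σ c : Fin 5, Slice (c : ℤ) × Slice (2 * (c : ℤ))) ≃ E8Lattice :=
  Equiv.ofBijective glueMap ⟨glueMap_injective, glueMap_surjective⟩

/-- The projection of `ℂ⁸` to the first copy of the hyperplane in `ℂ⁵`. -/
def projP (z : Fin 8 → ℂ) : Fin 5 → ℂ :=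
  let σ := (z 0 + z 1 + z 2 + z 3 + z 4) / 5
  ![z 0 - σ, z 1 - σ, z 2 - σ, z 3 - σ, z 4 - σ]

/-- The projection of `ℂ⁸` to the second copy of the hyperplane in `ℂ⁵`. -/
def projR (z : Fin 8 → ℂ) : Fin 5 → ℂ :=
  let σ := (z 0 + z 1 + z 2 + z 3 + z 4) / 5
  ![-2 * σ, σ / 2 + (z 5 + z 6 + z 7) / 2, σ / 2 + (z 5 - z 6 - z 7) / 2,
    σ / 2 + (-z 5 + z 6 - z 7) / 2, σ / 2 + (-z 5 - z 6 + z 7) / 2]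

lemma sum_projP (z : Fin 8 → ℂ) : ∑ i, projP z i = 0 := by
  simp [projP, Fin.sum_univ_five]; ring

lemma sum_projR (z : Fin 8 → ℂ) : ∑ i, projR z i = 0 := by
  simp [projR, Fin.sum_univ_five]; ring

lemma theta_term_glue {c : ℤ} {a b : Fin 5 → ℤ} (ha : ∑ i, a i = c) (hb : ∑ i, b i = 2 * c)
    (τ : ℂ) (z : Fin 8 → ℂ) :
    Complex.exp (πC * I * τ * dotC (cv (glue a b)) (cv (glue a b)) +
      2 * πC * I * dotC z (cv (glue a b))) =
      sliceTerm c τ (projP z) a * sliceTerm (2 * c) τ (projR z) b := by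
  have ha' := slice_sum a ha
  have hb' := slice_sum b hb
  simp only [sliceTerm, sliceExp]
  rw [← Complex.exp_add]
  congr 1
  simp [dotC, cv, glue, projP, projR, Fin.sum_univ_eight, Fin.sum_univ_five] at ha' hb' ⊢
  have hc : (c : ℂ) = a 0 + a 1 + a 2 + a 3 + a 4 := ha'.symm
  have hb4 : (b 4 : ℂ) = 2 * c - b 0 - b 1 - b 2 - b 3 := by linear_combination hb'
  rw [hb4, hc]
  ring

lemma Theta_eq_sum {τ : ℂ} (hτ : 0 < τ.im) (z : Fin 8 → ℂ) :
    Theta τ z = ∑ c ∈ range 5, sliceTheta c τ (projP z) * sliceTheta (2 * c) τ (projR z) := by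
  rw [Theta, ← glueEquiv.tsum_eq]
  have h1 : ∀ x : Σ c : Fin 5, Slice (c : ℤ) × Slice (2 * (c : ℤ)),
      Complex.exp (πC * I * τ * dotC (cv (glueEquiv x).1) (cv (glueEquiv x).1) +
      2 * πC * I * dotC z (cv (glueEquiv x).1)) =
      sliceTerm x.1 τ (projP z) x.2.1.1 * sliceTerm (2 * x.1) τ (projR z) x.2.2.1 := fun x =>
    theta_term_glue x.2.1.2 x.2.2.2 τ z
  simp only [h1]
  have hn : ∀ c : Fin 5, Summable fun y : Slice (c : ℤ) × Slice (2 * (c : ℤ)) =>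
      ‖sliceTerm c τ (projP z) y.1.1 * sliceTerm (2 * c) τ (projR z) y.2.1‖ := fun c =>
    Summable.mul_norm (f := fun a : Slice (c : ℤ) => sliceTerm c τ (projP z) a.1)
      (g := fun b : Slice (2 * (c : ℤ)) => sliceTerm (2 * c) τ (projR z) b.1)
      (summable_norm_sliceTerm hτ c c (projP z))
      (summable_norm_sliceTerm hτ (2 * c) (2 * c) (projR z))
  have hs : Summable fun x : Σ c : Fin 5, Slice (c : ℤ) × Slice (2 * (c : ℤ)) =>
      sliceTerm x.1 τ (projP z) x.2.1.1 * sliceTerm (2 * x.1) τ (projR z) x.2.2.1 := by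
    apply Summable.of_norm
    exact (summable_sigma_of_nonneg fun _ => norm_nonneg _).2 ⟨hn, Summable.of_finite⟩
  rw [hs.tsum_sigma, tsum_fintype, Finset.sum_range
    fun c : ℕ => sliceTheta c τ (projP z) * sliceTheta (2 * c) τ (projR z)]
  refine sum_congr rfl fun c _ => ?_
  exact (tsum_mul_tsum_of_summable_norm
      (f := fun a : Slice (c : ℤ) => sliceTerm c τ (projP z) a.1)
      (g := fun b : Slice (2 * (c : ℤ)) => sliceTerm (2 * c) τ (projR z) b.1)
      (summable_norm_sliceTerm hτ c c (projP z))
      (summable_norm_sliceTerm hτ (2 * c) (2 * c) (projR z))).symm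

/-! ### Translation behaviour of rescaled theta functions -/

/-- A vector of the dual of the first copy of `A₄`. -/
def transVec : Fin 8 → ℂ := ![-1/5, -1/5, -1/5, -1/5, 4/5, 0, 0, 0]

/-- The factor of automorphy for the translation by `N τ` times `transVec`. -/
def autFactor (τ : ℂ) (N : ℕ) (y : Fin 8 → ℂ) : ℂ :=
  Complex.exp (-(4 / 5 * πC * I * τ * N ^ 2) - 2 * πC * I * N * projP y 4)

/-- The reduced form of a rescaled theta function after translation. -/
def thetaRed (d ρ l : ℕ) (τ : ℂ) (y : Fin 8 → ℂ) : ℂ :=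
  Complex.exp (4 / 5 * πC * I * (d * l)) * ∑ c ∈ range 5, Complex.exp (2 * πC * I * (l * c / 5)) *
    (sliceTheta c ((ρ * τ + l) / d) (fun i => ρ * projP y i) *
      sliceTheta ((2 * c + 3 * d) % 5 : ℕ) ((ρ * τ + l) / d) (fun i => ρ * projR y i))

lemma sum_range_five_shift {f : ℤ → ℂ} (hf : ∀ c, f (c + 5) = f c) (M : ℕ) :
    ∑ c ∈ range 5, f (c + M) = ∑ c ∈ range 5, f c := by
  induction M with
  | zero => simp
  | succ M ih =>
    rw [← ih]
    have := hf M
    simp only [sum_range_succ, sum_range_zero, zero_add]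
    push_cast
    rw [← hf (0 + M)]
    ring_nf

lemma exp_two_pi_I_mul (n : ℤ) : Complex.exp (2 * πC * I * n) = 1 := by
  rw [mul_comm]; exact Complex.exp_int_mul_two_pi_mul_I n

lemma im_rescaled_pos {τ : ℂ} (hτ : 0 < τ.im) {d ρ : ℕ} (hd : 0 < d) (hρ : 0 < ρ) (l : ℕ) :
    0 < ((ρ * τ + l) / d : ℂ).im := by
  rw [div_natCast_im]
  simp only [add_im, mul_im, natCast_re, natCast_im, zero_mul, add_zero]
  positivity

lemma Theta_translate {τ : ℂ} (hτ : 0 < τ.im) {d ρ : ℕ} (hd : 0 < d) (hρ : 0 < ρ) (l n : ℕ)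
    (y : Fin 8 → ℂ) :
    Theta ((ρ * τ + l) / d) (fun i => ρ * (((1 + 5 * n : ℕ) : ℂ) * τ * transVec i + y i)) =
      autFactor τ (1 + 5 * n) y ^ (ρ * d) * thetaRed d ρ l τ y := by
  have hd0 : (d : ℂ) ≠ 0 := by exact_mod_cast hd.ne'
  have hτ' := im_rescaled_pos hτ hd hρ l
  rw [Theta_eq_sum hτ', thetaRed]
  obtain ⟨τ', hτ'def⟩ : ∃ τ' : ℂ, τ' = (ρ * τ + l) / d := ⟨_, rfl⟩
  rw [← hτ'def] at hτ' ⊢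
  have hτd : (ρ : ℂ) * τ = d * τ' - l := by rw [hτ'def]; field_simp; ring
  set N : ℕ := 1 + 5 * n with hN
  have hP : projP (fun i => ρ * ((N : ℂ) * τ * transVec i + y i)) = fun i =>
      (ρ * projP y i - ((N * l : ℕ) : ℤ) * glueVec i) + ((N * d : ℕ) : ℤ) * τ' * glueVec i := by
    funext i
    fin_cases i <;> simp [projP, glueVec, transVec] <;>
    first
    | linear_combination (-1 / 5 * N : ℂ) * hτd
    | linear_combination (4 / 5 * N : ℂ) * hτd
  have hR : projR (fun i => ρ * ((N : ℂ) * τ * transVec i + y i)) = fun i => ρ * projR y i := by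
    funext i
    fin_cases i <;> simp [projR, transVec] <;> ring
  have hsP : ∑ i, (ρ : ℂ) * projP y i = 0 := by rw [← mul_sum, sum_projP, mul_zero]
  have hsR : ∑ i, (ρ : ℂ) * projR y i = 0 := by rw [← mul_sum, sum_projR, mul_zero]
  set f : ℤ → ℂ := fun c => Complex.exp (2 * πC * I * (l * c / 5)) *
    (sliceTheta c τ' (fun i => ρ * projP y i) *
      sliceTheta (2 * c + 3 * d) τ' (fun i => ρ * projR y i)) with hf
  have hf5 : ∀ c, f (c + 5) = f c := fun c => by
    simp only [hf]
    rw [sliceTheta_add_five c τ' hsP, show 2 * (c + 5) + 3 * (d : ℤ) = 2 * c + 3 * d + 5 * 2 by ring,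
      sliceTheta_add_mul_five _ _ τ' hsR]
    congr 1
    rw [← mul_one (Complex.exp (2 * πC * I * (l * c / 5))), ← exp_two_pi_I_mul l, ← Complex.exp_add]
    congr 1
    push_cast
    ring
  have hr : ∀ c ∈ range 5, Complex.exp (2 * πC * I * (l * c / 5)) *
    (sliceTheta c τ' (fun i => ρ * projP y i) *
      sliceTheta ((2 * c + 3 * d) % 5 : ℕ) τ' (fun i => ρ * projR y i)) = f c := fun c _ => by
    simp only [hf]
    push_cast
    rw [sliceTheta_emod _ τ' hsR]
  rw [sum_congr rfl hr, ← sum_range_five_shift hf5 (N * d), mul_sum, mul_sum, hR]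
  refine sum_congr rfl fun c _ => ?_
  rw [hP, sliceTheta_translate, sliceTheta_integral_translate]
  simp only [hf]
  have h2 : sliceTheta (2 * (c : ℤ)) τ' (fun i => ρ * projR y i) =
      sliceTheta (2 * ((c : ℤ) + (N * d : ℕ)) + 3 * d) τ' (fun i => ρ * projR y i) := by
    rw [← sliceTheta_add_mul_five (2 * (c : ℤ)) (d + 2 * n * d) τ' hsR]
    congr 1
    rw [hN]; push_cast; ring
  rw [h2, ← mul_assoc, ← mul_assoc, ← mul_assoc, ← mul_assoc]
  congr 2
  rw [autFactor, ← Complex.exp_nat_mul, ← Complex.exp_add, ← Complex.exp_add, ← Complex.exp_add,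
    Complex.exp_eq_exp_iff_exists_int]
  refine ⟨d * l * (4 * n + 10 * n ^ 2) + n * l * (c + (1 + 5 * n) * d), ?_⟩
  simp only [glueVec, πC]
  simp
  rw [hN]
  push_cast
  linear_combination (4 / 5 * Real.pi * I * (1 + 5 * n) ^ 2 * d) * hτd

/-! ### First-order jets at the base point -/

/-- The base point in `ℂ⁸`, both projections of which are the special point. -/
def basePt : Fin 8 → ℂ := ![0, 1/5, 2/5, 3/5, -6/5, 3/5, 4/5, -1]

lemma projP_basePt : projP basePt = rootPt := by
  funext i
  fin_cases i <;> simp [projP, basePt, rootPt] <;> norm_num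

lemma projR_basePt : projR basePt = rootPt := by
  funext i
  fin_cases i <;> simp [projR, basePt, rootPt] <;> norm_num

/-- The first projection as a continuous linear map. -/
def projPL : (Fin 8 → ℂ) →L[ℂ] (Fin 5 → ℂ) :=
  LinearMap.toContinuousLinearMap
    { toFun := projP
      map_add' := fun x y => by
        funext i; fin_cases i <;> simp [projP] <;> ring
      map_smul' := fun c x => by
        funext i; fin_cases i <;> simp [projP] <;> ring }

/-- The second projection as a continuous linear map. -/
def projRL : (Fin 8 → ℂ) →L[ℂ] (Fin 5 → ℂ) :=
  LinearMap.toContinuousLinearMap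
    { toFun := projR
      map_add' := fun x y => by
        funext i; fin_cases i <;> simp [projR] <;> ring
      map_smul' := fun c x => by
        funext i; fin_cases i <;> simp [projR] <;> ring }

lemma projPL_apply (h : Fin 8 → ℂ) : projPL h = projP h := rfl

lemma projRL_apply (h : Fin 8 → ℂ) : projRL h = projR h := rfl

/-- A component of the discrete Fourier transform on `ℂ⁵`. -/
def fourier5 (m : ℕ) : (Fin 5 → ℂ) →L[ℂ] ℂ :=
  ∑ j : Fin 5, (Complex.exp (2 * πC * I * (m / 5)) ^ (j : ℕ)) •
    ContinuousLinearMap.proj (R := ℂ) (φ := fun _ : Fin 5 => ℂ) j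

lemma fourier5_apply (m : ℕ) (h : Fin 5 → ℂ) :
    fourier5 m h = ∑ j : Fin 5, Complex.exp (2 * πC * I * (m / 5)) ^ (j : ℕ) * h j := by
  simp [fourier5]

lemma exp_mod_five (l n : ℕ) : Complex.exp (2 * πC * I * (l * (n % 5 : ℕ) / 5)) =
    Complex.exp (2 * πC * I * (l * n / 5)) := by
  rw [Complex.exp_eq_exp_iff_exists_int]
  obtain ⟨k, hk⟩ : ∃ k : ℕ, n % 5 + 5 * k = n := ⟨n / 5, Nat.mod_add_div n 5⟩
  generalize n % 5 = r at hk ⊢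
  refine ⟨-(l * k), ?_⟩
  have h : (n : ℂ) = r + 5 * k := by exact_mod_cast hk.symm
  rw [πC]
  push_cast
  linear_combination (-(2 / 5 : ℂ) * Real.pi * I * l) * h

/-- The differential of a form of index `m` whose two Fourier coefficients are `A` and `B`. -/
def jetMap (m : ℕ) (A B : ℂ) : (Fin 8 → ℂ) →L[ℂ] ℂ :=
  (2 * πC * I) • (A • (fourier5 m).comp projPL + B • (fourier5 (3 * m)).comp projRL)

lemma jetMap_apply (m : ℕ) (A B : ℂ) (h : Fin 8 → ℂ) : jetMap m A B h =
    2 * πC * I * (A * fourier5 m (projP h) + B * fourier5 (3 * m) (projR h)) := by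
  simp only [jetMap, smul_apply, add_apply, smul_eq_mul, ContinuousLinearMap.comp_apply,
    projPL_apply, projRL_apply]

/-- After translation and removal of the factor of automorphy of index `m`, the function `F` has
value `V` and differential `D` at the base point. -/
def HasJet (τ : ℂ) (m : ℕ) (F : (Fin 8 → ℂ) → ℂ) (V : ℂ) (D : (Fin 8 → ℂ) →L[ℂ] ℂ) : Prop :=
  ∃ G : (Fin 8 → ℂ) → ℂ,
    (∀ (n : ℕ) (y : Fin 8 → ℂ), F (fun i => ((1 + 5 * n : ℕ) : ℂ) * τ * transVec i + y i) =
      autFactor τ (1 + 5 * n) y ^ m * G y) ∧ G basePt = V ∧ HasStrictFDerivAt G D basePt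

section

variable {τ : ℂ} {m : ℕ} {F F' : (Fin 8 → ℂ) → ℂ} {V V' : ℂ} {D D' : (Fin 8 → ℂ) →L[ℂ] ℂ}

lemma HasJet.add (h : HasJet τ m F V D) (h' : HasJet τ m F' V' D') :
    HasJet τ m (fun z => F z + F' z) (V + V') (D + D') := by
  obtain ⟨G, h1, h2, h3⟩ := h
  obtain ⟨G', h1', h2', h3'⟩ := h'
  exact ⟨fun y => G y + G' y, fun n y => by simp only [h1, h1', mul_add],
    by simp only [h2, h2'], h3.add h3'⟩

lemma HasJet.const_mul (h : HasJet τ m F V D) (c : ℂ) :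
    HasJet τ m (fun z => c * F z) (c * V) (c • D) := by
  obtain ⟨G, h1, h2, h3⟩ := h
  exact ⟨fun y => c * G y, fun n y => by simp only [h1, mul_left_comm],
    by simp only [h2], h3.const_mul c⟩

lemma HasJet.sum {s : Finset ℕ} {F : ℕ → (Fin 8 → ℂ) → ℂ} {V : ℕ → ℂ}
    {D : ℕ → (Fin 8 → ℂ) →L[ℂ] ℂ} (h : ∀ k, HasJet τ m (F k) (V k) (D k)) :
    HasJet τ m (fun z => ∑ k ∈ s, F k z) (∑ k ∈ s, V k) (∑ k ∈ s, D k) := by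
  choose G h1 h2 h3 using h
  exact ⟨fun y => ∑ k ∈ s, G k y, fun n y => by simp only [h1, mul_sum],
    by simp only [h2], HasStrictFDerivAt.fun_sum fun k _ => h3 k⟩

/-- A form vanishing at the base point whose differential has Fourier coefficients `A`, `B`. -/
def HasCoeffs (τ : ℂ) (m : ℕ) (F : (Fin 8 → ℂ) → ℂ) (A B : ℂ) : Prop :=
  HasJet τ m F 0 (jetMap m A B)

variable {A A' B B' : ℂ}

lemma HasCoeffs.add (h : HasCoeffs τ m F A B) (h' : HasCoeffs τ m F' A' B') :
    HasCoeffs τ m (fun z => F z + F' z) (A + A') (B + B') := by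
  have e : jetMap m (A + A') (B + B') = jetMap m A B + jetMap m A' B' := by
    ext1 h; simp only [jetMap_apply, add_apply]; ring
  rw [HasCoeffs, e, ← add_zero (0 : ℂ)]
  exact HasJet.add h h'

lemma HasCoeffs.const_mul (h : HasCoeffs τ m F A B) (c : ℂ) :
    HasCoeffs τ m (fun z => c * F z) (c * A) (c * B) := by
  have e : jetMap m (c * A) (c * B) = c • jetMap m A B := by
    ext1 h; simp only [jetMap_apply, smul_apply, smul_eq_mul]; ring
  rw [HasCoeffs, e, ← mul_zero c]
  exact HasJet.const_mul h c

lemma HasCoeffs.sub (h : HasCoeffs τ m F A B) (h' : HasCoeffs τ m F' A' B') :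
    HasCoeffs τ m (fun z => F z - F' z) (A - A') (B - B') := by
  have := h.add (h'.const_mul (-1))
  simpa only [neg_one_mul, ← sub_eq_add_neg] using this

lemma HasCoeffs.sum {s : Finset ℕ} {F : ℕ → (Fin 8 → ℂ) → ℂ} {A B : ℕ → ℂ}
    (h : ∀ k, HasCoeffs τ m (F k) (A k) (B k)) :
    HasCoeffs τ m (fun z => ∑ k ∈ s, F k z) (∑ k ∈ s, A k) (∑ k ∈ s, B k) := by
  have e : jetMap m (∑ k ∈ s, A k) (∑ k ∈ s, B k) = ∑ k ∈ s, jetMap m (A k) (B k) := by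
    ext1 h
    simp only [jetMap_apply, _root_.sum_apply, mul_sum, sum_mul, sum_add_distrib, mul_add]
  have := HasJet.sum (s := s) h
  rw [sum_const_zero, ← e] at this
  exact this

/-- The first Fourier coefficient of a rescaled theta function. -/
def coefA (d ρ l : ℕ) (τ : ℂ) : ℂ :=
  ρ * Complex.exp (4 / 5 * πC * I * (d * l)) * Complex.exp (2 * πC * I * (l * d / 5)) *
    (sliceDeriv (d % 5 : ℕ) ((ρ * τ + l) / d) ρ *
      sliceTheta 0 ((ρ * τ + l) / d) (fun i => ρ * rootPt i))

/-- The second Fourier coefficient of a rescaled theta function. -/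
def coefB (d ρ l : ℕ) (τ : ℂ) : ℂ :=
  ρ * Complex.exp (4 / 5 * πC * I * (d * l)) *
    (sliceDeriv (3 * d % 5 : ℕ) ((ρ * τ + l) / d) ρ *
      sliceTheta 0 ((ρ * τ + l) / d) (fun i => ρ * rootPt i))

lemma exists_hasStrictFDerivAt_slice (hτ : 0 < τ.im) (ρ c : ℕ)
    (L : (Fin 8 → ℂ) →L[ℂ] (Fin 5 → ℂ)) (hL : L basePt = rootPt) :
    HasStrictFDerivAt (fun y => sliceTheta c τ (fun i => ρ * L y i))
      ((2 * πC * I * (ρ * sliceDeriv c τ ρ)) • (fourier5 (ρ * c)).comp L) basePt := by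
  obtain ⟨D, hD, hDh⟩ := hasStrictFDerivAt_sliceTheta_rootPt hτ c ρ
  have h1 : HasStrictFDerivAt (fun y => (ρ : ℂ) • L y) ((ρ : ℂ) • L) basePt :=
    L.hasStrictFDerivAt.const_smul (ρ : ℂ)
  have h2 : HasStrictFDerivAt (sliceTheta c τ) D ((ρ : ℂ) • L basePt) := by rw [hL]; exact hD
  have h3 := h2.comp basePt h1
  have e : (2 * πC * I * (ρ * sliceDeriv c τ ρ)) • (fourier5 (ρ * c)).comp L =
      D.comp ((ρ : ℂ) • L) := by
    ext1 h
    simp only [smul_apply, ContinuousLinearMap.comp_apply, hDh, fourier5_apply, smul_eq_mul,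
      Pi.smul_apply]
    push_cast
    rw [mul_sum, mul_sum]
    exact sum_congr rfl fun j _ => by ring
  rw [e]
  exact h3

lemma hasStrictFDerivAt_thetaRed (hτ : 0 < τ.im) {d ρ : ℕ} (hd : 0 < d) (hρ : 0 < ρ) (l : ℕ) :
    HasStrictFDerivAt (thetaRed d ρ l τ) (Complex.exp (4 / 5 * πC * I * (d * l)) •
      ∑ c ∈ range 5, Complex.exp (2 * πC * I * (l * c / 5)) •
      (sliceTheta c ((ρ * τ + l) / d) (fun i => ρ * rootPt i) •
        (2 * πC * I * (ρ * sliceDeriv ((2 * c + 3 * d) % 5 : ℕ) ((ρ * τ + l) / d) ρ)) •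
          (fourier5 (ρ * ((2 * c + 3 * d) % 5))).comp projRL +
      sliceTheta ((2 * c + 3 * d) % 5 : ℕ) ((ρ * τ + l) / d) (fun i => ρ * rootPt i) •
        (2 * πC * I * (ρ * sliceDeriv c ((ρ * τ + l) / d) ρ)) •
          (fourier5 (ρ * c)).comp projPL)) basePt := by
  have hτ' := im_rescaled_pos hτ hd hρ l
  refine HasStrictFDerivAt.const_mul (HasStrictFDerivAt.fun_sum fun c _ =>
    HasStrictFDerivAt.const_mul ?_ _) _
  have h1 := exists_hasStrictFDerivAt_slice hτ' ρ c projPL projP_basePt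
  have h2 := exists_hasStrictFDerivAt_slice hτ' ρ ((2 * c + 3 * d) % 5) projRL projR_basePt
  have h3 := h1.mul h2
  simp only [projPL_apply, projRL_apply, projP_basePt, projR_basePt] at h3
  exact h3

lemma fourier5_mul_mod (ρ n : ℕ) : fourier5 (ρ * (n % 5)) = fourier5 (ρ * n) := by
  ext1 h
  simp only [fourier5_apply]
  have := exp_mod_five ρ n
  push_cast at this ⊢
  rw [this]

lemma hasCoeffs_Theta (hτ : 0 < τ.im) {d ρ : ℕ} (hd : ¬ 5 ∣ d) (hρ : ¬ 5 ∣ ρ) (l : ℕ) :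
    HasCoeffs τ (ρ * d) (fun z => Theta ((ρ * τ + l) / d) (fun i => ρ * z i))
      (coefA d ρ l τ) (coefB d ρ l τ) := by
  have hd0 : 0 < d := Nat.pos_of_ne_zero fun h => hd (h ▸ dvd_zero 5)
  have hρ0 : 0 < ρ := Nat.pos_of_ne_zero fun h => hρ (h ▸ dvd_zero 5)
  set τ' : ℂ := (ρ * τ + l) / d with hτ'
  have hz : ∀ c ∈ range 5, c ≠ 0 → sliceTheta c τ' (fun i => ρ * rootPt i) = 0 := fun c hc h0 => by
    refine sliceTheta_rootPt_eq_zero ?_ τ'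
    have hc5 := mem_range.1 hc
    intro h
    have h5 : (5 : ℕ) ∣ ρ * c := by exact_mod_cast h
    rcases (Nat.Prime.dvd_mul Nat.prime_five).1 h5 with h | h
    · exact hρ h
    · omega
  have hz' : ∀ c ∈ range 5, c ≠ d % 5 →
      sliceTheta ((2 * c + 3 * d) % 5 : ℕ) τ' (fun i => ρ * rootPt i) = 0 := fun c hc h0 =>
    hz _ (mem_range.2 (by omega)) (by have := mem_range.1 hc; omega)
  refine ⟨thetaRed d ρ l τ, fun n y => Theta_translate hτ hd0 hρ0 l n y, ?_, ?_⟩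
  · rw [thetaRed, projP_basePt, projR_basePt, sum_eq_zero, mul_zero]
    intro c hc
    by_cases h : c = 0
    · rw [hz' c hc (by omega), mul_zero, mul_zero]
    · rw [hz c hc h, zero_mul, mul_zero]
  · refine (hasStrictFDerivAt_thetaRed hτ hd0 hρ0 l).congr_fderiv ?_
    ext1 h
    rw [jetMap_apply]
    simp only [smul_apply, add_apply, _root_.sum_apply, smul_eq_mul, ContinuousLinearMap.comp_apply,
      projPL_apply, projRL_apply, mul_add, sum_add_distrib, ← hτ']
    rw [sum_eq_single_of_mem 0 (mem_range.2 (by norm_num))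
        (fun c hc h0 => by rw [hz c hc h0, zero_mul, mul_zero]),
      sum_eq_single_of_mem (d % 5) (mem_range.2 (by omega))
        (fun c hc h0 => by rw [hz' c hc h0, zero_mul, mul_zero])]
    have e : (2 * (d % 5) + 3 * d) % 5 = 0 := by omega
    rw [e, exp_mod_five, mul_zero, zero_add, fourier5_mul_mod, fourier5_mul_mod, coefA, coefB,
      ← hτ']
    simp only [Nat.cast_zero, mul_zero, zero_div, Complex.exp_zero]
    rw [show ρ * (3 * d) = 3 * (ρ * d) by ring]
    ring

end

/-! ### Expansions at the origin -/

/-- The functions `F` and `p` agree up to order `N` at the origin, `p` being continuous there. -/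
def HasExp (N : ℕ) (F p : ℂ → ℂ) : Prop :=
  (fun u => F u - p u) =O[𝓝 0] (fun u => u ^ N) ∧ ContinuousAt p 0

namespace HasExp

variable {N M : ℕ} {F G p q : ℂ → ℂ}

lemma of_continuousAt (hp : ContinuousAt p 0) : HasExp N p p :=
  ⟨by simpa using isBigO_zero _ _, hp⟩

lemma mono (h : HasExp N F p) (hM : M ≤ N) : HasExp M F p := by
  refine ⟨h.1.trans ?_, h.2⟩
  refine IsBigO.of_bound 1 ?_
  filter_upwards [Metric.ball_mem_nhds (0 : ℂ) one_pos] with u hu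
  rw [one_mul, norm_pow, norm_pow]
  exact pow_le_pow_of_le_one (norm_nonneg _) (by simpa using (mem_ball_zero_iff.1 hu).le) hM

lemma add (h : HasExp N F p) (h' : HasExp N G q) :
    HasExp N (fun u => F u + G u) (fun u => p u + q u) :=
  ⟨(h.1.add h'.1).congr_left fun u => by ring, h.2.add h'.2⟩

lemma mul (h : HasExp N F p) (h' : HasExp N G q) :
    HasExp N (fun u => F u * G u) (fun u => p u * q u) := by
  have hp : p =O[𝓝 0] (fun _ => (1 : ℂ)) := h.2.norm.isBoundedUnder_le.isBigO_one ℂ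
  have hq : q =O[𝓝 0] (fun _ => (1 : ℂ)) := h'.2.norm.isBoundedUnder_le.isBigO_one ℂ
  have h1 : (fun u : ℂ => u ^ N) =O[𝓝 0] (fun _ => (1 : ℂ)) :=
    ((continuous_pow N).continuousAt (x := (0 : ℂ))).norm.isBoundedUnder_le.isBigO_one ℂ
  have hF : F =O[𝓝 0] (fun _ => (1 : ℂ)) :=
    ((h.1.trans h1).add hp).congr_left fun u => by ring
  refine ⟨?_, h.2.mul h'.2⟩
  have := (hF.mul h'.1).add ((hq.mul h.1))
  exact this.congr (fun u => by ring) (fun u => by ring)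

lemma const_mul (h : HasExp N F p) (c : ℂ) : HasExp N (fun u => c * F u) (fun u => c * p u) :=
  (of_continuousAt continuousAt_const).mul h

lemma pow (h : HasExp N F p) : ∀ k : ℕ, HasExp N (fun u => F u ^ k) (fun u => p u ^ k)
  | 0 => by simpa using of_continuousAt (p := fun _ => 1) continuousAt_const
  | k + 1 => by simpa only [pow_succ] using (h.pow k).mul h

lemma comp_pow (h : HasExp N F p) {k : ℕ} (hk : k ≠ 0) :
    HasExp (k * N) (fun u => F (u ^ k)) (fun u => p (u ^ k)) := by
  have ht : Tendsto (fun u : ℂ => u ^ k) (𝓝 0) (𝓝 0) := by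
    simpa [zero_pow hk] using (continuous_pow k).tendsto (0 : ℂ)
  refine ⟨?_, ContinuousAt.comp (g := p) (by simpa [zero_pow hk] using h.2)
    (continuous_pow k).continuousAt⟩
  simpa only [pow_mul, Function.comp_def] using h.1.comp_tendsto ht

/-- Terms of order `N` may be changed at will. -/
lemma congr (h : HasExp N F p) (r : ℂ → ℂ) (hr : ContinuousAt r 0)
    (hq : ∀ u, p u = q u + u ^ N * r u) : HasExp N F q := by
  have hr' : r =O[𝓝 0] (fun _ => (1 : ℂ)) := hr.norm.isBoundedUnder_le.isBigO_one ℂ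
  have h1 : (fun u => u ^ N * r u) =O[𝓝 0] (fun u : ℂ => u ^ N) := by
    simpa using (isBigO_refl (fun u : ℂ => u ^ N) (𝓝 0)).mul hr'
  refine ⟨(h.1.add h1).congr_left fun u => by rw [hq]; ring, ?_⟩
  · have : q = fun u => p u - u ^ N * r u := funext fun u => by rw [hq]; ring
    rw [this]
    exact h.2.sub ((continuous_pow N).continuousAt.mul hr)

lemma mul_var (h : HasExp N F p) : HasExp (N + 1) (fun u => u * F u) (fun u => u * p u) :=
  ⟨((isBigO_refl (fun u : ℂ => u) _).mul h.1).congr (fun u => by ring) (fun u => by ring),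
    continuousAt_id.mul h.2⟩

lemma tendsto (h : HasExp N F p) (hN : N ≠ 0) : Tendsto F (𝓝 0) (𝓝 (p 0)) := by
  have h0 : Tendsto (fun u : ℂ => u ^ N) (𝓝 0) (𝓝 0) := by
    simpa [zero_pow hN] using (continuous_pow N).tendsto (0 : ℂ)
  have := (h.1.trans_tendsto h0).add h.2
  simpa using this

/-- Averaging over roots of unity extracts a coefficient. -/
lemma tendsto_filter {a d : ℕ} (had : a < d) {ζ : ℂ} (hζ : IsPrimitiveRoot ζ d) {c : ℕ → ℂ}
    (h : HasExp (a + 1) F (fun u => ∑ n ∈ range (a + 1), c n * u ^ n)) :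
    Tendsto (fun u => (∑ k ∈ range d, (ζ ^ (a * k))⁻¹ * F (ζ ^ k * u)) / u ^ a) (𝓝[≠] 0)
      (𝓝 (d * c a)) := by
  have hd : d ≠ 0 := by omega
  have hζ0 : ζ ≠ 0 := hζ.ne_zero hd
  have hmain : ∀ u, ∑ k ∈ range d, (ζ ^ (a * k))⁻¹ * (∑ n ∈ range (a + 1), c n * (ζ ^ k * u) ^ n) =
      d * c a * u ^ a := by
    intro u
    simp only [mul_sum]
    rw [sum_comm, sum_eq_single_of_mem a (mem_range.2 (by omega))]
    · rw [sum_congr rfl (g := fun _ => c a * u ^ a)]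
      · rw [sum_const, card_range, nsmul_eq_mul, mul_assoc]
      · intro k _
        rw [mul_pow, ← pow_mul, mul_comm k a]
        have := pow_ne_zero (a * k) hζ0
        field_simp
    · intro n hn hna
      have hn' : n < a := by have := mem_range.1 hn; omega
      have h1 : ∀ k ∈ range d, (ζ ^ (a * k))⁻¹ * (c n * (ζ ^ k * u) ^ n) =
          (c n * u ^ n) * ((ζ ^ (a - n))⁻¹) ^ k := by
        intro k _
        rw [mul_pow, ← pow_mul, inv_pow, ← pow_mul]
        have e : a * k = (a - n) * k + k * n := by
          rw [mul_comm k n, ← add_mul, Nat.sub_add_cancel hn'.le]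
        rw [e, pow_add]
        have := pow_ne_zero ((a - n) * k) hζ0
        have := pow_ne_zero (k * n) hζ0
        field_simp
      rw [sum_congr rfl h1, ← mul_sum]
      have hne : (ζ ^ (a - n))⁻¹ ≠ 1 := by
        rw [Ne, inv_eq_one]
        exact hζ.pow_ne_one_of_pos_of_lt (by omega) (by omega)
      have : ∑ k ∈ range d, ((ζ ^ (a - n))⁻¹) ^ k = 0 := by
        rw [geom_sum_eq hne, inv_pow, ← pow_mul, mul_comm, pow_mul, hζ.pow_eq_one]
        simp
      rw [this, mul_zero]
  have hO : (fun u => (∑ k ∈ range d, (ζ ^ (a * k))⁻¹ * F (ζ ^ k * u)) - d * c a * u ^ a)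
      =O[𝓝 0] (fun u : ℂ => u ^ (a + 1)) := by
    have h2 : ∀ k ∈ range d, (fun u => (ζ ^ (a * k))⁻¹ *
        (F (ζ ^ k * u) - ∑ n ∈ range (a + 1), c n * (ζ ^ k * u) ^ n)) =O[𝓝 0]
        (fun u : ℂ => u ^ (a + 1)) := by
      intro k _
      have ht : Tendsto (fun u : ℂ => ζ ^ k * u) (𝓝 0) (𝓝 0) := by
        simpa using (continuous_const_mul (ζ ^ k)).tendsto (0 : ℂ)
      refine ((h.1.comp_tendsto ht).const_mul_left _).trans ?_
      simp only [Function.comp_def, mul_pow]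
      exact isBigO_const_mul_self _ _ _
    refine (IsBigO.sum h2).congr_left fun u => ?_
    rw [Finset.sum_apply]
    simp only [mul_sub, sum_sub_distrib]
    rw [hmain]
  have hlim : Tendsto (fun u => ((∑ k ∈ range d, (ζ ^ (a * k))⁻¹ * F (ζ ^ k * u)) -
      d * c a * u ^ a) / u ^ a) (𝓝[≠] 0) (𝓝 0) := by
    have h3 : (fun u : ℂ => u ^ (a + 1)) =o[𝓝 0] (fun u : ℂ => u ^ a) := by
      simpa using isLittleO_pow_pow (𝕜 := ℂ) (Nat.lt_succ_self a)
    exact ((hO.trans_isLittleO h3).mono nhdsWithin_le_nhds).tendsto_div_nhds_zero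
  have := hlim.add_const (d * c a)
  rw [zero_add] at this
  refine this.congr' ?_
  filter_upwards [self_mem_nhdsWithin] with u hu
  rw [sub_div, mul_div_cancel_right₀ _ (pow_ne_zero _ hu), sub_add_cancel]

end HasExp

/-- Expansion of a power series indexed by an arbitrary type. -/
lemma hasExp_tsum {ι : Type*} (χ : ι → ℂ) (n : ι → ℕ) {r : ℝ} (hr : 0 < r)
    (hs : Summable fun i => ‖χ i‖ * r ^ n i) (N : ℕ) (T : Finset ι) (hT : ∀ i ∉ T, N ≤ n i) :
    HasExp N (fun u => ∑' i, χ i * u ^ n i) (fun u => ∑ i ∈ T, χ i * u ^ n i) := by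
  refine ⟨?_, by fun_prop⟩
  set K := ∑' i, ‖χ i‖ * r ^ n i with hK
  refine IsBigO.of_bound (K * (r ^ N)⁻¹) ?_
  filter_upwards [Metric.ball_mem_nhds (0 : ℂ) hr] with u hu
  have hu' : ‖u‖ ≤ r := (mem_ball_zero_iff.1 hu).le
  have hsu : Summable fun i => χ i * u ^ n i := by
    refine Summable.of_norm_bounded hs fun i => ?_
    rw [norm_mul, norm_pow]
    gcongr
  rw [← hsu.sum_add_tsum_subtype_compl T, add_sub_cancel_left]
  have hb : ∀ i : {i // i ∉ T}, ‖χ i * u ^ n i‖ ≤ ‖χ i‖ * r ^ n i * ((r ^ N)⁻¹ * ‖u‖ ^ N) := by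
    intro i
    obtain ⟨k, hk⟩ := Nat.exists_eq_add_of_le (hT i.1 i.2)
    rw [norm_mul, norm_pow, hk, pow_add, pow_add, mul_assoc]
    have e : r ^ N * r ^ k * ((r ^ N)⁻¹ * ‖u‖ ^ N) = ‖u‖ ^ N * r ^ k := by
      have := (pow_pos hr N).ne'
      field_simp
    rw [e]
    gcongr
  have hs' : Summable fun i : {i // i ∉ T} => ‖χ i‖ * r ^ n i := hs.subtype _
  refine (tsum_of_norm_bounded (hs'.mul_right _).hasSum hb).trans ?_
  rw [tsum_mul_right, norm_pow, mul_assoc]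
  refine mul_le_mul_of_nonneg_right ?_ (by positivity)
  exact Summable.tsum_subtype_le _ {i | i ∉ T} (fun i => by positivity) hs

/-! ### Expansions of the slice theta series at the special point -/

/-- Quadruples of integers parametrise every slice. -/
abbrev Quad : Type := ℤ × ℤ × ℤ × ℤ

/-- The last coordinate of the slice vector attached to a quadruple. -/
def quadLast (c : ℤ) (x : Quad) : ℤ := c - x.1 - x.2.1 - x.2.2.1 - x.2.2.2

/-- The squared length of the slice vector attached to a quadruple. -/
def quadSq (c : ℤ) (x : Quad) : ℤ :=
  x.1 * x.1 + x.2.1 * x.2.1 + x.2.2.1 * x.2.2.1 + x.2.2.2 * x.2.2.2 + quadLast c x * quadLast c x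

/-- The linear form determining the root of unity attached to a quadruple. -/
def quadRes (c : ℤ) (x : Quad) : ℤ := x.2.1 + 2 * x.2.2.1 + 3 * x.2.2.2 + 4 * quadLast c x

/-- The exponent attached to a quadruple. -/
def quadDeg (c : ℤ) (x : Quad) : ℕ := ((quadSq c x - c) / 2).toNat

/-- The parametrisation of a slice by quadruples. -/
def quadEquiv (c : ℤ) : Quad ≃ Slice c where
  toFun x := ⟨![x.1, x.2.1, x.2.2.1, x.2.2.2, quadLast c x], by
    simp [Fin.sum_univ_five, quadLast]⟩
  invFun a := (a.1 0, a.1 1, a.1 2, a.1 3)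
  left_inv x := rfl
  right_inv a := by
    have := a.2
    rw [Fin.sum_univ_five] at this
    ext i
    fin_cases i <;> simp [quadLast]
    linarith

lemma quadDeg_spec (c : ℤ) (x : Quad) : quadSq c x = c + 2 * quadDeg c x := by
  have key : ∀ a : ℤ, ∃ k : ℤ, 0 ≤ k ∧ a * a = a + 2 * k := fun a => by
    obtain ⟨k, hk⟩ := Int.even_mul_pred_self a
    refine ⟨k, ?_, by linarith⟩
    rcases le_or_gt a 0 with h | h <;> nlinarith
  obtain ⟨k1, h1, e1⟩ := key x.1
  obtain ⟨k2, h2, e2⟩ := key x.2.1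
  obtain ⟨k3, h3, e3⟩ := key x.2.2.1
  obtain ⟨k4, h4, e4⟩ := key x.2.2.2
  obtain ⟨k5, h5, e5⟩ := key (quadLast c x)
  have e : quadSq c x = c + 2 * (k1 + k2 + k3 + k4 + k5) := by
    rw [quadSq, e1, e2, e3, e4, e5]
    simp only [quadLast]
    ring
  rw [quadDeg, e, Int.toNat_of_nonneg (by omega)]
  omega

/-- The primitive fifth root of unity attached to the dilation `ρ`. -/
def root5 (ρ : ℕ) : ℂ := Complex.exp (2 * πC * I * (ρ / 5))

lemma root5_pow (ρ : ℕ) : root5 ρ ^ 5 = 1 := by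
  rw [root5, ← Complex.exp_nat_mul, ← exp_two_pi_I_mul ρ]
  congr 1
  push_cast
  ring

lemma root5_ne_zero (ρ : ℕ) : root5 ρ ≠ 0 := Complex.exp_ne_zero _

lemma sum_root5_pow {ρ : ℕ} (hρ : ¬ 5 ∣ ρ) : ∑ r ∈ range 5, root5 ρ ^ r = 0 := by
  have h1 : root5 ρ ≠ 1 := by
    intro h
    rw [root5, Complex.exp_eq_one_iff] at h
    obtain ⟨n, hn⟩ := h
    have h2 : (2 * Real.pi * I : ℂ) ≠ 0 := Complex.two_pi_I_ne_zero
    have h3 : (ρ : ℂ) = 5 * n := by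
      rw [πC] at hn
      have : (2 * Real.pi * I : ℂ) * ((ρ : ℂ) / 5) = (2 * Real.pi * I) * n := by rw [hn]; ring
      have := mul_left_cancel₀ h2 this
      rw [← this]; ring
    have h4 : (ρ : ℤ) = 5 * n := by exact_mod_cast h3
    exact hρ (by exact_mod_cast Dvd.intro n h4.symm)
  rw [geom_sum_eq h1, root5_pow, sub_self, zero_div]

lemma sliceTerm_quad (c : ℤ) (τ : ℂ) (ρ : ℕ) (x : Quad) :
    sliceTerm c τ (fun i => ρ * rootPt i) (quadEquiv c x).1 =
      Complex.exp (2 * πC * I * τ * (c * (5 - c) / 10)) *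
        (root5 ρ ^ quadRes c x * qExp τ ^ quadDeg c x) := by
  have hs := congrArg (Int.cast : ℤ → ℂ) (quadDeg_spec c x)
  have hv : (quadEquiv c x).1 = ![x.1, x.2.1, x.2.2.1, x.2.2.2, quadLast c x] := rfl
  rw [hv, sliceTerm, root5, qExp, ← Complex.exp_int_mul, ← Complex.exp_nat_mul, ← Complex.exp_add,
    ← Complex.exp_add]
  rw [Complex.exp_eq_exp_iff_exists_int]
  refine ⟨-(2 * ρ * quadLast c x), ?_⟩
  simp only [quadSq] at hs
  push_cast [quadRes] at hs ⊢
  simp [sliceExp, Fin.sum_univ_five, rootPt]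
  rw [← πC]
  linear_combination (πC * I * τ) * hs

/-- The power series underlying a slice theta series. -/
def quadSeries (c : ℤ) (w : Quad → ℤ) (ρ : ℕ) (u : ℂ) : ℂ :=
  ∑' x : Quad, (root5 ρ ^ quadRes c x * w x) * u ^ quadDeg c x

lemma sliceTheta_zero_eq (τ : ℂ) (ρ : ℕ) : sliceTheta 0 τ (fun i => ρ * rootPt i) =
    quadSeries 0 (fun _ => 1) ρ (qExp τ) := by
  rw [sliceTheta, ← (quadEquiv 0).tsum_eq, quadSeries]
  refine tsum_congr fun x => ?_
  rw [sliceTerm_quad]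
  simp

lemma sliceDeriv_eq (c : ℤ) (τ : ℂ) (ρ : ℕ) : sliceDeriv c τ ρ =
    Complex.exp (2 * πC * I * τ * (c * (5 - c) / 10)) *
      quadSeries c (fun x => x.1) ρ (qExp τ) := by
  rw [sliceDeriv, ← (quadEquiv c).tsum_eq, quadSeries, ← tsum_mul_left]
  refine tsum_congr fun x => ?_
  rw [sliceTerm_quad]
  have : (quadEquiv c x).1 0 = x.1 := rfl
  rw [this]
  ring

lemma norm_qExp_I : ‖qExp I‖ = Real.exp (-2 * Real.pi) := by
  rw [qExp, πC, Complex.norm_exp]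
  simp

lemma summable_quadSeries (c : ℤ) (w : Quad → ℤ) (ρ : ℕ)
    (h : Summable fun a : Slice c => sliceTerm c I (fun i => ρ * rootPt i) a.1 *
      w ((quadEquiv c).symm a)) :
    Summable fun x : Quad => ‖root5 ρ ^ quadRes c x * w x‖ * Real.exp (-2 * Real.pi) ^ quadDeg c x := by
  have h1 := ((quadEquiv c).summable_iff.2 h).norm
  have h2 := h1.mul_left ‖Complex.exp (2 * πC * I * I * (c * (5 - c) / 10))‖⁻¹
  refine h2.congr fun x => ?_
  have h3 : ‖Complex.exp (2 * πC * I * I * (c * (5 - c) / 10))‖ ≠ 0 :=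
    norm_ne_zero_iff.2 (Complex.exp_ne_zero _)
  simp only [Function.comp_apply, Equiv.symm_apply_apply, sliceTerm_quad, norm_mul, norm_pow,
    norm_qExp_I]
  field_simp

/-- The weighted count of slice vectors in a box with given length and residue. -/
def quadTab (b : Finset ℤ) (w : ℤ → ℤ) (c n r : ℤ) : ℤ :=
  ∑ x ∈ b, ∑ y ∈ b, ∑ z ∈ b, ∑ t ∈ b,
    if x * x + y * y + z * z + t * t + (c - x - y - z - t) * (c - x - y - z - t) = n then
      (if (y + 2 * z + 3 * t + 4 * (c - x - y - z - t)) % 5 = r then w x else 0) else 0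

lemma quadTab_eq (b : Finset ℤ) (w : ℤ → ℤ) (c n r : ℤ) : quadTab b w c n r =
    ∑ x ∈ b ×ˢ b ×ˢ b ×ˢ b, if quadSq c x = n then
      (if quadRes c x % 5 = r then w x.1 else 0) else 0 := by
  simp only [sum_product, quadTab, quadSq, quadRes, quadLast]
  rfl

lemma mem_box_of_quadSq_le {c lo hi : ℤ}
    (hb : ∀ a : ℤ, 5 * a ^ 2 - 2 * c * a + c ^ 2 ≤ 4 * c + 24 → lo ≤ a ∧ a ≤ hi) {x : Quad}
    (hx : quadSq c x ≤ c + 6) :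
    x ∈ Icc lo hi ×ˢ Icc lo hi ×ˢ Icc lo hi ×ˢ Icc lo hi := by
  obtain ⟨x, y, z, t⟩ := x
  simp only [quadSq] at hx
  have hl : c = x + y + z + t + quadLast c (x, y, z, t) := by simp only [quadLast]; ring
  generalize quadLast c (x, y, z, t) = v at hx hl
  subst hl
  simp only [mem_product, mem_Icc]
  refine ⟨hb x ?_, hb y ?_, hb z ?_, hb t ?_⟩
  · nlinarith [sq_nonneg (y - z), sq_nonneg (y - t), sq_nonneg (y - v), sq_nonneg (z - t),
      sq_nonneg (z - v), sq_nonneg (t - v)]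
  · nlinarith [sq_nonneg (x - z), sq_nonneg (x - t), sq_nonneg (x - v), sq_nonneg (z - t),
      sq_nonneg (z - v), sq_nonneg (t - v)]
  · nlinarith [sq_nonneg (x - y), sq_nonneg (x - t), sq_nonneg (x - v), sq_nonneg (y - t),
      sq_nonneg (y - v), sq_nonneg (t - v)]
  · nlinarith [sq_nonneg (x - y), sq_nonneg (x - z), sq_nonneg (x - v), sq_nonneg (y - z),
      sq_nonneg (y - v), sq_nonneg (z - v)]

lemma hasExp_quadSeries {c lo hi : ℤ}
    (hb : ∀ a : ℤ, 5 * a ^ 2 - 2 * c * a + c ^ 2 ≤ 4 * c + 24 → lo ≤ a ∧ a ≤ hi)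
    {w : ℤ → ℤ} {ρ : ℕ} (hρ : ¬ 5 ∣ ρ)
    (hs : Summable fun x : Quad =>
      ‖root5 ρ ^ quadRes c x * (w x.1 : ℤ)‖ * Real.exp (-2 * Real.pi) ^ quadDeg c x)
    {k : ℕ → ℤ} (hk : ∀ n ∈ range 4, ∀ r ∈ Icc 1 4,
      quadTab (Icc lo hi) w c (c + 2 * n) 0 - quadTab (Icc lo hi) w c (c + 2 * n) r = k n) :
    HasExp 4 (quadSeries c (fun x => w x.1) ρ) (fun u => ∑ n ∈ range 4, (k n : ℂ) * u ^ n) := by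
  set b := Icc lo hi ×ˢ Icc lo hi ×ˢ Icc lo hi ×ˢ Icc lo hi with hbdef
  have h := hasExp_tsum (fun x : Quad => root5 ρ ^ quadRes c x * (w x.1 : ℤ)) (quadDeg c)
    (Real.exp_pos _) hs 4 (b.filter fun x => quadDeg c x < 4) (fun x hx => by
      by_contra hlt
      push Not at hlt
      have := quadDeg_spec c x
      exact hx (mem_filter.2 ⟨mem_box_of_quadSq_le hb (by omega), hlt⟩))
  have e : ∀ u : ℂ, ∑ x ∈ b.filter (fun x => quadDeg c x < 4),
      (root5 ρ ^ quadRes c x * (w x.1 : ℤ)) * u ^ quadDeg c x =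
      ∑ n ∈ range 4, (k n : ℂ) * u ^ n := by
    intro u
    rw [← sum_fiberwise_of_maps_to (t := range 4) (g := quadDeg c)
      (fun x hx => mem_range.2 (mem_filter.1 hx).2)]
    refine sum_congr rfl fun n hn => ?_
    have h1 : ∑ x ∈ (b.filter fun x => quadDeg c x < 4).filter (fun x => quadDeg c x = n),
        root5 ρ ^ quadRes c x * (w x.1 : ℤ) * u ^ quadDeg c x =
        (∑ x ∈ b.filter (fun x => quadDeg c x = n), root5 ρ ^ quadRes c x * (w x.1 : ℤ)) * u ^ n := by
      rw [filter_filter, sum_mul]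
      have hn4 := mem_range.1 hn
      refine sum_congr (filter_congr fun x _ => ⟨fun h => h.2, fun h => ⟨h ▸ hn4, h⟩⟩) ?_
      intro x hx
      rw [(mem_filter.1 hx).2]
    rw [h1]
    congr 1
    have h2 : ∀ x : Quad, root5 ρ ^ quadRes c x = root5 ρ ^ (quadRes c x % 5).toNat := by
      intro x
      have h5 : root5 ρ ^ (5 : ℤ) = 1 := by exact_mod_cast root5_pow ρ
      conv_lhs => rw [← Int.emod_add_mul_ediv (quadRes c x) 5]
      rw [zpow_add₀ (root5_ne_zero ρ), zpow_mul, h5, one_zpow, mul_one]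
      conv_lhs => rw [← Int.toNat_of_nonneg (Int.emod_nonneg (quadRes c x) (by norm_num : (5 : ℤ) ≠ 0))]
      rw [zpow_natCast]
    rw [← sum_fiberwise_of_maps_to (t := range 5) (g := fun x => (quadRes c x % 5).toNat)
      (fun x _ => mem_range.2 (by omega))]
    have h3 : ∀ r ∈ range 5, ∑ x ∈ (b.filter fun x => quadDeg c x = n).filter
        (fun x => (quadRes c x % 5).toNat = r), root5 ρ ^ quadRes c x * (w x.1 : ℤ) =
        (quadTab (Icc lo hi) w c (c + 2 * n) r : ℂ) * root5 ρ ^ r := by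
      intro r hr
      rw [quadTab_eq, filter_filter, sum_filter]
      push_cast
      rw [sum_mul]
      refine sum_congr rfl fun x _ => ?_
      have hd := quadDeg_spec c x
      have hr5 := mem_range.1 hr
      by_cases hx : quadDeg c x = n
      · by_cases hxr : quadRes c x % 5 = r
        · rw [if_pos ⟨hx, by omega⟩, if_pos (by omega), if_pos hxr, h2, hxr, Int.toNat_natCast]
          ring
        · rw [if_neg (by omega), if_pos (by omega), if_neg hxr, zero_mul]
      · rw [if_neg (by omega), if_neg (by omega), zero_mul]
    rw [sum_congr rfl h3]
    have hsum := sum_root5_pow hρ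
    have h4 : ∀ r ∈ Icc (1 : ℤ) 4, (quadTab (Icc lo hi) w c (c + 2 * n) 0 : ℂ) -
        (quadTab (Icc lo hi) w c (c + 2 * n) r : ℂ) = k n := fun r hr => by
      exact_mod_cast hk n hn r hr
    have e1 := h4 1 (by decide)
    have e2 := h4 2 (by decide)
    have e3 := h4 3 (by decide)
    have e4 := h4 4 (by decide)
    simp only [sum_range_succ, range_zero, sum_empty, zero_add] at hsum ⊢
    push_cast at e1 e2 e3 e4 ⊢
    linear_combination (quadTab (Icc lo hi) w c (c + 2 * n) 0 - k n : ℂ) * hsum -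
      root5 ρ ^ 1 * e1 - root5 ρ ^ 2 * e2 - root5 ρ ^ 3 * e3 - root5 ρ ^ 4 * e4
  exact ⟨by simpa only [e, quadSeries] using h.1, by fun_prop⟩

set_option maxRecDepth 100000 in
lemma quadTab_zero : ∀ n ∈ range 4, ∀ r ∈ Icc 1 4,
    quadTab (Icc (-2) 2) (fun _ => 1) 0 (0 + 2 * n) 0 -
    quadTab (Icc (-2) 2) (fun _ => 1) 0 (0 + 2 * n) r = [1, -5, 5, 10].getD n 0 := by
  decide +kernel

set_option maxRecDepth 100000 in
lemma quadTab_one : ∀ n ∈ range 4, ∀ r ∈ Icc 1 4,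
    quadTab (Icc (-2) 2) (fun x => x) 1 (1 + 2 * n) 0 -
    quadTab (Icc (-2) 2) (fun x => x) 1 (1 + 2 * n) r = [1, -4, 1, 11].getD n 0 := by
  decide +kernel

set_option maxRecDepth 100000 in
lemma quadTab_two : ∀ n ∈ range 4, ∀ r ∈ Icc 1 4,
    quadTab (Icc (-2) 2) (fun x => x) 2 (2 + 2 * n) 0 -
    quadTab (Icc (-2) 2) (fun x => x) 2 (2 + 2 * n) r = [-1, 5, -6, -6].getD n 0 := by
  decide +kernel

set_option maxRecDepth 100000 in
lemma quadTab_three : ∀ n ∈ range 4, ∀ r ∈ Icc 1 4,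
    quadTab (Icc (-1) 3) (fun x => x) 3 (3 + 2 * n) 0 -
    quadTab (Icc (-1) 3) (fun x => x) 3 (3 + 2 * n) r = [1, -5, 6, 6].getD n 0 := by
  decide +kernel

set_option maxRecDepth 100000 in
lemma quadTab_four : ∀ n ∈ range 4, ∀ r ∈ Icc 1 4,
    quadTab (Icc (-1) 3) (fun x => x) 4 (4 + 2 * n) 0 -
    quadTab (Icc (-1) 3) (fun x => x) 4 (4 + 2 * n) r = [-1, 4, -1, -11].getD n 0 := by
  decide +kernel

lemma summable_quadSeries_one (ρ : ℕ) : Summable fun x : Quad =>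
    ‖root5 ρ ^ quadRes 0 x * ((fun _ => 1 : ℤ → ℤ) x.1 : ℤ)‖ *
      Real.exp (-2 * Real.pi) ^ quadDeg 0 x := by
  refine summable_quadSeries 0 (fun _ => 1) ρ ?_
  simpa using (summable_norm_sliceTerm (τ := I) (by simp) 0 0 (fun i => ρ * rootPt i)).of_norm

lemma summable_quadSeries_fst (c : ℤ) (ρ : ℕ) : Summable fun x : Quad =>
    ‖root5 ρ ^ quadRes c x * ((fun y => y : ℤ → ℤ) x.1 : ℤ)‖ *
      Real.exp (-2 * Real.pi) ^ quadDeg c x :=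
  summable_quadSeries c (fun x => x.1) ρ
    (summable_sliceTerm_mul_coord (τ := I) (by simp) c (fun i => ρ * rootPt i) 0)

/-- The product of the derivative series of a slice and the theta series of the zero slice. -/
def sliceProd (c : ℤ) (ρ : ℕ) (u : ℂ) : ℂ :=
  quadSeries c (fun x => x.1) ρ u * quadSeries 0 (fun _ => 1) ρ u

section

variable {ρ : ℕ}

lemma hasExp_quadSeries_zero (hρ : ¬ 5 ∣ ρ) : HasExp 4 (quadSeries 0 (fun _ => 1) ρ)
    (fun u => 1 - 5 * u + 5 * u ^ 2 + 10 * u ^ 3) := by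
  refine (hasExp_quadSeries (lo := -2) (hi := 2) (fun a h => ⟨by nlinarith, by nlinarith⟩)
    (w := fun _ => 1) hρ
    (summable_quadSeries_one ρ)
    (k := fun n => [1, -5, 5, 10].getD n 0) quadTab_zero).congr 0 continuousAt_const fun u => ?_
  simp [sum_range_succ]
  ring

lemma hasExp_sliceProd_one (hρ : ¬ 5 ∣ ρ) : HasExp 4 (sliceProd 1 ρ)
    (fun u => 1 - 9 * u + 26 * u ^ 2 - 4 * u ^ 3) := by
  refine ((hasExp_quadSeries (lo := -2) (hi := 2) (fun a h => ⟨by nlinarith, by nlinarith⟩)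
    (w := fun x => x) hρ
    (summable_quadSeries_fst 1 ρ)
    (k := fun n => [1, -4, 1, 11].getD n 0) quadTab_one).mul (hasExp_quadSeries_zero hρ)).congr
    (fun u => -90 + 65 * u + 110 * u ^ 2) (by fun_prop) fun u => ?_
  simp [sum_range_succ]
  ring

lemma hasExp_sliceProd_two (hρ : ¬ 5 ∣ ρ) : HasExp 4 (sliceProd 2 ρ)
    (fun u => -1 + 10 * u - 36 * u ^ 2 + 39 * u ^ 3) := by
  refine ((hasExp_quadSeries (lo := -2) (hi := 2) (fun a h => ⟨by nlinarith, by nlinarith⟩)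
    (w := fun x => x) hρ
    (summable_quadSeries_fst 2 ρ)
    (k := fun n => [-1, 5, -6, -6].getD n 0) quadTab_two).mul (hasExp_quadSeries_zero hρ)).congr
    (fun u => 50 - 90 * u - 60 * u ^ 2) (by fun_prop) fun u => ?_
  simp [sum_range_succ]
  ring

lemma hasExp_sliceProd_three (hρ : ¬ 5 ∣ ρ) : HasExp 4 (sliceProd 3 ρ)
    (fun u => 1 - 10 * u + 36 * u ^ 2 - 39 * u ^ 3) := by
  refine ((hasExp_quadSeries (lo := -1) (hi := 3) (fun a h => ⟨by nlinarith, by nlinarith⟩)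
    (w := fun x => x) hρ
    (summable_quadSeries_fst 3 ρ)
    (k := fun n => [1, -5, 6, 6].getD n 0) quadTab_three).mul (hasExp_quadSeries_zero hρ)).congr
    (fun u => -50 + 90 * u + 60 * u ^ 2) (by fun_prop) fun u => ?_
  simp [sum_range_succ]
  ring

lemma hasExp_sliceProd_four (hρ : ¬ 5 ∣ ρ) : HasExp 4 (sliceProd 4 ρ)
    (fun u => -1 + 9 * u - 26 * u ^ 2 + 4 * u ^ 3) := by
  refine ((hasExp_quadSeries (lo := -1) (hi := 3) (fun a h => ⟨by nlinarith, by nlinarith⟩)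
    (w := fun x => x) hρ
    (summable_quadSeries_fst 4 ρ)
    (k := fun n => [-1, 4, -1, -11].getD n 0) quadTab_four).mul (hasExp_quadSeries_zero hρ)).congr
    (fun u => 90 - 65 * u - 110 * u ^ 2) (by fun_prop) fun u => ?_
  simp [sum_range_succ]
  ring

end

/-! ### Expansions of the theta constants -/

/-- The theta series `∑ u ^ (n ^ 2)`. -/
def thetaSq (u : ℂ) : ℂ := ∑' n : ℤ, 1 * u ^ (n ^ 2).toNat

/-- The theta series `∑ u ^ (n ^ 2 - n)`. -/
def thetaTri (u : ℂ) : ℂ := ∑' n : ℤ, 1 * u ^ (n ^ 2 - n).toNat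

lemma summable_half_pow_natAbs : Summable fun n : ℤ => (1 / 2 : ℝ) ^ n.natAbs := by
  refine Summable.of_nat_of_neg ?_ ?_ <;> simpa using summable_geometric_two

lemma hasExp_thetaSq : HasExp 4 thetaSq (fun u => 1 + 2 * u) := by
  have hs : Summable fun n : ℤ => ‖(1 : ℂ)‖ * (1 / 2 : ℝ) ^ (n ^ 2).toNat := by
    refine Summable.of_nonneg_of_le (fun n => by positivity) (fun n => ?_) summable_half_pow_natAbs
    rw [norm_one, one_mul]
    refine pow_le_pow_of_le_one (by norm_num) (by norm_num) ?_
    have : (n.natAbs : ℤ) ≤ n ^ 2 := by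
      rw [Int.natCast_natAbs]
      rcases abs_cases n with ⟨h, h'⟩ | ⟨h, h'⟩ <;> rw [h] <;> nlinarith
    omega
  refine (hasExp_tsum (fun _ : ℤ => (1 : ℂ)) (fun n => (n ^ 2).toNat) (by norm_num) hs 4 {-1, 0, 1}
    (fun n hn => ?_)).congr 0 continuousAt_const fun u => ?_
  · simp only [mem_insert, mem_singleton, not_or] at hn
    have : 4 ≤ n ^ 2 := by
      rcases lt_or_ge n 0 with h | h
      · have : n ≤ -2 := by omega
        nlinarith
      · have : 2 ≤ n := by omega
        nlinarith
    omega
  · simp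
    ring

lemma hasExp_thetaTri : HasExp 2 thetaTri (fun _ => 2) := by
  have hs : Summable fun n : ℤ => ‖(1 : ℂ)‖ * (1 / 2 : ℝ) ^ (n ^ 2 - n).toNat := by
    refine Summable.of_nonneg_of_le (fun n => by positivity) (fun n => ?_)
      (summable_half_pow_natAbs.mul_left 2)
    have h1 : n.natAbs ≤ (n ^ 2 - n).toNat + 1 := by
      have : (n.natAbs : ℤ) ≤ n ^ 2 - n + 1 := by
        rw [Int.natCast_natAbs]
        rcases abs_cases n with ⟨h, h'⟩ | ⟨h, h'⟩ <;> rw [h] <;> nlinarith [sq_nonneg (n - 1)]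
      omega
    have h2 := pow_le_pow_of_le_one (by norm_num : (0 : ℝ) ≤ 1 / 2) (by norm_num) h1
    rw [pow_succ] at h2
    rw [norm_one]
    linarith
  refine (hasExp_tsum (fun _ : ℤ => (1 : ℂ)) (fun n => (n ^ 2 - n).toNat) (by norm_num) hs 2 {0, 1}
    (fun n hn => ?_)).congr 0 continuousAt_const fun u => ?_
  · simp only [mem_insert, mem_singleton, not_or] at hn
    have : 2 ≤ n ^ 2 - n := by
      rcases lt_or_ge n 0 with h | h
      · have : n ≤ -1 := by omega
        nlinarith
      · have : 2 ≤ n := by omega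
        nlinarith
    omega
  · simp
    norm_num

lemma th3_zero_eq (τ : ℂ) : th3 0 τ = thetaSq (qExp (τ / 2)) := by
  rw [th3, thetaSq]
  refine tsum_congr fun n => ?_
  have h : (((n ^ 2).toNat : ℤ) : ℂ) = (n : ℂ) ^ 2 := by
    rw [Int.toNat_of_nonneg (sq_nonneg n)]; push_cast; rfl
  rw [qExp, ← Complex.exp_nat_mul, mul_zero, zero_mul, Complex.exp_zero]
  congr 2
  rw [← h]
  push_cast
  ring

lemma th2_zero_eq (τ : ℂ) :
    th2 0 τ = Complex.exp (πC * I * τ / 4) * thetaTri (qExp (τ / 2)) := by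
  rw [th2, thetaTri, ← tsum_mul_left]
  refine tsum_congr fun n => ?_
  have h0 : 0 ≤ n ^ 2 - n := by
    rcases le_or_gt n 0 with h | h <;> nlinarith
  have h : (((n ^ 2 - n).toNat : ℤ) : ℂ) = (n : ℂ) ^ 2 - n := by
    rw [Int.toNat_of_nonneg h0]; push_cast; rfl
  rw [qExp, ← Complex.exp_nat_mul, mul_zero, zero_mul, Complex.exp_zero, one_mul, one_mul,
    ← Complex.exp_add]
  congr 1
  rw [Int.cast_natCast] at h
  rw [h]
  ring

lemma th4_zero_eq (τ : ℂ) : th4 0 τ = thetaSq (-qExp (τ / 2)) := by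
  rw [th4, thetaSq]
  refine tsum_congr fun n => ?_
  have h : (((n ^ 2).toNat : ℤ) : ℂ) = (n : ℂ) ^ 2 := by
    rw [Int.toNat_of_nonneg (sq_nonneg n)]; push_cast; rfl
  have hsgn : (-1 : ℂ) ^ n = (-1 : ℂ) ^ (n ^ 2).toNat := by
    rw [← zpow_natCast, Int.toNat_of_nonneg (sq_nonneg n)]
    rcases Int.even_or_odd n with he | ho
    · rw [he.neg_one_zpow, (he.pow_of_ne_zero two_ne_zero).neg_one_zpow]
    · rw [ho.neg_one_zpow, ho.pow.neg_one_zpow]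
  rw [neg_pow, ← hsgn, qExp, ← Complex.exp_nat_mul, mul_zero, zero_mul, Complex.exp_zero, mul_one,
    one_mul]
  congr 2
  rw [Int.cast_natCast] at h
  rw [h]
  ring

/-- The expansion of the form `h0`. -/
def hSer (u : ℂ) : ℂ := thetaSq u * thetaSq (u ^ 3) + u * (thetaTri u * thetaTri (u ^ 3))

lemma h0_eq (τ : ℂ) : h0 τ = hSer (qExp τ) := by
  have h3 : qExp (6 * τ / 2) = qExp τ ^ 3 := by
    rw [qExp, qExp, ← Complex.exp_nat_mul]; congr 1; push_cast; ring
  have he : Complex.exp (πC * I * (2 * τ) / 4) * Complex.exp (πC * I * (6 * τ) / 4) = qExp τ := by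
    rw [qExp, ← Complex.exp_add]; congr 1; ring
  rw [h0, th3_zero_eq, th3_zero_eq, th2_zero_eq, th2_zero_eq, h3, mul_div_cancel_left₀ τ two_ne_zero,
    hSer, ← he]
  ring

lemma hasExp_hSer : HasExp 3 hSer (fun u => 1 + 6 * u) := by
  have h1 := (hasExp_thetaSq.mono (by norm_num : 3 ≤ 4)).mul
    ((hasExp_thetaSq.comp_pow (k := 3) (by norm_num)).mono (by norm_num : 3 ≤ 12))
  have h2 := hasExp_thetaTri.mul
    ((hasExp_thetaTri.comp_pow (k := 3) (by norm_num)).mono (by norm_num : 2 ≤ 6))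
  have h3 := h1.add h2.mul_var
  exact h3.congr (fun u => 2 + 4 * u) (by fun_prop) fun u => by ring

/-- The weight attached to the half-period values `ee2`, `ee3`. -/
def eSer (u : ℂ) : ℂ := -(1 / 12) * (thetaSq u ^ 4 + u * thetaTri u ^ 4)

lemma hasExp_eSer : HasExp 2 eSer (fun u => -(1 / 12) - 2 * u) := by
  have h1 := (hasExp_thetaSq.mono (by norm_num : 2 ≤ 4)).pow 4
  have h2 := ((hasExp_thetaTri.pow 4).mul_var).mono (by norm_num : 2 ≤ 3)
  refine ((h1.add h2).const_mul (-(1 / 12))).congr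
    (fun u => -(1 / 12) * (24 + 32 * u + 16 * u ^ 2)) (by fun_prop) fun u => by ring

lemma thetaTri_neg (u : ℂ) : thetaTri (-u) = thetaTri u := by
  refine tsum_congr fun n => ?_
  have h0 : 0 ≤ n ^ 2 - n := by
    rcases le_or_gt n 0 with h | h <;> nlinarith
  have : Even (n ^ 2 - n).toNat := by
    have h := Int.even_mul_pred_self n
    rw [show n * (n - 1) = n ^ 2 - n by ring, ← Int.toNat_of_nonneg h0] at h
    exact_mod_cast h
  rw [this.neg_pow]

lemma exp_quarter_pow (τ : ℂ) : Complex.exp (πC * I * τ / 4) ^ 4 = qExp (τ / 2) := by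
  rw [qExp, ← Complex.exp_nat_mul]; congr 1; push_cast; ring

lemma ee3_eq (τ : ℂ) : ee3 τ = eSer (qExp (τ / 2)) := by
  rw [ee3, th2_zero_eq, th3_zero_eq, mul_pow, exp_quarter_pow, eSer]
  ring

lemma qExp_add_half (τ : ℂ) : qExp ((τ + 1) / 2) = -qExp (τ / 2) := by
  rw [qExp, qExp, show 2 * πC * I * ((τ + 1) / 2) = 2 * πC * I * (τ / 2) + Real.pi * I by
    rw [πC]; ring, Complex.exp_add, Complex.exp_pi_mul_I]
  ring

lemma ee2_eq (τ : ℂ) : ee2 τ = eSer (qExp ((τ + 1) / 2)) := by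
  rw [ee2, th2_zero_eq, th4_zero_eq, mul_pow, exp_quarter_pow, eSer, qExp_add_half, thetaTri_neg]
  ring

lemma th2_pow_four (τ : ℂ) : th2 0 (τ / 2) ^ 4 = qExp (τ / 4) * thetaTri (qExp (τ / 4)) ^ 4 := by
  rw [th2_zero_eq, mul_pow, exp_quarter_pow, div_div]
  norm_num

/-- A Fourier coefficient of a rescaled theta function, in terms of the slice with residue `κ`. -/
def genCoef (α : ℂ) (κ d ρ l : ℕ) (τ : ℂ) : ℂ :=
  ρ * Complex.exp (2 * πC * I * (l * α)) *
    Complex.exp (2 * πC * I * ((ρ * τ + l) / d) * (κ * (5 - κ) / 10)) *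
      sliceProd κ ρ (qExp ((ρ * τ + l) / d))

lemma coefA_eq (d ρ l : ℕ) (τ : ℂ) : coefA d ρ l τ = genCoef (3 * d / 5) (d % 5) d ρ l τ := by
  rw [coefA, genCoef, sliceDeriv_eq, sliceTheta_zero_eq, sliceProd, mul_assoc (ρ : ℂ),
    ← Complex.exp_add]
  have : 4 / 5 * πC * I * (d * l) + 2 * πC * I * (l * d / 5) =
      2 * πC * I * (l * (3 * d / 5)) := by ring
  rw [this]
  simp only [Int.cast_natCast]
  ring

lemma coefB_eq (d ρ l : ℕ) (τ : ℂ) : coefB d ρ l τ = genCoef (2 * d / 5) (3 * d % 5) d ρ l τ := by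
  rw [coefB, genCoef, sliceDeriv_eq, sliceTheta_zero_eq, sliceProd]
  have : 4 / 5 * πC * I * (d * l) = 2 * πC * I * (l * (2 * d / 5)) := by ring
  rw [this]
  simp only [Int.cast_natCast]
  ring

/-- The normalizing factor `exp (2 π s T)`. -/
def grow (s T : ℝ) : ℂ := Complex.exp (2 * πC * (s * T))

lemma grow_zero (T : ℝ) : grow 0 T = 1 := by simp [grow]

lemma tendsto_grow {s : ℝ} (hs : s < 0) : Tendsto (grow s) atTop (𝓝 0) := by
  rw [tendsto_zero_iff_norm_tendsto_zero]
  have h : ∀ T, ‖grow s T‖ = Real.exp (2 * Real.pi * s * T) := fun T => by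
    rw [grow, Complex.norm_exp, πC]
    congr 1
    norm_cast
    ring
  simp only [h]
  refine Real.tendsto_exp_atBot.comp ?_
  exact tendsto_id.const_mul_atTop_of_neg (by nlinarith [Real.pi_pos])

lemma qExp_rescaled (d ρ : ℕ) (l : ℂ) (T : ℝ) : qExp ((ρ * (I * T) + l) / d) =
    Complex.exp (2 * πC * I * (l / d)) * grow (-(ρ / d)) T := by
  rw [qExp, grow, ← Complex.exp_add]
  congr 1
  push_cast
  linear_combination (2 * πC * ρ * T / d) * I_mul_I

lemma tendsto_qExp_rescaled {d ρ : ℕ} (hd : d ≠ 0) (hρ : ρ ≠ 0) (l : ℂ) :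
    Tendsto (fun T : ℝ => qExp ((ρ * (I * T) + l) / d)) atTop (𝓝[≠] 0) := by
  refine tendsto_nhdsWithin_iff.2 ⟨?_, Eventually.of_forall fun T => Complex.exp_ne_zero _⟩
  simp only [qExp_rescaled]
  have h : (-(ρ / d) : ℝ) < 0 := by
    rw [neg_lt_zero]
    positivity
  simpa using (tendsto_grow h).const_mul (Complex.exp (2 * πC * I * (l / d)))

lemma grow_mul_genCoef (α : ℂ) (κ d ρ l : ℕ) (s T : ℝ) : grow s T * genCoef α κ d ρ l (I * T) =
    grow (s - ρ * (κ * (5 - κ) / 10) / d) T *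
      (ρ * Complex.exp (2 * πC * I * (l * (α + κ * (5 - κ) / 10 / d))) *
        sliceProd κ ρ (qExp ((ρ * (I * T) + l) / d))) := by
  have h : grow s T * Complex.exp (2 * πC * I * (l * α)) *
      Complex.exp (2 * πC * I * ((ρ * (I * T) + l) / d) * (κ * (5 - κ) / 10)) =
      grow (s - ρ * (κ * (5 - κ) / 10) / d) T *
        Complex.exp (2 * πC * I * (l * (α + κ * (5 - κ) / 10 / d))) := by
    rw [grow, grow, ← Complex.exp_add, ← Complex.exp_add, ← Complex.exp_add]
    congr 1
    push_cast
    linear_combination (2 * πC * ρ * T / d * (κ * (5 - κ) / 10)) * I_mul_I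
  rw [genCoef]
  linear_combination (ρ * sliceProd κ ρ (qExp ((ρ * (I * T) + l) / d))) * h

lemma tendsto_genCoef {α : ℂ} {κ d ρ : ℕ} (l : ℕ) {s : ℝ} {N : ℕ} {p : ℂ → ℂ}
    (hd : d ≠ 0) (hρ : ρ ≠ 0) (hN : N ≠ 0) (h : HasExp N (sliceProd κ ρ) p)
    (hs : s = ρ * (κ * (5 - κ) / 10) / d) :
    Tendsto (fun T : ℝ => grow s T * genCoef α κ d ρ l (I * T)) atTop
      (𝓝 (ρ * Complex.exp (2 * πC * I * (l * (α + κ * (5 - κ) / 10 / d))) * p 0)) := by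
  simp only [grow_mul_genCoef, hs, sub_self, grow_zero, one_mul]
  exact (((h.tendsto hN).mono_left nhdsWithin_le_nhds).comp
    (tendsto_qExp_rescaled hd hρ l)).const_mul _

lemma tendsto_genCoef_zero {α : ℂ} {κ d ρ : ℕ} (l : ℕ) {s : ℝ} {N : ℕ} {p : ℂ → ℂ}
    (hd : d ≠ 0) (hρ : ρ ≠ 0) (hN : N ≠ 0) (h : HasExp N (sliceProd κ ρ) p)
    (hs : s < ρ * (κ * (5 - κ) / 10) / d) :
    Tendsto (fun T : ℝ => grow s T * genCoef α κ d ρ l (I * T)) atTop (𝓝 0) := by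
  simp only [grow_mul_genCoef]
  have := (tendsto_grow (sub_neg.2 hs)).mul ((((h.tendsto hN).mono_left nhdsWithin_le_nhds).comp
    (tendsto_qExp_rescaled hd hρ l)).const_mul
      (ρ * Complex.exp (2 * πC * I * (l * (α + κ * (5 - κ) / 10 / d)))))
  simpa using this

lemma tendsto_sum_genCoef {α : ℂ} {κ d ρ a : ℕ} {s : ℝ} {W : ℂ → ℂ} {c : ℕ → ℂ}
    (had : a < d) (hs : s = (ρ * (κ * (5 - κ) / 10) + a) / d)
    (hα : ∃ n : ℤ, ρ * α + s = n)
    (h : HasExp (a + 1) (fun u => W u * sliceProd κ ρ (u ^ ρ))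
      (fun u => ∑ n ∈ range (a + 1), c n * u ^ n)) :
    Tendsto (fun T : ℝ => grow s T * ∑ k ∈ range d, W (qExp ((I * T + k) / d)) *
      genCoef α κ d ρ (ρ * k) (I * T)) atTop (𝓝 (ρ * (d * c a))) := by
  have hd : d ≠ 0 := by omega
  have hdC : (d : ℂ) ≠ 0 := by exact_mod_cast hd
  have hζ := Complex.isPrimitiveRoot_exp d hd
  set ζ := Complex.exp (2 * Real.pi * I / d) with hζd
  have hu : Tendsto (fun T : ℝ => qExp ((I * T) / d)) atTop (𝓝[≠] 0) := by
    simpa using tendsto_qExp_rescaled hd one_ne_zero 0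
  refine (((h.tendsto_filter had hζ).comp hu).const_mul (ρ : ℂ)).congr fun T => ?_
  have hu0 : qExp ((I * T) / d) ≠ 0 := Complex.exp_ne_zero _
  have hζ0 : ζ ≠ 0 := Complex.exp_ne_zero _
  obtain ⟨n, hn⟩ := hα
  simp only [Function.comp]
  rw [sum_div, mul_sum, mul_sum]
  refine sum_congr rfl fun k _ => ?_
  have e1 : ζ ^ k * qExp ((I * T) / d) = qExp ((I * T + k) / d) := by
    rw [hζd, qExp, qExp, ← Complex.exp_nat_mul, ← Complex.exp_add, πC]
    ring_nf
  have e2 : qExp ((ρ * (I * T) + (ρ * k : ℕ)) / d) = qExp ((I * T + k) / d) ^ ρ := by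
    rw [qExp, qExp, ← Complex.exp_nat_mul]
    push_cast
    ring_nf
  have e3 : grow (s - ρ * (κ * (5 - κ) / 10) / d) T *
      Complex.exp (2 * πC * I * ((ρ * k : ℕ) * (α + κ * (5 - κ) / 10 / d))) *
        (ζ ^ (a * k) * qExp ((I * T) / d) ^ a) = 1 := by
    rw [hζd, qExp, grow, ← Complex.exp_nat_mul, ← Complex.exp_nat_mul, ← Complex.exp_add,
      ← Complex.exp_add, ← Complex.exp_add, ← exp_two_pi_I_mul (k * n)]
    have hs' : (s : ℂ) = (ρ * (κ * (5 - κ) / 10) + a) / d := by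
      rw [hs]
      push_cast
      ring
    congr 1
    push_cast
    rw [← hn, hs', πC]
    field_simp
    linear_combination (10 * a * T : ℂ) * I_sq
  rw [e1, mul_left_comm (grow s T), grow_mul_genCoef, e2]
  generalize grow (s - ρ * (κ * (5 - κ) / 10) / d) T = x at e3 ⊢
  generalize Complex.exp (2 * πC * I * ((ρ * k : ℕ) * (α + κ * (5 - κ) / 10 / d))) = y at e3 ⊢
  have e4 : x * y = (ζ ^ (a * k) * qExp ((I * T) / d) ^ a)⁻¹ := eq_inv_of_mul_eq_one_left e3
  rw [mul_inv] at e4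
  linear_combination (-(W (qExp ((I * T + k) / d)) * ρ *
    sliceProd κ ρ (qExp ((I * T + k) / d) ^ ρ))) * e4

lemma tendsto_sum_genCoef_of_hasExp {α : ℂ} {κ d ρ a : ℕ} {s : ℝ} {W w p r : ℂ → ℂ} {c : List ℂ}
    {L : ℂ} (had : a < d) (hs : s = (ρ * (κ * (5 - κ) / 10) + a) / d)
    (hα : ∃ n : ℤ, ρ * α + s = n) (hW : HasExp (a + 1) W w) (hS : HasExp 4 (sliceProd κ ρ) p)
    (hρ : ρ ≠ 0 ∧ a < ρ * 4) (hr : ContinuousAt r 0)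
    (hq : ∀ u, w u * p (u ^ ρ) =
      (∑ n ∈ range (a + 1), c.getD n 0 * u ^ n) + u ^ (a + 1) * r u)
    (hL : ρ * (d * c.getD a 0) = L) :
    Tendsto (fun T : ℝ => grow s T * ∑ k ∈ range d, W (qExp ((I * T + k) / d)) *
      genCoef α κ d ρ (ρ * k) (I * T)) atTop (𝓝 L) := by
  rw [← hL]
  refine tendsto_sum_genCoef (c := fun n => c.getD n 0) had hs hα ?_
  exact (hW.mul ((hS.comp_pow hρ.1).mono hρ.2)).congr r hr hq

lemma tendsto_sum_coefA {κ d ρ a : ℕ} {s : ℝ} {W w p r : ℂ → ℂ} {c : List ℂ} {L : ℂ}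
    (hκ : d % 5 = κ) (had : a < d) (hs : s = (ρ * (κ * (5 - κ) / 10) + a) / d)
    (hα : ∃ n : ℤ, (ρ * (3 * d / 5) + s : ℂ) = n) (hW : HasExp (a + 1) W w)
    (hS : HasExp 4 (sliceProd κ ρ) p) (hρ : ρ ≠ 0 ∧ a < ρ * 4) (hr : ContinuousAt r 0)
    (hq : ∀ u, w u * p (u ^ ρ) =
      (∑ n ∈ range (a + 1), c.getD n 0 * u ^ n) + u ^ (a + 1) * r u)
    (hL : ρ * (d * c.getD a 0) = L) :
    Tendsto (fun T : ℝ => grow s T * ∑ k ∈ range d, W (qExp ((I * T + k) / d)) *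
      coefA d ρ (ρ * k) (I * T)) atTop (𝓝 L) := by
  subst hκ
  simp only [coefA_eq]
  exact tendsto_sum_genCoef_of_hasExp had hs hα hW hS hρ hr hq hL

lemma tendsto_sum_coefB {κ d ρ a : ℕ} {s : ℝ} {W w p r : ℂ → ℂ} {c : List ℂ} {L : ℂ}
    (hκ : 3 * d % 5 = κ) (had : a < d) (hs : s = (ρ * (κ * (5 - κ) / 10) + a) / d)
    (hα : ∃ n : ℤ, (ρ * (2 * d / 5) + s : ℂ) = n) (hW : HasExp (a + 1) W w)
    (hS : HasExp 4 (sliceProd κ ρ) p) (hρ : ρ ≠ 0 ∧ a < ρ * 4) (hr : ContinuousAt r 0)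
    (hq : ∀ u, w u * p (u ^ ρ) =
      (∑ n ∈ range (a + 1), c.getD n 0 * u ^ n) + u ^ (a + 1) * r u)
    (hL : ρ * (d * c.getD a 0) = L) :
    Tendsto (fun T : ℝ => grow s T * ∑ k ∈ range d, W (qExp ((I * T + k) / d)) *
      coefB d ρ (ρ * k) (I * T)) atTop (𝓝 L) := by
  subst hκ
  simp only [coefB_eq]
  exact tendsto_sum_genCoef_of_hasExp had hs hα hW hS hρ hr hq hL

lemma tendsto_coefA {κ d ρ : ℕ} (l : ℕ) {s : ℝ} {p : ℂ → ℂ} {L : ℂ} (hκ : d % 5 = κ)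
    (h0 : d ≠ 0 ∧ ρ ≠ 0) (h : HasExp 4 (sliceProd κ ρ) p) (hs : s = ρ * (κ * (5 - κ) / 10) / d)
    (hL : ρ * Complex.exp (2 * πC * I * (l * (3 * d / 5 + κ * (5 - κ) / 10 / d))) * p 0 = L) :
    Tendsto (fun T : ℝ => grow s T * coefA d ρ l (I * T)) atTop (𝓝 L) := by
  subst hκ
  simp only [coefA_eq]
  exact hL ▸ tendsto_genCoef l h0.1 h0.2 four_ne_zero h hs

lemma tendsto_coefB {κ d ρ : ℕ} (l : ℕ) {s : ℝ} {p : ℂ → ℂ} {L : ℂ} (hκ : 3 * d % 5 = κ)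
    (h0 : d ≠ 0 ∧ ρ ≠ 0) (h : HasExp 4 (sliceProd κ ρ) p) (hs : s = ρ * (κ * (5 - κ) / 10) / d)
    (hL : ρ * Complex.exp (2 * πC * I * (l * (2 * d / 5 + κ * (5 - κ) / 10 / d))) * p 0 = L) :
    Tendsto (fun T : ℝ => grow s T * coefB d ρ l (I * T)) atTop (𝓝 L) := by
  subst hκ
  simp only [coefB_eq]
  exact hL ▸ tendsto_genCoef l h0.1 h0.2 four_ne_zero h hs

lemma tendsto_coefA_zero {κ d ρ : ℕ} (l : ℕ) {s : ℝ} {p : ℂ → ℂ} (hκ : d % 5 = κ)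
    (h0 : d ≠ 0 ∧ ρ ≠ 0) (h : HasExp 4 (sliceProd κ ρ) p) (hs : s < ρ * (κ * (5 - κ) / 10) / d) :
    Tendsto (fun T : ℝ => grow s T * coefA d ρ l (I * T)) atTop (𝓝 0) := by
  subst hκ
  simp only [coefA_eq]
  exact tendsto_genCoef_zero l h0.1 h0.2 four_ne_zero h hs

lemma tendsto_coefB_zero {κ d ρ : ℕ} (l : ℕ) {s : ℝ} {p : ℂ → ℂ} (hκ : 3 * d % 5 = κ)
    (h0 : d ≠ 0 ∧ ρ ≠ 0) (h : HasExp 4 (sliceProd κ ρ) p) (hs : s < ρ * (κ * (5 - κ) / 10) / d) :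
    Tendsto (fun T : ℝ => grow s T * coefB d ρ l (I * T)) atTop (𝓝 0) := by
  subst hκ
  simp only [coefB_eq]
  exact tendsto_genCoef_zero l h0.1 h0.2 four_ne_zero h hs

/-- The weight `hSer u ^ 2`. -/
def hWt (u : ℂ) : ℂ := hSer u ^ 2

/-- The weight `hSer (u ^ 2) ^ 2`. -/
def hWtSq (u : ℂ) : ℂ := hSer (u ^ 2) ^ 2

/-- The weight `u * thetaTri u ^ 4`. -/
def triWt (u : ℂ) : ℂ := u * thetaTri u ^ 4

lemma hasExp_one (N : ℕ) : HasExp N (1 : ℂ → ℂ) (fun _ => 1) :=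
  HasExp.of_continuousAt (p := fun _ => 1) continuousAt_const

lemma hasExp_hWt : HasExp 3 hWt (fun u => (1 + 6 * u) ^ 2) := hasExp_hSer.pow 2

lemma hasExp_hWtSq : HasExp 6 hWtSq (fun u => (1 + 6 * u ^ 2) ^ 2) :=
  (hasExp_hSer.comp_pow two_ne_zero).pow 2

lemma hasExp_triWt : HasExp 3 triWt (fun u => u * 2 ^ 4) := (hasExp_thetaTri.pow 4).mul_var

lemma tendsto_sum_coefA_two : Tendsto (fun T : ℝ => grow (4 / 5) T * ∑ k ∈ range 2,
    (1 : ℂ → ℂ) (qExp ((I * T + k) / (2 : ℕ))) * coefA 2 1 (1 * k) (I * T))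
    atTop (𝓝 (20)) :=
  tendsto_sum_coefA (κ := 2) (a := 1) (c := [-1, 10]) rfl (by norm_num)
    (by norm_num) ⟨2, by norm_num⟩
    (hasExp_one _)
    (hasExp_sliceProd_two (by norm_num)) (by norm_num)
    (r := fun u => (-36) + (39) * u ^ 1) (by fun_prop)
    (fun u => by norm_num [sum_range_succ] ; ring) (by norm_num)

lemma tendsto_sum_eSer_coefA_two : Tendsto (fun T : ℝ => grow (4 / 5) T * ∑ k ∈ range 2,
    eSer (qExp ((I * T + k) / (2 : ℕ))) * coefA 2 1 (1 * k) (I * T))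
    atTop (𝓝 (7 / 3)) :=
  tendsto_sum_coefA (κ := 2) (a := 1) (c := [1 / 12, 7 / 6]) rfl (by norm_num)
    (by norm_num) ⟨2, by norm_num⟩
    (hasExp_eSer.mono (by norm_num))
    (hasExp_sliceProd_two (by norm_num)) (by norm_num)
    (r := fun u => (-17) + (275 / 4) * u ^ 1 + (-78) * u ^ 2) (by fun_prop)
    (fun u => by norm_num [sum_range_succ] ; ring) (by norm_num)

lemma tendsto_sum_coefA_three : Tendsto (fun T : ℝ => grow (1 / 5) T * ∑ k ∈ range 3,
    (1 : ℂ → ℂ) (qExp ((I * T + k) / (3 : ℕ))) * coefA 3 1 (1 * k) (I * T))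
    atTop (𝓝 (3)) :=
  tendsto_sum_coefA (κ := 3) (a := 0) (c := [1]) rfl (by norm_num)
    (by norm_num) ⟨2, by norm_num⟩
    (hasExp_one _)
    (hasExp_sliceProd_three (by norm_num)) (by norm_num)
    (r := fun u => (-10) + (36) * u ^ 1 + (-39) * u ^ 2) (by fun_prop)
    (fun u => by norm_num ; ring) (by norm_num)

lemma tendsto_sum_hWt_coefA_three : Tendsto (fun T : ℝ => grow (1 / 5) T * ∑ k ∈ range 3,
    hWt (qExp ((I * T + k) / (3 : ℕ))) * coefA 3 1 (1 * k) (I * T))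
    atTop (𝓝 (3)) :=
  tendsto_sum_coefA (κ := 3) (a := 0) (c := [1]) rfl (by norm_num)
    (by norm_num) ⟨2, by norm_num⟩
    (hasExp_hWt.mono (by norm_num))
    (hasExp_sliceProd_three (by norm_num)) (by norm_num)
    (r := fun u => (2) + (-48) * u ^ 1 + (33) * u ^ 2 + (828) * u ^ 3 + (-1404) * u ^ 4) (by fun_prop)
    (fun u => by norm_num ; ring) (by norm_num)

lemma tendsto_sum_triWt_coefA_four : Tendsto (fun T : ℝ => grow (3 / 5) T * ∑ k ∈ range 4,
    triWt (qExp ((I * T + k) / (4 : ℕ))) * coefA 4 1 (1 * k) (I * T))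
    atTop (𝓝 (576)) :=
  tendsto_sum_coefA (κ := 4) (a := 2) (c := [0, -16, 144]) rfl (by norm_num)
    (by norm_num) ⟨3, by norm_num⟩
    (hasExp_triWt.mono (by norm_num))
    (hasExp_sliceProd_four (by norm_num)) (by norm_num)
    (r := fun u => (-416) + (64) * u ^ 1) (by fun_prop)
    (fun u => by norm_num [sum_range_succ] ; ring) (by norm_num)

lemma tendsto_sum_hWtSq_coefA_six : Tendsto (fun T : ℝ => grow (2 / 5) T * ∑ k ∈ range 6,
    hWtSq (qExp ((I * T + k) / (6 : ℕ))) * coefA 6 1 (1 * k) (I * T))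
    atTop (𝓝 (228)) :=
  tendsto_sum_coefA (κ := 1) (a := 2) (c := [1, -9, 38]) rfl (by norm_num)
    (by norm_num) ⟨4, by norm_num⟩
    (hasExp_hWtSq.mono (by norm_num))
    (hasExp_sliceProd_one (by norm_num)) (by norm_num)
    (r := fun u => (-112) + (348) * u ^ 1 + (-372) * u ^ 2 + (936) * u ^ 3 + (-144) * u ^ 4) (by fun_prop)
    (fun u => by norm_num [sum_range_succ] ; ring) (by norm_num)

lemma tendsto_sum_hWt_coefA_three_two : Tendsto (fun T : ℝ => grow (2 / 5) T * ∑ k ∈ range 3,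
    hWt (qExp ((I * T + k) / (3 : ℕ))) * coefA 3 2 (2 * k) (I * T))
    atTop (𝓝 (6)) :=
  tendsto_sum_coefA (κ := 3) (a := 0) (c := [1]) rfl (by norm_num)
    (by norm_num) ⟨4, by norm_num⟩
    (hasExp_hWt.mono (by norm_num))
    (hasExp_sliceProd_three (by norm_num)) (by norm_num)
    (r := fun u => (12) + (26) * u ^ 1 + (-120) * u ^ 2 + (-324) * u ^ 3 + (432) * u ^ 4 + (1257) * u ^ 5 + (-468) * u ^ 6 + (-1404) * u ^ 7) (by fun_prop)
    (fun u => by norm_num ; ring) (by norm_num)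

lemma tendsto_sum_coefB_two : Tendsto (fun T : ℝ => grow (1 / 5) T * ∑ k ∈ range 2,
    (1 : ℂ → ℂ) (qExp ((I * T + k) / (2 : ℕ))) * coefB 2 1 (1 * k) (I * T))
    atTop (𝓝 (2)) :=
  tendsto_sum_coefB (κ := 1) (a := 0) (c := [1]) rfl (by norm_num)
    (by norm_num) ⟨1, by norm_num⟩
    (hasExp_one _)
    (hasExp_sliceProd_one (by norm_num)) (by norm_num)
    (r := fun u => (-9) + (26) * u ^ 1 + (-4) * u ^ 2) (by fun_prop)
    (fun u => by norm_num ; ring) (by norm_num)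

lemma tendsto_sum_eSer_coefB_two : Tendsto (fun T : ℝ => grow (1 / 5) T * ∑ k ∈ range 2,
    eSer (qExp ((I * T + k) / (2 : ℕ))) * coefB 2 1 (1 * k) (I * T))
    atTop (𝓝 (-1 / 6)) :=
  tendsto_sum_coefB (κ := 1) (a := 0) (c := [-1 / 12]) rfl (by norm_num)
    (by norm_num) ⟨1, by norm_num⟩
    (hasExp_eSer.mono (by norm_num))
    (hasExp_sliceProd_one (by norm_num)) (by norm_num)
    (r := fun u => (-5 / 4) + (95 / 6) * u ^ 1 + (-155 / 3) * u ^ 2 + (8) * u ^ 3) (by fun_prop)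
    (fun u => by norm_num ; ring) (by norm_num)

lemma tendsto_sum_coefB_three : Tendsto (fun T : ℝ => grow (4 / 5) T * ∑ k ∈ range 3,
    (1 : ℂ → ℂ) (qExp ((I * T + k) / (3 : ℕ))) * coefB 3 1 (1 * k) (I * T))
    atTop (𝓝 (-78)) :=
  tendsto_sum_coefB (κ := 4) (a := 2) (c := [-1, 9, -26]) rfl (by norm_num)
    (by norm_num) ⟨2, by norm_num⟩
    (hasExp_one _)
    (hasExp_sliceProd_four (by norm_num)) (by norm_num)
    (r := fun u => (4)) (by fun_prop)
    (fun u => by norm_num [sum_range_succ] ; ring) (by norm_num)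

lemma tendsto_sum_hWt_coefB_three : Tendsto (fun T : ℝ => grow (4 / 5) T * ∑ k ∈ range 3,
    hWt (qExp ((I * T + k) / (3 : ℕ))) * coefB 3 1 (1 * k) (I * T))
    atTop (𝓝 (138)) :=
  tendsto_sum_coefB (κ := 4) (a := 2) (c := [-1, -3, 46]) rfl (by norm_num)
    (by norm_num) ⟨2, by norm_num⟩
    (hasExp_hWt.mono (by norm_num))
    (hasExp_sliceProd_four (by norm_num)) (by norm_num)
    (r := fun u => (16) + (-888) * u ^ 1 + (144) * u ^ 2) (by fun_prop)
    (fun u => by norm_num [sum_range_succ] ; ring) (by norm_num)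

lemma tendsto_sum_triWt_coefB_four : Tendsto (fun T : ℝ => grow (2 / 5) T * ∑ k ∈ range 4,
    triWt (qExp ((I * T + k) / (4 : ℕ))) * coefB 4 1 (1 * k) (I * T))
    atTop (𝓝 (-64)) :=
  tendsto_sum_coefB (κ := 2) (a := 1) (c := [0, -16]) rfl (by norm_num)
    (by norm_num) ⟨2, by norm_num⟩
    (hasExp_triWt.mono (by norm_num))
    (hasExp_sliceProd_two (by norm_num)) (by norm_num)
    (r := fun u => (160) + (-576) * u ^ 1 + (624) * u ^ 2) (by fun_prop)
    (fun u => by norm_num [sum_range_succ] ; ring) (by norm_num)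

lemma tendsto_sum_hWtSq_coefB_six : Tendsto (fun T : ℝ => grow (3 / 5) T * ∑ k ∈ range 6,
    hWtSq (qExp ((I * T + k) / (6 : ℕ))) * coefB 6 1 (1 * k) (I * T))
    atTop (𝓝 (-954)) :=
  tendsto_sum_coefB (κ := 3) (a := 3) (c := [1, -10, 48, -159]) rfl (by norm_num)
    (by norm_num) ⟨3, by norm_num⟩
    (hasExp_hWtSq.mono (by norm_num))
    (hasExp_sliceProd_three (by norm_num)) (by norm_num)
    (r := fun u => (468) + (-828) * u ^ 1 + (1296) * u ^ 2 + (-1404) * u ^ 3) (by fun_prop)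
    (fun u => by norm_num [sum_range_succ] ; ring) (by norm_num)

lemma tendsto_sum_hWt_coefB_three_two : Tendsto (fun T : ℝ => grow (3 / 5) T * ∑ k ∈ range 3,
    hWt (qExp ((I * T + k) / (3 : ℕ))) * coefB 3 2 (2 * k) (I * T))
    atTop (𝓝 (-72)) :=
  tendsto_sum_coefB (κ := 4) (a := 1) (c := [-1, -12]) rfl (by norm_num)
    (by norm_num) ⟨3, by norm_num⟩
    (hasExp_hWt.mono (by norm_num))
    (hasExp_sliceProd_four (by norm_num)) (by norm_num)
    (r := fun u => (-27) + (108) * u ^ 1 + (298) * u ^ 2 + (-312) * u ^ 3 + (-932) * u ^ 4 + (48) * u ^ 5 + (144) * u ^ 6) (by fun_prop)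
    (fun u => by norm_num [sum_range_succ] ; ring) (by norm_num)

lemma tendsto_sum_hWtSq_coefB_two_three : Tendsto (fun T : ℝ => grow (3 / 5) T * ∑ k ∈ range 2,
    hWtSq (qExp ((I * T + k) / (2 : ℕ))) * coefB 2 3 (3 * k) (I * T))
    atTop (𝓝 (6)) :=
  tendsto_sum_coefB (κ := 1) (a := 0) (c := [1]) rfl (by norm_num)
    (by norm_num) ⟨3, by norm_num⟩
    (hasExp_hWtSq.mono (by norm_num))
    (hasExp_sliceProd_one (by norm_num)) (by norm_num)
    (r := fun u => (12) * u ^ 1 + (-9) * u ^ 2 + (36) * u ^ 3 + (-108) * u ^ 4 + (26) * u ^ 5 + (-324) * u ^ 6 + (312) * u ^ 7 + (-4) * u ^ 8 + (936) * u ^ 9 + (-48) * u ^ 10 + (-144) * u ^ 12) (by fun_prop)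
    (fun u => by norm_num ; ring) (by norm_num)

/-! ### Coefficients of the forms -/

/-- The combination of coefficients defining `A_m`. -/
def coefAM (m : ℕ) (C : ℕ → ℕ → ℕ → ℂ → ℂ) (τ : ℂ) : ℂ :=
  ((m : ℂ) ^ 3 / ((m : ℂ) ^ 3 + 1)) * (C 1 m 0 τ + ((m : ℂ) ^ 4)⁻¹ * ∑ k ∈ range m, C m 1 k τ)

/-- The combination of coefficients defining `B_2`. -/
def coefB2 (C : ℕ → ℕ → ℕ → ℂ → ℂ) (τ : ℂ) : ℂ :=
  (32 / 5) * (ee1 τ * C 1 2 0 τ + (1 / 2 ^ 4) * ee3 τ * C 2 1 0 τ + (1 / 2 ^ 4) * ee2 τ * C 2 1 1 τ)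

/-- The combination of coefficients defining `B_3`. -/
def coefB3 (C : ℕ → ℕ → ℕ → ℂ → ℂ) (τ : ℂ) : ℂ :=
  (81 / 80) * (h0 τ ^ 2 * C 1 3 0 τ -
    (1 / 3 ^ 5) * ∑ k ∈ range 3, h0 ((τ + (k : ℂ)) / 3) ^ 2 * C 3 1 k τ)

/-- The combination of coefficients defining `B_4`. -/
def coefB4 (C : ℕ → ℕ → ℕ → ℂ → ℂ) (τ : ℂ) : ℂ :=
  (16 / 15) * (th4 0 (2 * τ) ^ 4 * C 1 4 0 τ - (1 / 2 ^ 4) * th4 0 (2 * τ) ^ 4 * C 2 2 1 τ -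
    (1 / (2 ^ 2 * 4 ^ 4)) * ∑ k ∈ range 4, th2 0 ((τ + (k : ℂ)) / 2) ^ 4 * C 4 1 k τ)

/-- The combination of coefficients defining `B_6`. -/
def coefB6 (C : ℕ → ℕ → ℕ → ℂ → ℂ) (τ : ℂ) : ℂ :=
  (9 / 10) * (h0 τ ^ 2 * C 1 6 0 τ
    + (1 / 2 ^ 4) * ∑ k ∈ range 2, h0 (τ + (k : ℂ)) ^ 2 * C 2 3 (3 * k) τ
    - (1 / (3 * 3 ^ 4)) * ∑ k ∈ range 3, h0 ((τ + (k : ℂ)) / 3) ^ 2 * C 3 2 (2 * k) τ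
    - (1 / (3 * 6 ^ 4)) * ∑ k ∈ range 6, h0 ((τ + (k : ℂ)) / 3) ^ 2 * C 6 1 k τ)

section
variable {τ : ℂ}

lemma HasCoeffs.of_eq {m m' : ℕ} {F F' : (Fin 8 → ℂ) → ℂ} {A B : ℂ} (h : HasCoeffs τ m F A B)
    (hm : m = m') (hF : ∀ z, F' z = F z) : HasCoeffs τ m' F' A B := by
  obtain rfl := hm
  obtain rfl : F' = F := funext hF
  exact h

lemma hasCoeffs_A1 (hτ : 0 < τ.im) : HasCoeffs τ 1 (A1 τ) (coefA 1 1 0 τ) (coefB 1 1 0 τ) :=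
  (hasCoeffs_Theta hτ (d := 1) (ρ := 1) (by norm_num) (by norm_num) 0).of_eq rfl
    fun z => by simp [A1]

lemma hasCoeffs_A4 (hτ : 0 < τ.im) : HasCoeffs τ 4 (A4 τ) (coefA 2 2 0 τ) (coefB 2 2 0 τ) :=
  (hasCoeffs_Theta hτ (d := 2) (ρ := 2) (by norm_num) (by norm_num) 0).of_eq rfl
    fun z => by simp [A4]

lemma hasCoeffs_AM (hτ : 0 < τ.im) {m : ℕ} (hm : ¬ 5 ∣ m) :
    HasCoeffs τ m (AM m τ) (coefAM m coefA τ) (coefAM m coefB τ) := by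
  have h1 := (hasCoeffs_Theta hτ (d := 1) (ρ := m) (by norm_num) hm 0).of_eq (mul_one m)
    (fun z => rfl)
  have h2 := fun k : ℕ => (hasCoeffs_Theta hτ (d := m) (ρ := 1) hm (by norm_num) k).of_eq
    (one_mul m) (fun z => rfl)
  refine ((h1.add ((HasCoeffs.sum (s := range m) h2).const_mul
    (((m : ℂ) ^ 4)⁻¹))).const_mul ((m : ℂ) ^ 3 / ((m : ℂ) ^ 3 + 1))).of_eq rfl fun z => ?_
  simp [AM]

lemma hasCoeffs_B2 (hτ : 0 < τ.im) : HasCoeffs τ 2 (B2 τ) (coefB2 coefA τ) (coefB2 coefB τ) := by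
  have h1 : HasCoeffs τ 2 _ _ _ := hasCoeffs_Theta hτ (d := 1) (ρ := 2) (by norm_num) (by norm_num) 0
  have h2 (k : ℕ) : HasCoeffs τ 2 _ _ _ :=
    hasCoeffs_Theta hτ (d := 2) (ρ := 1) (by norm_num) (by norm_num) k
  refine ((((h1.const_mul (ee1 τ)).add ((h2 0).const_mul ((1 / 2 ^ 4) * ee3 τ))).add
    ((h2 1).const_mul ((1 / 2 ^ 4) * ee2 τ))).const_mul (32 / 5)).of_eq rfl fun z => ?_
  simp [B2]

lemma hasCoeffs_B3 (hτ : 0 < τ.im) : HasCoeffs τ 3 (B3 τ) (coefB3 coefA τ) (coefB3 coefB τ) := by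
  have h1 : HasCoeffs τ 3 _ _ _ := hasCoeffs_Theta hτ (d := 1) (ρ := 3) (by norm_num) (by norm_num) 0
  have h2 (k : ℕ) : HasCoeffs τ 3 _ _ _ :=
    (hasCoeffs_Theta hτ (d := 3) (ρ := 1) (by norm_num) (by norm_num) k).const_mul
      (h0 ((τ + (k : ℂ)) / 3) ^ 2)
  refine (((h1.const_mul (h0 τ ^ 2)).sub ((HasCoeffs.sum (s := range 3) h2).const_mul
    (1 / 3 ^ 5))).const_mul (81 / 80)).of_eq rfl fun z => ?_
  simp [B3]

lemma hasCoeffs_B4 (hτ : 0 < τ.im) : HasCoeffs τ 4 (B4 τ) (coefB4 coefA τ) (coefB4 coefB τ) := by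
  have h1 : HasCoeffs τ 4 _ _ _ := hasCoeffs_Theta hτ (d := 1) (ρ := 4) (by norm_num) (by norm_num) 0
  have h2 : HasCoeffs τ 4 _ _ _ := hasCoeffs_Theta hτ (d := 2) (ρ := 2) (by norm_num) (by norm_num) 1
  have h3 (k : ℕ) : HasCoeffs τ 4 _ _ _ :=
    (hasCoeffs_Theta hτ (d := 4) (ρ := 1) (by norm_num) (by norm_num) k).const_mul
      (th2 0 ((τ + (k : ℂ)) / 2) ^ 4)
  refine ((((h1.const_mul (th4 0 (2 * τ) ^ 4)).sub
    (h2.const_mul ((1 / 2 ^ 4) * th4 0 (2 * τ) ^ 4))).sub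
    ((HasCoeffs.sum (s := range 4) h3).const_mul (1 / (2 ^ 2 * 4 ^ 4)))).const_mul
      (16 / 15)).of_eq rfl fun z => ?_
  have e : (2 * τ + 1) / 2 = τ + 2⁻¹ := by ring
  simp [B4, e]

lemma hasCoeffs_B6 (hτ : 0 < τ.im) : HasCoeffs τ 6 (B6 τ) (coefB6 coefA τ) (coefB6 coefB τ) := by
  have h1 : HasCoeffs τ 6 _ _ _ := hasCoeffs_Theta hτ (d := 1) (ρ := 6) (by norm_num) (by norm_num) 0
  have h2 (k : ℕ) : HasCoeffs τ 6 _ _ _ :=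
    (hasCoeffs_Theta hτ (d := 2) (ρ := 3) (by norm_num) (by norm_num) (3 * k)).const_mul
      (h0 (τ + (k : ℂ)) ^ 2)
  have h3 (k : ℕ) : HasCoeffs τ 6 _ _ _ :=
    (hasCoeffs_Theta hτ (d := 3) (ρ := 2) (by norm_num) (by norm_num) (2 * k)).const_mul
      (h0 ((τ + (k : ℂ)) / 3) ^ 2)
  have h4 (k : ℕ) : HasCoeffs τ 6 _ _ _ :=
    (hasCoeffs_Theta hτ (d := 6) (ρ := 1) (by norm_num) (by norm_num) k).const_mul
      (h0 ((τ + (k : ℂ)) / 3) ^ 2)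
  refine (((((h1.const_mul (h0 τ ^ 2)).add
    ((HasCoeffs.sum (s := range 2) h2).const_mul (1 / 2 ^ 4))).sub
    ((HasCoeffs.sum (s := range 3) h3).const_mul (1 / (3 * 3 ^ 4)))).sub
    ((HasCoeffs.sum (s := range 6) h4).const_mul (1 / (3 * 6 ^ 4)))).const_mul
      (9 / 10)).of_eq rfl fun z => ?_
  simp [B6]
end

/-! ### Limits along the imaginary axis -/

lemma HasExp.tendsto_qExp {N : ℕ} {F p : ℂ → ℂ} (h : HasExp N F p) (hN : N ≠ 0) {d ρ : ℕ}
    (hd : d ≠ 0) (hρ : ρ ≠ 0) (l : ℂ) :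
    Tendsto (fun T : ℝ => F (qExp ((ρ * (I * T) + l) / d))) atTop (𝓝 (p 0)) :=
  ((h.tendsto hN).mono_left nhdsWithin_le_nhds).comp (tendsto_qExp_rescaled hd hρ l)

lemma tendsto_h0 (l : ℂ) : Tendsto (fun T : ℝ => h0 (I * T + l)) atTop (𝓝 1) := by
  have := hasExp_hSer.tendsto_qExp three_ne_zero one_ne_zero one_ne_zero l
  simpa [h0_eq] using this

lemma tendsto_th4 : Tendsto (fun T : ℝ => th4 0 (2 * (I * T))) atTop (𝓝 1) := by
  have h : HasExp 4 (fun u => thetaSq (-u)) (fun u => 1 + 2 * (-u)) := by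
    refine ⟨?_, by fun_prop⟩
    have := hasExp_thetaSq.1.comp_tendsto (k := fun u : ℂ => -u) (l' := 𝓝 0)
      (by simpa using (continuous_neg.tendsto (0 : ℂ)))
    refine (this.congr_right fun u => ?_)
    simp [Even.neg_pow (by decide : Even 4)]
  have := h.tendsto_qExp four_ne_zero (d := 2) (ρ := 2) two_ne_zero two_ne_zero 0
  simpa [th4_zero_eq] using this

lemma tendsto_ee1 : Tendsto (fun T : ℝ => ee1 (I * T)) atTop (𝓝 (1 / 6)) := by
  have h3 : Tendsto (fun T : ℝ => th3 0 (I * T)) atTop (𝓝 1) := by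
    have := hasExp_thetaSq.tendsto_qExp four_ne_zero (d := 2) two_ne_zero one_ne_zero 0
    simpa [th3_zero_eq] using this
  have h4 : Tendsto (fun T : ℝ => th4 0 (I * T)) atTop (𝓝 1) := by
    have := hasExp_thetaSq.tendsto_qExp four_ne_zero (d := 2) two_ne_zero one_ne_zero 1
    refine (this.congr fun T => ?_).trans (by simp)
    rw [th4_zero_eq, ← qExp_add_half]
    simp
  have := ((h3.pow 4).add (h4.pow 4)).div_const 12
  norm_num at this
  simpa [ee1] using this

section
variable {α : Type*} {l : Filter α}

lemma eventually_det_ne_zero {g g' A B A' B' : α → ℂ} {a b a' b' : ℂ}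
    (hA : Tendsto (fun x => g x * A x) l (𝓝 a)) (hB : Tendsto (fun x => g' x * B x) l (𝓝 b))
    (hA' : Tendsto (fun x => g x * A' x) l (𝓝 a')) (hB' : Tendsto (fun x => g' x * B' x) l (𝓝 b'))
    (h : a * b' - a' * b ≠ 0) : ∀ᶠ x in l, A x * B' x - A' x * B x ≠ 0 := by
  filter_upwards [((hA.mul hB').sub (hA'.mul hB)).eventually_ne h] with x hx h0
  exact hx (by linear_combination (g x * g' x) * h0)
end

lemma hWt_qExp (τ : ℂ) : hWt (qExp τ) = h0 τ ^ 2 := by rw [hWt, h0_eq]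

lemma qExp_half_sq (τ : ℂ) : qExp (τ / 2) ^ 2 = qExp τ := by
  rw [qExp, qExp, ← Complex.exp_nat_mul]
  push_cast
  ring_nf

lemma hWtSq_qExp (τ : ℂ) : hWtSq (qExp (τ / 2)) = h0 τ ^ 2 := by
  rw [hWtSq, h0_eq, qExp_half_sq]

lemma hWtSq_qExp_six (τ : ℂ) : hWtSq (qExp (τ / 6)) = h0 (τ / 3) ^ 2 := by
  rw [← hWtSq_qExp, div_div]
  norm_num

lemma triWt_qExp (τ : ℂ) : triWt (qExp (τ / 4)) = th2 0 (τ / 2) ^ 4 := (th2_pow_four τ).symm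

lemma eventually_det_one : ∀ᶠ T : ℝ in atTop, coefA 1 1 0 (I * T) * coefB6 coefB (I * T) -
    coefB6 coefA (I * T) * coefB 1 1 0 (I * T) ≠ 0 := by
  have hA : Tendsto (fun T : ℝ => grow (2 / 5) T * coefA 1 1 0 (I * T)) atTop (𝓝 1) :=
    tendsto_coefA 0 (κ := 1) rfl (by norm_num) (hasExp_sliceProd_one (by norm_num)) (by norm_num)
      (by simp)
  have hB : Tendsto (fun T : ℝ => grow (3 / 5) T * coefB 1 1 0 (I * T)) atTop (𝓝 1) :=
    tendsto_coefB 0 (κ := 3) rfl (by norm_num) (hasExp_sliceProd_three (by norm_num)) (by norm_num)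
      (by simp)
  have hA6 : Tendsto (fun T : ℝ => grow (2 / 5) T * coefA 1 6 0 (I * T)) atTop (𝓝 0) :=
    tendsto_coefA_zero 0 (κ := 1) rfl (by norm_num) (hasExp_sliceProd_one (by norm_num))
      (by norm_num)
  have hB6 : Tendsto (fun T : ℝ => grow (3 / 5) T * coefB 1 6 0 (I * T)) atTop (𝓝 0) :=
    tendsto_coefB_zero 0 (κ := 3) rfl (by norm_num) (hasExp_sliceProd_three (by norm_num))
      (by norm_num)
  have hA23 (k : ℕ) : Tendsto (fun T : ℝ => grow (2 / 5) T * coefA 2 3 (3 * k) (I * T)) atTop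
      (𝓝 0) :=
    tendsto_coefA_zero _ (κ := 2) rfl (by norm_num) (hasExp_sliceProd_two (by norm_num))
      (by norm_num)
  have hh : Tendsto (fun T : ℝ => h0 (I * T)) atTop (𝓝 1) := by simpa using tendsto_h0 0
  have sA23 : Tendsto (fun T : ℝ => ∑ k ∈ range 2, h0 (I * T + k) ^ 2 *
      (grow (2 / 5) T * coefA 2 3 (3 * k) (I * T))) atTop (𝓝 0) := by
    simpa using tendsto_finsetSum (range 2) fun k _ => ((tendsto_h0 k).pow 2).mul (hA23 k)
  have sA32 := tendsto_sum_hWt_coefA_three_two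
  have sB32 := tendsto_sum_hWt_coefB_three_two
  have sA6 := tendsto_sum_hWtSq_coefA_six
  have sB6 := tendsto_sum_hWtSq_coefB_six
  have sB23 := tendsto_sum_hWtSq_coefB_two_three
  simp only [Nat.cast_ofNat, hWt_qExp, hWtSq_qExp, hWtSq_qExp_six, one_mul] at sA32 sB32 sA6 sB6 sB23
  have lA := (((((hh.pow 2).mul hA6).add (sA23.const_mul (1 / 2 ^ 4))).sub
    (sA32.const_mul (1 / (3 * 3 ^ 4)))).sub (sA6.const_mul (1 / (3 * 6 ^ 4)))).const_mul (9 / 10)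
  have lB := (((((hh.pow 2).mul hB6).add (sB23.const_mul (1 / 2 ^ 4))).sub
    (sB32.const_mul (1 / (3 * 3 ^ 4)))).sub (sB6.const_mul (1 / (3 * 6 ^ 4)))).const_mul (9 / 10)
  refine eventually_det_ne_zero hA hB (lA.congr fun T => ?_) (lB.congr fun T => ?_) ?_
  · rw [coefB6]
    simp only [mul_left_comm _ (grow (2 / 5) T), ← mul_sum]
    ring
  · rw [coefB6]
    ring
  · norm_num

lemma eventually_det_two : ∀ᶠ T : ℝ in atTop, coefAM 2 coefA (I * T) * coefB2 coefB (I * T) -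
    coefB2 coefA (I * T) * coefAM 2 coefB (I * T) ≠ 0 := by
  have hA : Tendsto (fun T : ℝ => grow (4 / 5) T * coefA 1 2 0 (I * T)) atTop (𝓝 2) :=
    tendsto_coefA 0 (κ := 1) rfl (by norm_num) (hasExp_sliceProd_one (by norm_num)) (by norm_num)
      (by simp)
  have hB : Tendsto (fun T : ℝ => grow (1 / 5) T * coefB 1 2 0 (I * T)) atTop (𝓝 0) :=
    tendsto_coefB_zero 0 (κ := 3) rfl (by norm_num) (hasExp_sliceProd_three (by norm_num))
      (by norm_num)
  have sA := tendsto_sum_coefA_two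
  have sB := tendsto_sum_coefB_two
  have eA := tendsto_sum_eSer_coefA_two
  have eB := tendsto_sum_eSer_coefB_two
  simp only [Nat.cast_ofNat, Pi.one_apply, one_mul] at sA sB eA eB
  have lA := (hA.add (sA.const_mul ((2 : ℂ) ^ 4)⁻¹)).const_mul ((2 : ℂ) ^ 3 / ((2 : ℂ) ^ 3 + 1))
  have lB := (hB.add (sB.const_mul ((2 : ℂ) ^ 4)⁻¹)).const_mul ((2 : ℂ) ^ 3 / ((2 : ℂ) ^ 3 + 1))
  have lA' := ((tendsto_ee1.mul hA).add (eA.const_mul (1 / 2 ^ 4))).const_mul (32 / 5)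
  have lB' := ((tendsto_ee1.mul hB).add (eB.const_mul (1 / 2 ^ 4))).const_mul (32 / 5)
  refine eventually_det_ne_zero (g := grow (4 / 5)) (g' := grow (1 / 5))
    (lA.congr fun T => ?_) (lB.congr fun T => ?_)
    (lA'.congr fun T => ?_) (lB'.congr fun T => ?_) ?_
  · rw [coefAM]
    push_cast
    ring
  · rw [coefAM]
    push_cast
    ring
  · rw [coefB2, ee3_eq, ee2_eq]
    simp only [sum_range_succ, range_zero, sum_empty, Nat.cast_zero, Nat.cast_one, add_zero]
    ring
  · rw [coefB2, ee3_eq, ee2_eq]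
    simp only [sum_range_succ, range_zero, sum_empty, Nat.cast_zero, Nat.cast_one, add_zero]
    ring
  · norm_num

lemma eventually_det_three : ∀ᶠ T : ℝ in atTop, coefAM 3 coefA (I * T) * coefB3 coefB (I * T) -
    coefB3 coefA (I * T) * coefAM 3 coefB (I * T) ≠ 0 := by
  have hA : Tendsto (fun T : ℝ => grow (1 / 5) T * coefA 1 3 0 (I * T)) atTop (𝓝 0) :=
    tendsto_coefA_zero 0 (κ := 1) rfl (by norm_num) (hasExp_sliceProd_one (by norm_num))
      (by norm_num)
  have hB : Tendsto (fun T : ℝ => grow (4 / 5) T * coefB 1 3 0 (I * T)) atTop (𝓝 0) :=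
    tendsto_coefB_zero 0 (κ := 3) rfl (by norm_num) (hasExp_sliceProd_three (by norm_num))
      (by norm_num)
  have hh : Tendsto (fun T : ℝ => h0 (I * T)) atTop (𝓝 1) := by simpa using tendsto_h0 0
  have sA := tendsto_sum_coefA_three
  have sB := tendsto_sum_coefB_three
  have eA := tendsto_sum_hWt_coefA_three
  have eB := tendsto_sum_hWt_coefB_three
  simp only [Nat.cast_ofNat, Pi.one_apply, one_mul, hWt_qExp] at sA sB eA eB
  have lA := (hA.add (sA.const_mul ((3 : ℂ) ^ 4)⁻¹)).const_mul ((3 : ℂ) ^ 3 / ((3 : ℂ) ^ 3 + 1))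
  have lB := (hB.add (sB.const_mul ((3 : ℂ) ^ 4)⁻¹)).const_mul ((3 : ℂ) ^ 3 / ((3 : ℂ) ^ 3 + 1))
  have lA' := (((hh.pow 2).mul hA).sub (eA.const_mul (1 / 3 ^ 5))).const_mul (81 / 80)
  have lB' := (((hh.pow 2).mul hB).sub (eB.const_mul (1 / 3 ^ 5))).const_mul (81 / 80)
  refine eventually_det_ne_zero (g := grow (1 / 5)) (g' := grow (4 / 5))
    (lA.congr fun T => ?_) (lB.congr fun T => ?_)
    (lA'.congr fun T => ?_) (lB'.congr fun T => ?_) ?_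
  · rw [coefAM]
    push_cast
    ring
  · rw [coefAM]
    push_cast
    ring
  · rw [coefB3]
    ring
  · rw [coefB3]
    ring
  · norm_num

lemma eventually_det_four : ∀ᶠ T : ℝ in atTop, coefA 2 2 0 (I * T) * coefB4 coefB (I * T) -
    coefB4 coefA (I * T) * coefB 2 2 0 (I * T) ≠ 0 := by
  have hA : Tendsto (fun T : ℝ => grow (3 / 5) T * coefA 2 2 0 (I * T)) atTop (𝓝 (-2)) :=
    tendsto_coefA 0 (κ := 2) rfl (by norm_num) (hasExp_sliceProd_two (by norm_num)) (by norm_num)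
      (by simp)
  have hB : Tendsto (fun T : ℝ => grow (2 / 5) T * coefB 2 2 0 (I * T)) atTop (𝓝 2) :=
    tendsto_coefB 0 (κ := 1) rfl (by norm_num) (hasExp_sliceProd_one (by norm_num)) (by norm_num)
      (by simp)
  have hA4 : Tendsto (fun T : ℝ => grow (3 / 5) T * coefA 1 4 0 (I * T)) atTop (𝓝 0) :=
    tendsto_coefA_zero 0 (κ := 1) rfl (by norm_num) (hasExp_sliceProd_one (by norm_num))
      (by norm_num)
  have hB4 : Tendsto (fun T : ℝ => grow (2 / 5) T * coefB 1 4 0 (I * T)) atTop (𝓝 0) :=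
    tendsto_coefB_zero 0 (κ := 3) rfl (by norm_num) (hasExp_sliceProd_three (by norm_num))
      (by norm_num)
  have hA22 : Tendsto (fun T : ℝ => grow (3 / 5) T * coefA 2 2 1 (I * T)) atTop (𝓝 2) := by
    refine tendsto_coefA 1 (κ := 2) rfl (by norm_num) (hasExp_sliceProd_two (by norm_num))
      (by norm_num) ?_
    have e : 2 * πC * I * ((1 : ℕ) * (3 * (2 : ℕ) / 5 + (2 : ℕ) * (5 - (2 : ℕ)) / 10 / (2 : ℕ))) =
        2 * πC * I * (1 : ℤ) + Real.pi * I := by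
      rw [πC]
      push_cast
      ring
    rw [e, Complex.exp_add, exp_two_pi_I_mul, Complex.exp_pi_mul_I]
    norm_num
  have hB22 : Tendsto (fun T : ℝ => grow (2 / 5) T * coefB 2 2 1 (I * T)) atTop (𝓝 2) := by
    refine tendsto_coefB 1 (κ := 1) rfl (by norm_num) (hasExp_sliceProd_one (by norm_num))
      (by norm_num) ?_
    have e : 2 * πC * I * ((1 : ℕ) * (2 * (2 : ℕ) / 5 + (1 : ℕ) * (5 - (1 : ℕ)) / 10 / (2 : ℕ))) =
        2 * πC * I * (1 : ℤ) := by
      push_cast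
      ring
    rw [e, exp_two_pi_I_mul]
    norm_num
  have sA := tendsto_sum_triWt_coefA_four
  have sB := tendsto_sum_triWt_coefB_four
  simp only [Nat.cast_ofNat, one_mul, triWt_qExp] at sA sB
  have ht := tendsto_th4.pow 4
  have lA := (((ht.mul hA4).sub ((ht.mul hA22).const_mul (1 / 2 ^ 4))).sub
    (sA.const_mul (1 / (2 ^ 2 * 4 ^ 4)))).const_mul (16 / 15)
  have lB := (((ht.mul hB4).sub ((ht.mul hB22).const_mul (1 / 2 ^ 4))).sub
    (sB.const_mul (1 / (2 ^ 2 * 4 ^ 4)))).const_mul (16 / 15)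
  refine eventually_det_ne_zero hA hB (lA.congr fun T => ?_) (lB.congr fun T => ?_) ?_
  · rw [coefB4]
    ring
  · rw [coefB4]
    ring
  · norm_num

/-! ### The value of `A_5` at the base point -/

lemma sliceTheta_rootPt_eq (c : ℤ) (τ : ℂ) (ρ : ℕ) : sliceTheta c τ (fun i => ρ * rootPt i) =
    Complex.exp (2 * πC * I * τ * (c * (5 - c) / 10)) * quadSeries c (fun _ => 1) ρ (qExp τ) := by
  rw [sliceTheta, ← (quadEquiv c).tsum_eq, quadSeries, ← tsum_mul_left]
  refine tsum_congr fun x => ?_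
  rw [sliceTerm_quad]
  push_cast
  ring

lemma isBigO_quadSeries_one (c : ℤ) (ρ : ℕ) :
    quadSeries c (fun _ => 1) ρ =O[𝓝 0] (fun _ => (1 : ℂ)) := by
  have hs := summable_quadSeries c (fun _ => 1) ρ (by
    simpa using (summable_norm_sliceTerm (τ := I) (by simp) c c (fun i => ρ * rootPt i)).of_norm)
  have := (hasExp_tsum _ _ (Real.exp_pos _) hs 0 ∅ (fun _ _ => Nat.zero_le _)).1
  simpa [quadSeries] using this

lemma tendsto_sliceTheta_zero {c : ℕ} (hc : c ≠ 0) (hc5 : c < 5) :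
    Tendsto (fun T : ℝ => sliceTheta c (5 * (I * T)) (fun i => (5 : ℕ) * rootPt i)) atTop (𝓝 0) := by
  have hq : Tendsto (fun T : ℝ => qExp (5 * (I * T))) atTop (𝓝 0) := by
    have := (tendsto_qExp_rescaled one_ne_zero (by norm_num : 5 ≠ 0) 0).mono_right
      nhdsWithin_le_nhds
    simpa using this
  have hb := (isBigO_quadSeries_one c 5).comp_tendsto hq
  have hg : Tendsto (grow (-(5 * (c * (5 - c) / 10)))) atTop (𝓝 0) := by
    refine tendsto_grow (neg_lt_zero.2 ?_)
    have h1 : (0 : ℝ) < c := by exact_mod_cast Nat.pos_of_ne_zero hc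
    have h2 : (c : ℝ) < 5 := by exact_mod_cast hc5
    have : (0 : ℝ) < 5 - c := by linarith
    positivity
  have h1 : (fun T : ℝ => grow (-(5 * (c * (5 - c) / 10))) T *
      quadSeries c (fun _ => 1) 5 (qExp (5 * (I * T)))) =O[atTop]
      (fun T => grow (-(5 * (c * (5 - c) / 10))) T * 1) := (isBigO_refl _ _).mul hb
  refine (h1.trans_tendsto (by simpa using hg)).congr fun T => ?_
  rw [sliceTheta_rootPt_eq, grow]
  congr 2
  push_cast
  linear_combination (-(πC * T * c * (5 - c))) * I_mul_I

lemma isBigO_sliceTheta_zero :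
    (fun T : ℝ => sliceTheta (0 : ℕ) (5 * (I * T)) (fun i => (5 : ℕ) * rootPt i)) =O[atTop]
      (fun _ => (1 : ℂ)) := by
  have hq : Tendsto (fun T : ℝ => qExp (5 * (I * T))) atTop (𝓝 0) := by
    have := (tendsto_qExp_rescaled one_ne_zero (by norm_num : 5 ≠ 0) 0).mono_right
      nhdsWithin_le_nhds
    simpa using this
  refine ((isBigO_quadSeries_one 0 5).comp_tendsto hq).congr_left fun T => ?_
  rw [Nat.cast_zero, sliceTheta_rootPt_eq]
  simp

lemma isBigO_sliceTheta (c : ℕ) (hc5 : c < 5) :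
    (fun T : ℝ => sliceTheta c (5 * (I * T)) (fun i => (5 : ℕ) * rootPt i)) =O[atTop]
      (fun _ => (1 : ℂ)) := by
  rcases eq_or_ne c 0 with rfl | hc
  · exact isBigO_sliceTheta_zero
  · exact (tendsto_sliceTheta_zero hc hc5).norm.isBoundedUnder_le.isBigO_one ℂ

lemma tendsto_thetaRed_five : Tendsto (fun T : ℝ => thetaRed 1 5 0 (I * T) basePt) atTop (𝓝 0) := by
  have key : ∀ c ∈ range 5, Tendsto (fun T : ℝ => Complex.exp (2 * πC * I * ((0 : ℕ) * c / 5)) *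
      (sliceTheta c (5 * (I * T)) (fun i => (5 : ℕ) * rootPt i) *
        sliceTheta ((2 * c + 3 * 1) % 5 : ℕ) (5 * (I * T)) (fun i => (5 : ℕ) * rootPt i)))
      atTop (𝓝 0) := by
    intro c hc
    have hc5 := mem_range.1 hc
    have hm : (2 * c + 3 * 1) % 5 < 5 := Nat.mod_lt _ (by norm_num)
    rw [← mul_zero (Complex.exp _)]
    refine Tendsto.const_mul _ ?_
    by_cases h : c = 0
    · have h3 : (2 * c + 3 * 1) % 5 ≠ 0 := by omega
      have := (isBigO_sliceTheta c hc5).mul (isBigO_refl (fun T : ℝ =>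
        sliceTheta ((2 * c + 3 * 1) % 5 : ℕ) (5 * (I * T)) (fun i => (5 : ℕ) * rootPt i)) atTop)
      exact this.trans_tendsto (by simpa only [one_mul] using tendsto_sliceTheta_zero h3 hm)
    · have := (isBigO_refl (fun T : ℝ => sliceTheta c (5 * (I * T)) (fun i => (5 : ℕ) * rootPt i))
        atTop).mul (isBigO_sliceTheta _ hm)
      exact this.trans_tendsto (by simpa only [mul_one] using tendsto_sliceTheta_zero h hc5)
  have := (tendsto_finsetSum (range 5) key).const_mul (Complex.exp (4 / 5 * πC * I * ((1 : ℕ) * (0 : ℕ))))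
  rw [sum_const_zero, mul_zero] at this
  refine this.congr fun T => ?_
  rw [thetaRed, projP_basePt, projR_basePt]
  have e : (((5 : ℕ) : ℂ) * (I * T) + (0 : ℕ)) / (1 : ℕ) = 5 * (I * T) := by norm_num
  rw [e]

lemma thetaRed_fifth (k : ℕ) (T : ℝ) : thetaRed 5 1 k (I * T) basePt =
    quadSeries 0 (fun _ => 1) 1 (qExp (((1 : ℕ) * (I * T) + k) / (5 : ℕ))) ^ 2 := by
  have h1 : Complex.exp (4 / 5 * πC * I * ((5 : ℕ) * k)) = 1 := by
    rw [← exp_two_pi_I_mul (2 * k)]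
    congr 1
    push_cast
    ring
  rw [thetaRed, projP_basePt, projR_basePt, h1, one_mul,
    sum_eq_single_of_mem 0 (mem_range.2 (by norm_num))]
  · have h2 := sliceTheta_zero_eq (((1 : ℕ) * (I * T) + k) / (5 : ℕ)) 1
    norm_num at h2 ⊢
    rw [h2, sq]
  · intro c hc h0
    have hc5 := mem_range.1 hc
    rw [sliceTheta_rootPt_eq_zero (by omega), zero_mul, mul_zero]

lemma tendsto_thetaRed_fifth (k : ℕ) :
    Tendsto (fun T : ℝ => thetaRed 5 1 k (I * T) basePt) atTop (𝓝 1) := by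
  have := ((hasExp_quadSeries_zero (ρ := 1) (by norm_num)).tendsto_qExp four_ne_zero
    (by norm_num : 5 ≠ 0) one_ne_zero k).pow 2
  simp only [← thetaRed_fifth] at this
  simpa using this

/-- The value of `A_5` at the base point. -/
def valueA5 (τ : ℂ) : ℂ := ((5 : ℕ) : ℂ) ^ 3 / (((5 : ℕ) : ℂ) ^ 3 + 1) *
  (thetaRed 1 5 0 τ basePt + (((5 : ℕ) : ℂ) ^ 4)⁻¹ * ∑ k ∈ range 5, thetaRed 5 1 k τ basePt)

lemma eventually_valueA5_ne_zero : ∀ᶠ T : ℝ in atTop, valueA5 (I * T) ≠ 0 := by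
  have h := (tendsto_thetaRed_five.add ((tendsto_finsetSum (range 5)
    (fun k _ => tendsto_thetaRed_fifth k)).const_mul (((5 : ℕ) : ℂ) ^ 4)⁻¹)).const_mul
    (((5 : ℕ) : ℂ) ^ 3 / (((5 : ℕ) : ℂ) ^ 3 + 1))
  refine h.eventually_ne ?_
  norm_num

lemma HasJet.of_eq {τ : ℂ} {m : ℕ} {F F' : (Fin 8 → ℂ) → ℂ} {V : ℂ}
    {D : (Fin 8 → ℂ) →L[ℂ] ℂ} (h : HasJet τ m F V D) (hF : ∀ z, F' z = F z) :
    HasJet τ m F' V D := by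
  rwa [show F' = F from funext hF]

lemma hasJet_A5 {τ : ℂ} (hτ : 0 < τ.im) : ∃ D, HasJet τ 5 (A5 τ) (valueA5 τ) D := by
  have h {d ρ : ℕ} (hd : 0 < d) (hρ : 0 < ρ) (l : ℕ) : HasJet τ (ρ * d)
      (fun z => Theta ((ρ * τ + l) / d) (fun i => ρ * z i)) (thetaRed d ρ l τ basePt) _ :=
    ⟨thetaRed d ρ l τ, fun n y => Theta_translate hτ hd hρ l n y, rfl,
      hasStrictFDerivAt_thetaRed hτ hd hρ l⟩
  have h1 : HasJet τ 5 _ _ _ := h one_pos (by norm_num : 0 < 5) 0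
  have h2 (k : ℕ) : HasJet τ 5 _ _ _ := h (by norm_num : 0 < 5) one_pos k
  have h3 := (h1.add ((HasJet.sum (s := range 5) h2).const_mul
    (((5 : ℕ) : ℂ) ^ 4)⁻¹)).const_mul (((5 : ℕ) : ℂ) ^ 3 / (((5 : ℕ) : ℂ) ^ 3 + 1))
  exact ⟨_, h3.of_eq fun z => by simp [A5, AM, div_eq_mul_inv, mul_assoc]⟩

open UpperHalfPlane in
lemma E4_eq (z : ℍ) : E4 z = ModularForm.E₄ z := by
  have h := EisensteinSeries.q_expansion_bernoulli (k := 4) (by norm_num) (by decide) z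
  have h2 := tsum_pow_div_one_sub_eq_tsum_sigma (norm_exp_two_pi_I_lt_one z) 3
  have hb : bernoulli 4 = -1 / 30 := by decide +kernel
  rw [E4, qExp]
  simp only [πC] at *
  rw [h2]
  rw [ModularForm.E₄, h, hb]
  push_cast
  simp only [zpow_natCast]
  ring

open UpperHalfPlane in
lemma E6_eq (z : ℍ) : E6 z = ModularForm.E₆ z := by
  have h := EisensteinSeries.q_expansion_bernoulli (k := 6) (by norm_num) (by decide) z
  have h2 := tsum_pow_div_one_sub_eq_tsum_sigma (norm_exp_two_pi_I_lt_one z) 5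
  have hb : bernoulli 6 = 1 / 42 := by decide +kernel
  rw [E6, qExp]
  simp only [πC] at *
  rw [h2]
  rw [ModularForm.E₆, h, hb]
  push_cast
  simp only [zpow_natCast]
  ring

/-- A polynomial vanishing at infinitely many points of a rational curve vanishes on it. -/
lemma eval_curve_eq_zero {σ : Type*} (c : MvPolynomial σ ℂ) (f : σ → Polynomial ℂ) {S : Set ℂ}
    (hS : S.Infinite) (h : ∀ t ∈ S, MvPolynomial.eval (fun i => (f i).eval t) c = 0) (t : ℂ) :
    MvPolynomial.eval (fun i => (f i).eval t) c = 0 := by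
  have key (t : ℂ) : (MvPolynomial.aeval f c).eval t =
      MvPolynomial.eval (fun i => (f i).eval t) c := by
    rw [← Polynomial.coe_evalRingHom, MvPolynomial.aeval_def, MvPolynomial.hom_eval₂,
      MvPolynomial.eval, MvPolynomial.coe_eval₂Hom]
    congr 1
    ext x
    simp
  have h0 : MvPolynomial.aeval f c = 0 := by
    refine Polynomial.eq_zero_of_infinite_isRoot _ (hS.mono fun t ht => ?_)
    rw [Set.mem_ofPred_eq, Polynomial.IsRoot, key, h t ht]
  rw [← key, h0, Polynomial.eval_zero]

open UpperHalfPlane in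
lemma exists_modular_translate (z : ℍ) (n : ℕ) : ∃ w : ℍ,
    E4 w = ((z : ℂ) + n) ^ 4 * E4 z ∧ E6 w = ((z : ℂ) + n) ^ 6 * E6 z := by
  let γ : Matrix.SpecialLinearGroup (Fin 2) ℤ := ⟨!![0, -1; 1, n], by simp⟩
  have hγ : Matrix.SpecialLinearGroup.mapGL ℝ γ ∈
      (Matrix.SpecialLinearGroup.mapGL (n := Fin 2) (R := ℤ) ℝ).range := ⟨γ, rfl⟩
  have h4 := SlashInvariantForm.slash_action_eqn'' ModularForm.E₄ hγ z
  have h6 := SlashInvariantForm.slash_action_eqn'' ModularForm.E₆ hγ z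
  have hd : denom (Matrix.SpecialLinearGroup.mapGL ℝ γ) z = (z : ℂ) + n := by
    have e₀ : Matrix.SpecialLinearGroup.mapGL ℝ γ 1 0 = ((1 : ℤ) : ℝ) := rfl
    have e₁ : Matrix.SpecialLinearGroup.mapGL ℝ γ 1 1 = ((n : ℤ) : ℝ) := rfl
    simp [denom, e₀, e₁]
  rw [hd] at h4 h6
  refine ⟨Matrix.SpecialLinearGroup.mapGL ℝ γ • z, ?_, ?_⟩
  · rw [E4_eq, E4_eq, h4]
    norm_cast
  · rw [E6_eq, E6_eq, h6]
    norm_cast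

open UpperHalfPlane in
lemma tendsto_modularForm_atImInfty {k : ℤ}
    (f : ModularForm (Matrix.SpecialLinearGroup.mapGL (n := Fin 2) (R := ℤ) ℝ).range k) :
    Tendsto f atImInfty (𝓝 ((qExpansion 1 f).coeff 0)) := by
  have hp := one_mem_strictPeriods_SL
  have ha := ModularFormClass.analyticAt_cuspFunction_zero f one_pos hp
  rw [qExpansion_coeff_zero one_pos ha (SlashInvariantFormClass.periodic_comp_ofComplex f hp),
    ← cuspFunction_apply_zero one_pos ha (SlashInvariantFormClass.periodic_comp_ofComplex f hp)]
  exact (ha.continuousAt.tendsto.comp (qParam_tendsto_atImInfty one_pos)).congr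
    fun τ => SlashInvariantFormClass.eq_cuspFunction f τ hp one_ne_zero

open UpperHalfPlane in
lemma infinite_invariant :
    {u : ℂ | ∃ z : ℍ, E4 z ≠ 0 ∧ E6 z ≠ 0 ∧ u = E6 z ^ 2 / E4 z ^ 3}.Infinite := by
  have h4 : Tendsto (fun z : ℍ => E4 z) atImInfty (𝓝 1) := by
    simp only [E4_eq]
    rw [← EisensteinSeries.E_qExpansion_coeff_zero (k := 4) (by norm_num) (by decide)]
    exact tendsto_modularForm_atImInfty ModularForm.E₄
  have h6 : Tendsto (fun z : ℍ => E6 z) atImInfty (𝓝 1) := by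
    simp only [E6_eq]
    rw [← EisensteinSeries.E_qExpansion_coeff_zero (k := 6) (by norm_num) (by decide)]
    exact tendsto_modularForm_atImInfty ModularForm.E₆
  have hψ := (h6.pow 2).div (h4.pow 3) (by norm_num)
  rw [one_pow, one_pow, div_one] at hψ
  intro hfin
  have : NeBot atImInfty := atImInfty_basis.neBot_iff.2 fun {i} _ =>
    ⟨⟨Complex.I * ((|i| + 1 : ℝ) : ℂ), by simp; positivity⟩, by
      rw [Set.mem_preimage, Set.mem_Ici]
      have := le_abs_self i
      simp [← coe_im]; linarith⟩
  obtain ⟨z, h41, h61, h⟩ := hfin.isClosed.mem_of_tendsto hψ (by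
    filter_upwards [h4.eventually_ne one_ne_zero, h6.eventually_ne one_ne_zero] with z h4 h6
    exact ⟨z, h4, h6, rfl⟩)
  have hd := ModularForm.discriminant_ne_zero z
  rw [ModularForm.discriminant_eq_E₄_cube_sub_E₆_sq, ← E4_eq, ← E6_eq] at hd
  rw [eq_div_iff (pow_ne_zero _ h41), one_mul] at h
  simp [h] at hd

open UpperHalfPlane in
lemma eq_zero_of_eval_eisenstein {c : MvPolynomial (Fin 2) ℂ}
    (h : ∀ z : ℍ, MvPolynomial.eval ![E4 z, E6 z] c = 0) : c = 0 := by
  have h1 (z : ℍ) (t : ℂ) : MvPolynomial.eval ![t ^ 4 * E4 z, t ^ 6 * E6 z] c = 0 := by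
    have := eval_curve_eq_zero c ![Polynomial.X ^ 4 * Polynomial.C (E4 z),
      Polynomial.X ^ 6 * Polynomial.C (E6 z)] (S := Set.range fun n : ℕ => (z : ℂ) + n)
      (Set.infinite_range_of_injective fun a b hab => by simpa using hab) (by
        rintro _ ⟨n, rfl⟩
        obtain ⟨w, h4, h6⟩ := exists_modular_translate z n
        rw [← h w, h4, h6]
        congr 2
        funext i
        fin_cases i <;> simp <;> ring) t
    rw [← this]
    congr 2
    funext i
    fin_cases i <;> simp <;> ring
  have h2 (s u : ℂ) : MvPolynomial.eval ![u * s ^ 2, u ^ 2 * s ^ 3] c = 0 := by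
    have := eval_curve_eq_zero c ![Polynomial.X * Polynomial.C (s ^ 2),
      Polynomial.X ^ 2 * Polynomial.C (s ^ 3)] infinite_invariant (by
        rintro _ ⟨z, h4, h6, rfl⟩
        obtain ⟨t, ht⟩ := IsAlgClosed.exists_pow_nat_eq (E6 z * s / E4 z ^ 2) two_pos
        rw [← h1 z t]
        congr 2
        funext i
        fin_cases i
        · simp only [show t ^ 4 = (t ^ 2) ^ 2 by ring, ht]
          simp
          field_simp
        · simp only [show t ^ 6 = (t ^ 2) ^ 3 by ring, ht]
          simp
          field_simp) u
    rw [← this]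
    congr 2
    funext i
    fin_cases i <;> simp
  refine MvPolynomial.funext_set (fun _ => {0}ᶜ) (fun _ => (Set.finite_singleton _).infinite_compl)
    fun x hx => ?_
  have hx0 : x 0 ≠ 0 := hx 0 trivial
  have hx1 : x 1 ≠ 0 := hx 1 trivial
  rw [map_zero, ← h2 (x 0 ^ 2 / x 1) (x 1 ^ 2 / x 0 ^ 3)]
  congr 2
  funext i
  fin_cases i <;> simp <;> field_simp

open UpperHalfPlane in
/-- A nonzero polynomial in the Eisenstein series does not vanish far up the imaginary axis. -/
lemma frequently_eval_eisenstein_ne_zero {c : MvPolynomial (Fin 2) ℂ} (hc : c ≠ 0) :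
    ∃ᶠ T : ℝ in atTop, MvPolynomial.eval ![E4 (Complex.I * T), E6 (Complex.I * T)] c ≠ 0 := by
  intro hev
  simp only [not_not] at hev
  refine hc (eq_zero_of_eval_eisenstein fun z => ?_)
  let U : Set ℂ := {z | 0 < z.im}
  have hU : IsOpen U := isOpen_upperHalfPlaneSet
  have d4 : DifferentiableOn ℂ E4 U :=
    (UpperHalfPlane.mdifferentiable_iff.1 (ModularFormClass.holo ModularForm.E₄)).congr fun z hz => by
      rw [Function.comp_apply, ← E4_eq, ofComplex_apply_of_im_pos hz]
  have d6 : DifferentiableOn ℂ E6 U :=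
    (UpperHalfPlane.mdifferentiable_iff.1 (ModularFormClass.holo ModularForm.E₆)).congr fun z hz => by
      rw [Function.comp_apply, ← E6_eq, ofComplex_apply_of_im_pos hz]
  have hd : DifferentiableOn ℂ (fun z => MvPolynomial.eval ![E4 z, E6 z] c) U := by
    clear hev hc
    induction c using MvPolynomial.induction_on with
    | C a => simp
    | add p q hp hq =>
      simp only [map_add]
      exact hp.add hq
    | mul_X p i hp =>
      simp only [map_mul, MvPolynomial.eval_X]
      refine hp.mul ?_
      fin_cases i
      · simpa using d4
      · simpa using d6
  obtain ⟨T, hT, hT0⟩ := (hev.and (eventually_gt_atTop (0 : ℝ))).exists_forall_of_atTop.imp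
    fun T h => (⟨fun S hS => (h S hS).1, (h T le_rfl).2⟩ : _ ∧ _)
  refine (hd.analyticOnNhd hU).eqOn_zero_of_preconnected_of_frequently_eq_zero
    (z₀ := Complex.I * T) (convex_halfSpace_im_gt 0).isPreconnected (by simpa [U] using hT0) ?_ z.2
  have ht : Tendsto (fun S : ℝ => Complex.I * (S : ℂ)) (𝓝[>] T) (𝓝[≠] (Complex.I * T)) := by
    refine tendsto_nhdsWithin_iff.2 ⟨?_, ?_⟩
    · exact (Continuous.tendsto (by fun_prop) T).mono_left nhdsWithin_le_nhds
    · filter_upwards [self_mem_nhdsWithin] with S hS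
      have := (Set.mem_Ioi.1 hS).ne'
      simpa using this
  refine ht.frequently (Eventually.frequently ?_)
  filter_upwards [self_mem_nhdsWithin] with S hS using hT S (le_of_lt hS)

lemma eq_zero_of_fourier5 {h : Fin 5 → ℂ} (h0 : ∑ i, h i = 0)
    (hm : ∀ m ∈ Icc 1 4, fourier5 m h = 0) : h = 0 := by
  have hprim := Complex.isPrimitiveRoot_exp 5 (by norm_num)
  have key (m : ℕ) : Complex.exp (2 * πC * I * (m / 5)) =
      Complex.exp (2 * Real.pi * I / (5 : ℕ)) ^ m := by
    rw [← Complex.exp_nat_mul, πC]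
    congr 1
    push_cast
    ring
  refine Matrix.eq_zero_of_forall_index_sum_mul_pow_eq_zero
    (f := fun m : Fin 5 => Complex.exp (2 * Real.pi * I / (5 : ℕ)) ^ (m : ℕ)) (fun a b hab =>
      Fin.ext (hprim.pow_inj a.2 b.2 hab)) fun m => ?_
  rcases Nat.eq_zero_or_pos (m : ℕ) with hm0 | hm0
  · simpa [hm0] using h0
  · have h1 := hm m (mem_Icc.2 ⟨hm0, by omega⟩)
    rw [fourier5_apply, key] at h1
    rw [← h1]
    exact sum_congr rfl fun i _ => mul_comm _ _

lemma eq_zero_of_proj {h : Fin 8 → ℂ} (hP : projP h = 0) (hR : projR h = 0) : h = 0 := by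
  have p := congrFun hP
  have r := congrFun hR
  have p0 := p 0; have p1 := p 1; have p2 := p 2; have p3 := p 3; have p4 := p 4
  have r0 := r 0; have r1 := r 1; have r2 := r 2; have r3 := r 3; have r4 := r 4
  simp [projP] at p0 p1 p2 p3 p4
  simp [projR] at r0 r1 r2 r3 r4
  have s : h 0 + h 1 + h 2 + h 3 + h 4 = 0 := by simpa using r0
  simp only [s, zero_div, sub_zero, zero_add] at *
  funext i
  fin_cases i
  · exact p0
  · exact p1
  · exact p2
  · exact p3
  · exact p4
  · simp; linear_combination r1 + r2
  · simp; linear_combination r1 + r3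
  · simp; linear_combination r1 + r4

lemma fourier5_eq_zero_of_jetMap {n : ℕ} {A B A' B' : ℂ} {h : Fin 8 → ℂ}
    (hdet : A * B' - A' * B ≠ 0) (h1 : jetMap n A B h = 0) (h2 : jetMap n A' B' h = 0) :
    fourier5 n (projP h) = 0 ∧ fourier5 (3 * n) (projR h) = 0 := by
  have h2π : 2 * πC * I ≠ 0 := by
    simp [πC, Real.pi_ne_zero]
  rw [jetMap_apply, mul_eq_zero, or_iff_right h2π] at h1 h2
  refine ⟨?_, ?_⟩ <;> refine (mul_eq_zero.1 ?_).resolve_left hdet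
  · linear_combination B' * h1 - B * h2
  · linear_combination A * h2 - A' * h1

lemma infinite_range_autFactor {τ : ℂ} (hτ : 0 < τ.im) (y : Fin 8 → ℂ) :
    (Set.range fun n : ℕ => autFactor τ (1 + 5 * n) y).Infinite := by
  refine Set.Infinite.of_image (fun w => ‖w‖) fun hfin => ?_
  rw [← Set.range_comp] at hfin
  refine not_bddAbove_of_tendsto_atTop (f := fun n : ℕ => ‖autFactor τ (1 + 5 * n) y‖) (l := atTop)
    ?_ hfin.bddAbove
  have hre (n : ℕ) : ‖autFactor τ (1 + 5 * n) y‖ = Real.exp (((1 + 5 * n : ℕ) : ℝ) *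
      (4 / 5 * Real.pi * τ.im * ((1 + 5 * n : ℕ) : ℝ) + 2 * Real.pi * (projP y 4).im)) := by
    rw [autFactor, Complex.norm_exp]
    congr 1
    generalize 1 + 5 * n = N
    generalize projP y 4 = p
    rw [show -(4 / 5 * πC * I * τ * (N : ℂ) ^ 2) - 2 * πC * I * N * p =
      ((-(4 / 5 * Real.pi * N ^ 2) : ℝ) : ℂ) * (I * τ) + ((-(2 * Real.pi * N) : ℝ) : ℂ) * (I * p) by
      rw [πC]; push_cast; ring]
    rw [Complex.add_re, Complex.re_ofReal_mul, Complex.re_ofReal_mul]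
    simp
    ring
  simp only [hre]
  have hN : Tendsto (fun n : ℕ => ((1 + 5 * n : ℕ) : ℝ)) atTop atTop :=
    tendsto_natCast_atTop_atTop.comp
      (tendsto_atTop_mono (fun n => (by omega : n ≤ 1 + 5 * n)) tendsto_id)
  refine Real.tendsto_exp_atTop.comp (hN.atTop_mul_atTop₀ (tendsto_atTop_add_const_right _ _
    (hN.const_mul_atTop (by have := Real.pi_pos; positivity))))

/-- Jacobian criterion: functions of weights `w i` whose jets at the base point have a
nonsingular Jacobian satisfy no algebraic relation. -/
lemma eq_zero_of_hasJet {τ : ℂ} (hτ : 0 < τ.im) {w : Fin 9 → ℕ}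
    {F : Fin 9 → (Fin 8 → ℂ) → ℂ} {V : Fin 9 → ℂ} {D : Fin 9 → (Fin 8 → ℂ) →L[ℂ] ℂ}
    (hF : ∀ i, HasJet τ (w i) (F i) (V i) (D i))
    (hinj : ∀ (t : ℂ) (h : Fin 8 → ℂ), (∀ i, V i * w i * t + D i h = 0) → t = 0 ∧ h = 0)
    {Q : MvPolynomial (Fin 9) ℂ} (hQ : ∀ z, MvPolynomial.eval (fun i => F i z) Q = 0) : Q = 0 := by
  choose G hG hGV hGD using hF
  have hvan (p : ℂ × (Fin 8 → ℂ)) :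
      MvPolynomial.eval (fun i => p.1 ^ w i * G i p.2) Q = 0 := by
    have := eval_curve_eq_zero Q (fun i => Polynomial.X ^ w i * Polynomial.C (G i p.2))
      (infinite_range_autFactor hτ p.2) (by
        rintro _ ⟨n, rfl⟩
        rw [← hQ (fun i => ((1 + 5 * n : ℕ) : ℂ) * τ * transVec i + p.2 i)]
        simp only [hG, Polynomial.eval_mul, Polynomial.eval_pow, Polynomial.eval_X,
          Polynomial.eval_C]) p.1
    simpa only [Polynomial.eval_mul, Polynomial.eval_pow, Polynomial.eval_X,
      Polynomial.eval_C] using this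
  let L (i : Fin 9) : ℂ × (Fin 8 → ℂ) →L[ℂ] ℂ :=
    (V i * w i) • ContinuousLinearMap.fst ℂ ℂ (Fin 8 → ℂ) +
      (D i).comp (ContinuousLinearMap.snd ℂ ℂ (Fin 8 → ℂ))
  have hL (i : Fin 9) : HasStrictFDerivAt (fun p : ℂ × (Fin 8 → ℂ) => p.1 ^ w i * G i p.2) (L i)
      (1, basePt) := by
    have h1 : HasStrictFDerivAt (fun p : ℂ × (Fin 8 → ℂ) => p.1 ^ w i) _ (1, basePt) :=
      HasStrictFDerivAt.pow (hasStrictFDerivAt_fst (𝕜 := ℂ) (p := (1, basePt))) (w i)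
    have h2 : HasStrictFDerivAt (fun p : ℂ × (Fin 8 → ℂ) => G i p.2) _ (1, basePt) :=
      (hGD i).comp (1, basePt) hasStrictFDerivAt_snd
    refine (h1.fun_mul h2).congr_fderiv ?_
    ext p <;> simp [L, hGV]
  have hΦ := hasStrictFDerivAt_pi.2 hL
  have hsurj : Function.Surjective (ContinuousLinearMap.pi L) := by
    refine (LinearMap.injective_iff_surjective_of_finrank_eq_finrank
      (f := (ContinuousLinearMap.pi L : ℂ × (Fin 8 → ℂ) →ₗ[ℂ] (Fin 9 → ℂ))) (by simp)).1 ?_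
    refine (injective_iff_map_eq_zero _).2 fun p hp => ?_
    obtain ⟨ht, hh⟩ := hinj p.1 p.2 fun i => by simpa [L] using congrFun hp i
    exact Prod.ext ht hh
  have hmap := hΦ.map_nhds_eq_of_surj (LinearMap.range_eq_top.2 hsurj)
  have hmem : {x : Fin 9 → ℂ | MvPolynomial.eval x Q = 0} ∈
      𝓝 (fun i => (1 : ℂ) ^ w i * G i basePt) := by
    rw [← hmap]
    exact Filter.mem_map.2 (Filter.univ_mem' hvan)
  obtain ⟨ε, hε, hball⟩ := Metric.mem_nhds_iff.1 hmem
  rw [ball_pi _ hε] at hball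
  refine MvPolynomial.funext_set (fun i => Metric.ball ((1 : ℂ) ^ w i * G i basePt) ε)
    (fun i => infinite_of_mem_nhds _ (Metric.ball_mem_nhds _ hε)) fun x hx => ?_
  rw [map_zero]
  exact hball hx

lemma eventually_algebraicIndependent : ∀ᶠ T : ℝ in atTop, ∀ Q : MvPolynomial (Fin 9) ℂ,
    (∀ z, MvPolynomial.eval (fun i => nineForms i (I * T) z) Q = 0) → Q = 0 := by
  filter_upwards [eventually_det_one, eventually_det_two, eventually_det_three,
    eventually_det_four, eventually_valueA5_ne_zero, eventually_gt_atTop 0]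
    with T d1 d2 d3 d4 hV hT Q hQ
  have hτ : 0 < (I * (T : ℂ)).im := by simpa using hT
  generalize I * (T : ℂ) = τ at *
  obtain ⟨D, hD⟩ := hasJet_A5 hτ
  refine eq_zero_of_hasJet hτ (w := ![1, 2, 3, 4, 5, 2, 3, 4, 6]) (F := fun i => nineForms i τ)
    (V := ![0, 0, 0, 0, valueA5 τ, 0, 0, 0, 0])
    (D := ![jetMap 1 (coefA 1 1 0 τ) (coefB 1 1 0 τ),
      jetMap 2 (coefAM 2 coefA τ) (coefAM 2 coefB τ),
      jetMap 3 (coefAM 3 coefA τ) (coefAM 3 coefB τ),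
      jetMap 4 (coefA 2 2 0 τ) (coefB 2 2 0 τ), D,
      jetMap 2 (coefB2 coefA τ) (coefB2 coefB τ), jetMap 3 (coefB3 coefA τ) (coefB3 coefB τ),
      jetMap 4 (coefB4 coefA τ) (coefB4 coefB τ), jetMap 6 (coefB6 coefA τ) (coefB6 coefB τ)])
    (fun i => ?_) (fun t h hth => ?_) hQ
  · fin_cases i
    · exact hasCoeffs_A1 hτ
    · exact hasCoeffs_AM hτ (by norm_num)
    · exact hasCoeffs_AM hτ (by norm_num)
    · exact hasCoeffs_A4 hτ
    · exact hD
    · exact hasCoeffs_B2 hτ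
    · exact hasCoeffs_B3 hτ
    · exact hasCoeffs_B4 hτ
    · exact hasCoeffs_B6 hτ
  · have e0 := hth 0; have e1 := hth 1; have e2 := hth 2; have e3 := hth 3; have e4 := hth 4
    have e5 := hth 5; have e6 := hth 6; have e7 := hth 7; have e8 := hth 8
    clear hth
    simp at e0 e1 e2 e3 e4 e5 e6 e7 e8
    have hsix : jetMap 6 (coefB6 coefA τ) (coefB6 coefB τ) =
        jetMap 1 (coefB6 coefA τ) (coefB6 coefB τ) := by
      have h1 := fourier5_mul_mod 1 6
      have h3 := fourier5_mul_mod 3 6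
      norm_num at h1 h3
      simp only [jetMap, mul_one, show 3 * 6 = 18 by norm_num, h1, h3]
    rw [hsix] at e8
    obtain ⟨p1, r1⟩ := fourier5_eq_zero_of_jetMap d1 e0 e8
    obtain ⟨p2, r2⟩ := fourier5_eq_zero_of_jetMap d2 e1 e5
    obtain ⟨p3, r3⟩ := fourier5_eq_zero_of_jetMap d3 e2 e6
    obtain ⟨p4, r4⟩ := fourier5_eq_zero_of_jetMap d4 e3 e7
    rw [← fourier5_mul_mod 3 1] at r1
    have hP : projP h = 0 := eq_zero_of_fourier5 (sum_projP h) fun m hm => by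
      rw [mem_Icc] at hm
      obtain ⟨h1, h2⟩ := hm
      interval_cases m <;> assumption
    have hR : projR h = 0 := eq_zero_of_fourier5 (sum_projR h) fun m hm => by
      rw [mem_Icc] at hm
      obtain ⟨h1, h2⟩ := hm
      have k2 := fourier5_mul_mod 1 (3 * 2)
      have k3 := fourier5_mul_mod 1 (3 * 3)
      have k4 := fourier5_mul_mod 1 (3 * 4)
      norm_num at k2 k3 k4 r1 r2 r3 r4
      interval_cases m
      · rw [k2, r2]
      · rw [k4, r4]
      · exact r1
      · rw [k3, r3]
    have hh := eq_zero_of_proj hP hR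
    refine ⟨?_, hh⟩
    rw [hh, map_zero, add_zero] at e4
    simpa [hV] using e4

/-- The nine basic W(E8)-invariant holomorphic Jacobi forms
A_1, A_2, A_3, A_4, A_5, B_2, B_3, B_4, B_6 are algebraically independent over
the ring ℂ[E4, E6]. -/
theorem nineForms_algebraically_independent :
    ∀ P : MvPolynomial (Fin 9) (MvPolynomial (Fin 2) ℂ),
      (∀ τ : ℂ, 0 < τ.im → ∀ z : Fin 8 → ℂ,
        MvPolynomial.eval₂ (MvPolynomial.eval (fun j : Fin 2 => ![E4 τ, E6 τ] j))
          (fun i : Fin 9 => nineForms i τ z) P = 0) → P = 0 := by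
  intro P hP
  by_contra hne
  obtain ⟨d, hd⟩ := MvPolynomial.ne_zero_iff.1 hne
  obtain ⟨T, hc, hind, hT⟩ := ((frequently_eval_eisenstein_ne_zero hd).and_eventually
    (eventually_algebraicIndependent.and (eventually_gt_atTop 0))).exists
  have hmap := hind (MvPolynomial.map (MvPolynomial.eval ![E4 (I * T), E6 (I * T)]) P) fun z => by
    rw [MvPolynomial.eval_map]
    exact hP (I * T) (by simpa using hT) z
  apply hc
  rw [← MvPolynomial.coeff_map, hmap, MvPolynomial.coeff_zero]

end E8Jacobi
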